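/- Let $T$ and $S$ be commuting invertible measure preserving transformations of a probability space $(X,\mathcal{X},\mu)$, both ergodic. Then for every $l\geq 1$ and all $f_1,\dots,f_l\in L^\infty(\mu)$, $\lim_{N\to\infty}\frac{1}{N}\sum_{n=0}^{N-1} f_1(T^n x)\cdots f_l(T^{ln}x) = \lim_{N\to\infty}\frac{1}{N}\sum_{n=0}^{N-1} f_1(S^n x)\cdots f_l(S^{ln}x)$ in $L^2(\mu)$. -/

import Mathlib

open MeasureTheory Filter Finset

/-- The spaces `X^{[k]} = X^{2^k}`, realized as iterated squares. -/
def HKBox (X : Type*) : ℕ → Type _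
  | 0 => X
  | (k+1) => HKBox X k × HKBox X k

def HKBox.instMS (X : Type*) [m : MeasurableSpace X] : ∀ k, MeasurableSpace (HKBox X k)
  | 0 => m
  | (k+1) => @Prod.instMeasurableSpace _ _ (HKBox.instMS X k) (HKBox.instMS X k)

instance (X : Type*) [MeasurableSpace X] (k : ℕ) : MeasurableSpace (HKBox X k) :=
  HKBox.instMS X k

/-- The diagonal transformation `T^{[k]} = T × ⋯ × T` on `X^{[k]}`. -/
def HKBox.map {X : Type*} (T : X → X) : ∀ k, HKBox X k → HKBox X k
  | 0 => T
  | (k+1) => fun p => (HKBox.map T k p.1, HKBox.map T k p.2)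

/-- The σ-algebra of invariant sets of a transformation. -/
def invSigma {α : Type*} [m : MeasurableSpace α] (f : α → α) : MeasurableSpace α where
  MeasurableSet' s := MeasurableSet s ∧ f ⁻¹' s = s
  measurableSet_empty := ⟨MeasurableSet.empty, rfl⟩
  measurableSet_compl := fun s hs => ⟨hs.1.compl, by rw [Set.preimage_compl, hs.2]⟩
  measurableSet_iUnion := fun s hs => ⟨MeasurableSet.iUnion fun i => (hs i).1, by
    rw [Set.preimage_iUnion]; exact Set.iUnion_congr fun i => (hs i).2⟩

/-- The product of `f` over all `2^k` coordinates of `X^{[k]}`. -/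
def HKBox.prodFun {X : Type*} (f : X → ℝ) : ∀ k, HKBox X k → ℝ
  | 0 => f
  | (k+1) => fun p => HKBox.prodFun f k p.1 * HKBox.prodFun f k p.2

/-- `IsHKSeq μ T ν` asserts that `ν k` is the Host–Kra box measure `μ^{[k]}` of the
system `(X, μ, T)`: `ν 0 = μ` and `ν (k+1)` is the relatively independent square of
`ν k` over the σ-algebra of `T^{[k]}`-invariant sets. -/
def IsHKSeq {X : Type*} [MeasurableSpace X] (μ : Measure X) (T : X → X)
    (ν : ∀ k, Measure (HKBox X k)) : Prop :=
  ν 0 = μ ∧ ∀ k, (∀ F' F'' : HKBox X k → ℝ, Measurable F' → Measurable F'' →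
    (∃ C, ∀ x, |F' x| ≤ C) → (∃ C, ∀ x, |F'' x| ≤ C) →
    ∫ p, F' p.1 * F'' p.2 ∂(ν (k+1)) =
      ∫ x, ((ν k)[F' | invSigma (HKBox.map T k)]) x *
        ((ν k)[F'' | invSigma (HKBox.map T k)]) x ∂(ν k))

/-- The `k`-th Host–Kra seminorm of `f`, computed from a sequence `ν` of box measures:
`⦀f⦀_k = (∫ ∏_{ε} f(x_ε) dν k)^{1/2^k}`. -/
noncomputable def HKseminorm {X : Type*} [MeasurableSpace X]
    (ν : ∀ k, Measure (HKBox X k)) (k : ℕ) (f : X → ℝ) : ℝ :=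
  (∫ x, HKBox.prodFun f k x ∂(ν k)) ^ (((2 : ℝ) ^ k)⁻¹)

/-!
On a standard Borel system the averages over `n < N` of `∏ᵢ fᵢ ((Tⁿ g)ⁱ y)` are Cauchy in `L²`
uniformly over all measure preserving `g` that commute with `T` and fix every `T`-invariant
function, so their limit does not depend on `g`. If `T` is ergodic, every commuting `g` is of this
kind. Taking `g = Sᵐ` and averaging over `m < M` as well gives an expression symmetric in `T` and
`S`, whence the two limits agree; an arbitrary probability space is replaced by the standard Borel
factor recording the values of the `fᵢ` along the joint orbits.

The uniform statement is proved by induction on the number of functions. By van der Corput's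
inequality a last function of vanishing Host–Kra seminorm contributes nothing, so the last function
may be assumed to become, on the vertex `0` of the Host–Kra cube, a function of the other vertices.
When this is a product over the other vertices, the average is a shorter one on the cube system,
and a monotone class argument does the rest. The induction needs that `g × g` fixes the invariant
functions of the relatively independent square; this follows from a symmetry of the fourfold
relative product, which in turn rests on relative almost periodicity.
-/

namespace HostKra

open scoped BigOperators Topology

/-! ### Bounded measurable functions and their `L²` norms -/

/-- Bounded measurable real functions. They stand in for `L^∞`, but are evaluated pointwise. -/
structure BddMeasurable {Y : Type*} [MeasurableSpace Y] (f : Y → ℝ) : Prop where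
  measurable : Measurable f
  bdd : ∃ C, ∀ x, |f x| ≤ C

lemma BddMeasurable.of_le {Y : Type*} {m m' : MeasurableSpace Y} {f : Y → ℝ} (hm : m' ≤ m)
    (hf : @BddMeasurable Y m' f) : @BddMeasurable Y m f :=
  @BddMeasurable.mk Y m f ((@BddMeasurable.measurable Y m' f hf).mono hm le_rfl)
    (@BddMeasurable.bdd Y m' f hf)

namespace BddMeasurable

variable {Y Z ι : Type*} [MeasurableSpace Y] [MeasurableSpace Z] {f g : Y → ℝ} {μ : Measure Y}

lemma exists_nonneg_bound (hf : BddMeasurable f) : ∃ C, 0 ≤ C ∧ ∀ x, |f x| ≤ C := by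
  obtain ⟨C, hC⟩ := hf.bdd
  exact ⟨max C 0, le_max_right _ _, fun x => (hC x).trans (le_max_left _ _)⟩

lemma const (c : ℝ) : BddMeasurable (fun _ : Y => c) := ⟨measurable_const, |c|, fun _ => le_rfl⟩

lemma add (hf : BddMeasurable f) (hg : BddMeasurable g) : BddMeasurable fun x => f x + g x := by
  obtain ⟨C, hC⟩ := hf.bdd
  obtain ⟨D, hD⟩ := hg.bdd
  exact ⟨hf.measurable.add hg.measurable, C + D,
    fun x => (abs_add_le _ _).trans (add_le_add (hC x) (hD x))⟩

lemma mul (hf : BddMeasurable f) (hg : BddMeasurable g) : BddMeasurable fun x => f x * g x := by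
  obtain ⟨C, hC0, hC⟩ := hf.exists_nonneg_bound
  obtain ⟨D, hD⟩ := hg.bdd
  refine ⟨hf.measurable.mul hg.measurable, C * D, fun x => ?_⟩
  rw [abs_mul]
  exact mul_le_mul (hC x) (hD x) (abs_nonneg _) hC0

lemma const_mul (hf : BddMeasurable f) (c : ℝ) : BddMeasurable fun x => c * f x :=
  (const c).mul hf

lemma sub (hf : BddMeasurable f) (hg : BddMeasurable g) : BddMeasurable fun x => f x - g x := by
  simpa [sub_eq_add_neg] using hf.add (hg.const_mul (-1))

lemma comp (hf : BddMeasurable f) {φ : Z → Y} (hφ : Measurable φ) :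
    BddMeasurable fun z => f (φ z) :=
  ⟨hf.measurable.comp hφ, hf.bdd.imp fun _ hC _ => hC _⟩

lemma indicator {s : Set Y} (hs : MeasurableSet s) (hf : BddMeasurable f) :
    BddMeasurable (s.indicator f) := by
  obtain ⟨C, hC0, hC⟩ := hf.exists_nonneg_bound
  refine ⟨hf.measurable.indicator hs, C, fun x => ?_⟩
  by_cases hx : x ∈ s <;> simp [hx, hC, hC0]

lemma sum (s : Finset ι) {F : ι → Y → ℝ} (hF : ∀ i ∈ s, BddMeasurable (F i)) :
    BddMeasurable fun x => ∑ i ∈ s, F i x := by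
  choose! C hC using fun i hi => (hF i hi).bdd
  exact ⟨Finset.measurable_fun_sum s fun i hi => (hF i hi).measurable, ∑ i ∈ s, C i, fun x =>
    (Finset.abs_sum_le_sum_abs _ _).trans (Finset.sum_le_sum fun i hi => hC i hi x)⟩

lemma prod (s : Finset ι) {F : ι → Y → ℝ} (hF : ∀ i ∈ s, BddMeasurable (F i)) :
    BddMeasurable fun x => ∏ i ∈ s, F i x := by
  choose! C hC using fun i hi => (hF i hi).bdd
  refine ⟨Finset.measurable_fun_prod s fun i hi => (hF i hi).measurable, ∏ i ∈ s, C i,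
    fun x => ?_⟩
  rw [Finset.abs_prod]
  exact Finset.prod_le_prod (fun _ _ => abs_nonneg _) fun i hi => hC i hi x

lemma expect (s : Finset ι) {F : ι → Y → ℝ} (hF : ∀ i ∈ s, BddMeasurable (F i)) :
    BddMeasurable fun x => 𝔼 i ∈ s, F i x := by
  simpa only [Finset.expect_eq_sum_div_card, div_eq_inv_mul] using (sum s hF).const_mul _

lemma memLp (hf : BddMeasurable f) [IsFiniteMeasure μ] (p : ENNReal) : MemLp f p μ := by
  obtain ⟨C, hC⟩ := hf.bdd
  exact MemLp.of_bound hf.measurable.aestronglyMeasurable C (Eventually.of_forall hC)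

lemma integrable (hf : BddMeasurable f) [IsFiniteMeasure μ] : Integrable f μ :=
  memLp_one_iff_integrable.1 (hf.memLp 1)

lemma tendsto_integral [IsFiniteMeasure μ] {F : ℕ → Y → ℝ} {C : ℝ}
    (hF : ∀ n, Measurable (F n)) (hC : ∀ n x, |F n x| ≤ C)
    (hlim : ∀ x, Tendsto (F · x) atTop (𝓝 (f x))) :
    Tendsto (fun n => ∫ x, F n x ∂μ) atTop (𝓝 (∫ x, f x ∂μ)) :=
  tendsto_integral_of_dominated_convergence (fun _ => C)
    (fun n => (hF n).aestronglyMeasurable) (integrable_const C)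
    (fun n => Eventually.of_forall (hC n)) (Eventually.of_forall hlim)

end BddMeasurable

section L2Norm

variable {Y Z : Type*} [MeasurableSpace Y] [MeasurableSpace Z] {f g : Y → ℝ}
  {μ : Measure Y} {ν : Measure Z}

lemma lpNorm_eq_norm_toLp {p : ENNReal} (hf : MemLp f p μ) : lpNorm f p μ = ‖hf.toLp f‖ := by
  rw [Lp.norm_toLp, toReal_eLpNorm hf.aestronglyMeasurable]

lemma integral_mul_eq_inner (hf : MemLp f 2 μ) (hg : MemLp g 2 μ) :
    ∫ x, f x * g x ∂μ = inner ℝ (hf.toLp f) (hg.toLp g) := by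
  rw [L2.inner_def]
  refine integral_congr_ae ?_
  filter_upwards [hf.coeFn_toLp, hg.coeFn_toLp] with x hx hy
  simp [hx, hy, mul_comm]

lemma lpNorm_two_sq (hf : MemLp f 2 μ) : lpNorm f 2 μ ^ 2 = ∫ x, f x * f x ∂μ := by
  rw [integral_mul_eq_inner hf hf, real_inner_self_eq_norm_sq, lpNorm_eq_norm_toLp hf]

lemma lpNorm_congr_ae {p : ENNReal} (h : f =ᵐ[μ] g) : lpNorm f p μ = lpNorm g p μ := by
  rw [lpNorm, lpNorm, eLpNorm_congr_ae h]
  congr 1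
  exact propext (aestronglyMeasurable_congr h)

lemma abs_integral_mul_le (hf : MemLp f 2 μ) (hg : MemLp g 2 μ) :
    |∫ x, f x * g x ∂μ| ≤ lpNorm f 2 μ * lpNorm g 2 μ := by
  rw [integral_mul_eq_inner hf hg, lpNorm_eq_norm_toLp hf, lpNorm_eq_norm_toLp hg]
  exact abs_real_inner_le_norm _ _

lemma lpNorm_comp_measurePreserving {p : ENNReal} {φ : Z → Y} (hφ : MeasurePreserving φ ν μ)
    (hf : AEStronglyMeasurable f μ) : lpNorm (fun z => f (φ z)) p ν = lpNorm f p μ := by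
  rw [← toReal_eLpNorm hf, ← eLpNorm_comp_measurePreserving hf hφ]
  exact (toReal_eLpNorm (hf.comp_measurePreserving hφ)).symm

lemma integral_comp_measurePreserving {φ : Z → Y} (hφ : MeasurePreserving φ ν μ)
    (hf : AEStronglyMeasurable f μ) : ∫ z, f (φ z) ∂ν = ∫ x, f x ∂μ := by
  rw [← hφ.map_eq] at hf ⊢
  exact (integral_map hφ.aemeasurable hf).symm

lemma lpNorm_fun_const_mul {p : ENNReal} (c : ℝ) (f : Y → ℝ) :
    lpNorm (fun x => c * f x) p μ = |c| * lpNorm f p μ :=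
  lpNorm_const_smul c f μ

lemma lpNorm_le_of_bound [IsProbabilityMeasure μ] {p : ENNReal} (hp : p ≠ 0) {C : ℝ}
    (hC : ∀ x, |f x| ≤ C) : lpNorm f p μ ≤ C := by
  have hC0 : 0 ≤ C := (abs_nonneg _).trans (hC (nonempty_of_isProbabilityMeasure μ).some)
  refine (lpNorm_mono_real (memLp_const C) hC).trans_eq ?_
  simp [lpNorm_const hp, IsProbabilityMeasure.ne_zero, abs_of_nonneg hC0]

lemma lpNorm_mul_le_of_bound {p : ENNReal} {C : ℝ} (hC0 : 0 ≤ C) (hf : MemLp f p μ)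
    (hC : ∀ x, |g x| ≤ C) : lpNorm (fun x => g x * f x) p μ ≤ C * lpNorm f p μ := by
  have hmono : lpNorm (fun x => g x * f x) p μ ≤ lpNorm (fun x => C * |f x|) p μ := by
    refine lpNorm_mono_real (hf.abs.const_mul C) fun x => ?_
    rw [norm_mul]
    exact mul_le_mul_of_nonneg_right (hC x) (abs_nonneg _)
  rwa [lpNorm_fun_const_mul, abs_of_nonneg hC0, lpNorm_fun_abs hf.aestronglyMeasurable] at hmono

lemma BddMeasurable.ae_eq_of_lpNorm_sub [IsFiniteMeasure μ] (hf : BddMeasurable f)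
    (hg : BddMeasurable g) (h : lpNorm (fun x => f x - g x) 2 μ = 0) : f =ᵐ[μ] g := by
  filter_upwards [(lpNorm_eq_zero ((hf.sub hg).memLp 2) two_ne_zero).1 h] with x hx
  simpa [sub_eq_zero] using hx

lemma BddMeasurable.ae_eq_of_integral_mul [IsFiniteMeasure μ] (hf : BddMeasurable f)
    (hg : BddMeasurable g) (hff : ∫ x, f x * f x ∂μ = ∫ x, f x * g x ∂μ)
    (hgg : ∫ x, g x * g x ∂μ = ∫ x, f x * g x ∂μ) : f =ᵐ[μ] g := by
  refine hf.ae_eq_of_lpNorm_sub hg (pow_eq_zero_iff two_ne_zero |>.1 ?_)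
  rw [lpNorm_two_sq ((hf.sub hg).memLp 2)]
  have hexpand (x : Y) : (f x - g x) * (f x - g x) = f x * f x + g x * g x - 2 * (f x * g x) := by
    ring
  simp only [hexpand]
  rw [integral_sub ((hf.mul hf).add (hg.mul hg)).integrable ((hf.mul hg).const_mul 2).integrable,
    integral_add (hf.mul hf).integrable (hg.mul hg).integrable, integral_const_mul, hff, hgg]
  ring

lemma BddMeasurable.lpNorm_add_le [IsFiniteMeasure μ] (hf : BddMeasurable f) (g : Y → ℝ) :
    lpNorm (fun x => f x + g x) 2 μ ≤ lpNorm f 2 μ + lpNorm g 2 μ :=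
  MeasureTheory.lpNorm_add_le (g := g) (hf.memLp 2) one_le_two

lemma BddMeasurable.lpNorm_sub_le [IsFiniteMeasure μ] (hf : BddMeasurable f) (g : Y → ℝ) :
    lpNorm (fun x => f x - g x) 2 μ ≤ lpNorm f 2 μ + lpNorm g 2 μ :=
  MeasureTheory.lpNorm_sub_le (g := g) (hf.memLp 2) one_le_two

lemma lpNorm_fun_sub_comm {p : ENNReal} (f g : Y → ℝ) :
    lpNorm (fun x => f x - g x) p μ = lpNorm (fun x => g x - f x) p μ :=
  lpNorm_sub_comm f g p μ

lemma BddMeasurable.lpNorm_sub_triangle [IsFiniteMeasure μ] (hf : BddMeasurable f)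
    (hg : BddMeasurable g) (h : Y → ℝ) :
    lpNorm (fun x => f x - h x) 2 μ ≤
      lpNorm (fun x => f x - g x) 2 μ + lpNorm (fun x => g x - h x) 2 μ :=
  lpNorm_sub_le_lpNorm_sub_add_lpNorm_sub (hf.memLp 2) (hg.memLp 2) one_le_two

lemma BddMeasurable.abs_integral_mul_sub_le [IsFiniteMeasure μ] {h : Y → ℝ}
    (hf : BddMeasurable f) (hg : BddMeasurable g) (hh : BddMeasurable h) :
    |(∫ x, f x * h x ∂μ) - ∫ x, g x * h x ∂μ| ≤
      lpNorm (fun x => f x - g x) 2 μ * lpNorm h 2 μ := by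
  rw [← integral_sub (hf.mul hh).integrable (hg.mul hh).integrable]
  simpa only [sub_mul] using abs_integral_mul_le ((hf.sub hg).memLp 2) (hh.memLp (μ := μ) 2)

end L2Norm

section Expect

variable {Y ι : Type*} [MeasurableSpace Y] {μ : Measure Y} {s : Finset ι}

lemma expect_le_of_nonneg {u : ι → ℝ} {c : ℝ} (hc : 0 ≤ c) (h : ∀ i ∈ s, u i ≤ c) :
    𝔼 i ∈ s, u i ≤ c := by
  obtain rfl | hs := s.eq_empty_or_nonempty
  · simpa
  · exact expect_le hs h

lemma abs_expect_le_of_nonneg {u : ι → ℝ} {c : ℝ} (hc : 0 ≤ c) (h : ∀ i ∈ s, |u i| ≤ c) :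
    |𝔼 i ∈ s, u i| ≤ c :=
  (abs_expect_le s u).trans (expect_le_of_nonneg hc h)

lemma expect_range_const {N : ℕ} (hN : 0 < N) (c : ℝ) : 𝔼 _n ∈ range N, c = c :=
  expect_const (nonempty_range_iff.2 hN.ne') c

lemma lpNorm_fun_expect_le [IsFiniteMeasure μ] {F : ι → Y → ℝ}
    (hF : ∀ i ∈ s, BddMeasurable (F i)) :
    lpNorm (fun x => 𝔼 i ∈ s, F i x) 2 μ ≤ 𝔼 i ∈ s, lpNorm (F i) 2 μ := by
  simpa only [← Finset.expect_apply] using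
    lpNorm_expect_le (fun i hi => (hF i hi).memLp (μ := μ) 2) one_le_two

lemma integral_expect [IsFiniteMeasure μ] {F : ι → Y → ℝ} (hF : ∀ i ∈ s, BddMeasurable (F i)) :
    ∫ x, 𝔼 i ∈ s, F i x ∂μ = 𝔼 i ∈ s, ∫ x, F i x ∂μ := by
  simp only [expect_eq_sum_div_card, integral_div]
  rw [integral_finsetSum _ fun i hi => (hF i hi).integrable]

end Expect

/-! ### Conditional expectation on the invariant σ-algebra and the mean ergodic theorem -/

section Koopman

variable {Y : Type*} [MeasurableSpace Y] {μ : Measure Y} {T : Y → Y} {f p : Y → ℝ}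

lemma exists_measurable_invariants_ae_eq (hT : MeasurePreserving T μ μ) (hp : Measurable p)
    (h : (fun y => p (T y)) =ᵐ[μ] p) :
    ∃ q : Y → ℝ, Measurable[MeasurableSpace.invariants T] q ∧ q =ᵐ[μ] p := by
  refine ⟨fun y => limsup (fun n => p (T^[n] y)) atTop,
    MeasurableSpace.measurable_invariants_dom.2
      ⟨Measurable.limsup fun n => hp.comp (hT.iterate n).measurable, fun s _ => ?_⟩, ?_⟩
  · ext y
    have hshift := limsup_nat_add (fun n => p (T^[n] y)) 1
    simp only [Function.iterate_succ_apply, Set.mem_preimage, Function.comp_apply] at hshift ⊢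
    rw [hshift]
  · have hiter (n : ℕ) : (fun y => p (T^[n] y)) =ᵐ[μ] p := by
      induction n with
      | zero => rfl
      | succ n ih => exact (hT.quasiMeasurePreserving.ae_eq_comp ih).trans h
    filter_upwards [ae_all_iff.2 hiter] with y hy
    simp [hy]

lemma birkhoffAverage_compMeasurePreserving_toLp [IsFiniteMeasure μ]
    (hT : MeasurePreserving T μ μ) (hf : BddMeasurable f) (N : ℕ) :
    ↑↑(birkhoffAverage ℝ (Lp.compMeasurePreserving (p := 2) T hT) id N
      ((hf.memLp 2).toLp f) : Lp ℝ 2 μ) =ᵐ[μ]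
      fun y => 𝔼 n ∈ range N, f (T^[n] y) := by
  have hiter (n : ℕ) : (Lp.compMeasurePreserving T hT)^[n] ((hf.memLp 2).toLp f) =
      ((hf.comp (hT.iterate n).measurable).memLp 2).toLp _ := by
    induction n with
    | zero => rfl
    | succ n ih =>
      rw [Function.iterate_succ_apply', ih, Lp.toLp_compMeasurePreserving]
      rfl
  rw [birkhoffAverage, birkhoffSum]
  refine (Lp.coeFn_smul _ _).trans ?_
  filter_upwards [Lp.coeFn_finsetSum (range N) fun n =>
      id ((Lp.compMeasurePreserving T hT)^[n] ((hf.memLp 2).toLp f)),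
    ae_all_iff.2 fun n => ((hf.comp (hT.iterate n).measurable).memLp (μ := μ) 2).coeFn_toLp]
    with y hsum hcoe
  rw [Pi.smul_apply, hsum, Finset.sum_apply, expect_eq_sum_div_card, div_eq_inv_mul]
  simp only [hiter, id, hcoe, card_range, smul_eq_mul]

end Koopman

section InvariantExpectation

variable {Y : Type*} [MeasurableSpace Y] [StandardBorelSpace Y]

/-- The disintegration of `μ` over the σ-algebra of `T`-invariant sets, as a kernel from `Y` with
its full σ-algebra to itself. -/
noncomputable def invKernel (μ : Measure Y) [IsFiniteMeasure μ] (T : Y → Y) :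
    ProbabilityTheory.Kernel Y Y :=
  (ProbabilityTheory.condExpKernel μ (MeasurableSpace.invariants T)).comap id
    (measurable_id'' (MeasurableSpace.invariants_le T))

instance (μ : Measure Y) [IsFiniteMeasure μ] (T : Y → Y) :
    ProbabilityTheory.IsMarkovKernel (invKernel μ T) := by
  unfold invKernel; infer_instance

/-- The conditional expectation of `f` on the σ-algebra of `T`-invariant sets, in the version given
by integration against `invKernel μ T`; this version is invariant at every point. -/
noncomputable def invExp (μ : Measure Y) [IsFiniteMeasure μ] (T : Y → Y) (f : Y → ℝ) (y : Y) : ℝ :=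
  ∫ z, f z ∂(invKernel μ T y)

variable {μ : Measure Y} [IsFiniteMeasure μ] {T : Y → Y} {f g p : Y → ℝ}

lemma stronglyMeasurable_invExp (hf : Measurable f) :
    StronglyMeasurable[MeasurableSpace.invariants T] (invExp μ T f) :=
  (hf.stronglyMeasurable.integral_condExpKernel' (μ := μ)
    (m := MeasurableSpace.invariants T)).mono inf_le_left

lemma invKernel_apply_map (y : Y) : invKernel μ T (T y) = invKernel μ T y := by
  ext s hs
  have hmeas := ProbabilityTheory.measurable_condExpKernel (μ := μ)
    (m := MeasurableSpace.invariants T) hs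
  exact congrFun (MeasurableSpace.comp_eq_of_measurable_invariants hmeas) y

lemma invExp_apply_map (f : Y → ℝ) (y : Y) : invExp μ T f (T y) = invExp μ T f y := by
  rw [invExp, invKernel_apply_map, invExp]

lemma invExp_apply_iterate (f : Y → ℝ) (n : ℕ) (y : Y) :
    invExp μ T f (T^[n] y) = invExp μ T f y := by
  induction n with
  | zero => rfl
  | succ n ih => rw [Function.iterate_succ_apply', invExp_apply_map, ih]

lemma abs_invExp_le {C : ℝ} (hC : ∀ x, |f x| ≤ C) (y : Y) : |invExp μ T f y| ≤ C := by
  simpa [invExp] using norm_integral_le_of_norm_le_const (μ := invKernel μ T y) (f := f)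
    (Eventually.of_forall hC)

lemma BddMeasurable.invExp (hf : BddMeasurable f) : BddMeasurable (invExp μ T f) :=
  ⟨(stronglyMeasurable_invExp hf.measurable).measurable.mono
    (MeasurableSpace.invariants_le T) le_rfl, hf.bdd.imp fun _ => abs_invExp_le⟩

lemma condExp_ae_eq_invExp (hf : BddMeasurable f) :
    μ[f | MeasurableSpace.invariants T] =ᵐ[μ] HostKra.invExp μ T f :=
  ProbabilityTheory.condExp_ae_eq_integral_condExpKernel (MeasurableSpace.invariants_le T)
    hf.integrable

lemma invExp_sub (hf : BddMeasurable f) (hg : BddMeasurable g) (y : Y) :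
    invExp μ T (fun x => f x - g x) y = invExp μ T f y - invExp μ T g y :=
  integral_sub hf.integrable hg.integrable

lemma integral_mul_invExp_of_measurable_invariants
    (hp : Measurable[MeasurableSpace.invariants T] p) (hp2 : MemLp p 2 μ) (hf : BddMeasurable f) :
    ∫ y, p y * invExp μ T f y ∂μ = ∫ y, p y * f y ∂μ := by
  have hpull := condExp_mul_of_stronglyMeasurable_left (m := MeasurableSpace.invariants T)
    hp.stronglyMeasurable (hp2.integrable_mul (hf.memLp 2)) hf.integrable
  rw [← integral_condExp (MeasurableSpace.invariants_le T) (f := fun y => p y * f y)]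
  refine integral_congr_ae ?_
  filter_upwards [hpull, condExp_ae_eq_invExp (T := T) (μ := μ) hf] with y hy hfy
  exact (hy.trans (congrArg (p y * ·) hfy)).symm

lemma integral_mul_invExp_of_ae_invariant (hT : MeasurePreserving T μ μ) (hp : Measurable p)
    (hp2 : MemLp p 2 μ) (h : (fun y => p (T y)) =ᵐ[μ] p) (hf : BddMeasurable f) :
    ∫ y, p y * invExp μ T f y ∂μ = ∫ y, p y * f y ∂μ := by
  obtain ⟨q, hq, hqp⟩ := exists_measurable_invariants_ae_eq hT hp h
  have hcongr (g : Y → ℝ) : ∫ y, q y * g y ∂μ = ∫ y, p y * g y ∂μ :=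
    integral_congr_ae (hqp.mul (ae_eq_refl g))
  rw [← hcongr, ← hcongr]
  exact integral_mul_invExp_of_measurable_invariants hq ((memLp_congr_ae hqp).2 hp2) hf

lemma inner_sub_invExp_eq_zero (hT : MeasurePreserving T μ μ) (P : Lp ℝ 2 μ)
    (hP : Lp.compMeasurePreserving T hT P = P) (hf : BddMeasurable f) :
    inner ℝ P (((hf.sub (hf.invExp (μ := μ) (T := T))).memLp 2).toLp _) = 0 := by
  have hPT : (fun y => P (T y)) =ᵐ[μ] P := by
    simpa only [hP, Function.comp_def] using (Lp.coeFn_compMeasurePreserving P hT).symm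
  have horth := integral_mul_invExp_of_ae_invariant hT (Lp.stronglyMeasurable P).measurable
    (Lp.memLp P) hPT hf
  have hinner := integral_mul_eq_inner (Lp.memLp P)
    ((hf.sub (hf.invExp (μ := μ) (T := T))).memLp 2)
  rw [Lp.toLp_coeFn] at hinner
  simp only [← hinner, mul_sub]
  have hsub := integral_sub ((Lp.memLp P).integrable_mul (hf.memLp 2))
    ((Lp.memLp P).integrable_mul ((hf.invExp (μ := μ) (T := T)).memLp 2))
  simp only [Pi.mul_apply] at hsub
  rw [hsub, horth, sub_self]

theorem tendsto_lpNorm_expect_iterate_sub_invExp (hT : MeasurePreserving T μ μ)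
    (hf : BddMeasurable f) :
    Tendsto (fun N => lpNorm (fun y => (𝔼 n ∈ range N, f (T^[n] y)) - invExp μ T f y) 2 μ)
      atTop (𝓝 0) := by
  have hh : BddMeasurable fun y => f y - invExp μ T f y := hf.sub hf.invExp
  let U : Lp ℝ 2 μ →L[ℝ] Lp ℝ 2 μ := (Lp.compMeasurePreservingₗᵢ ℝ T hT).toContinuousLinearMap
  have hlim := U.tendsto_birkhoffAverage_orthogonalProjection
    (LinearIsometry.norm_toContinuousLinearMap_le _) ((hh.memLp 2).toLp _)
  rw [Submodule.orthogonalProjectionOnto_eq_zero_iff.2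
    ((Submodule.mem_orthogonal _ _).2 fun P hP => inner_sub_invExp_eq_zero hT P hP hf)] at hlim
  refine (by simpa using hlim.norm : Tendsto _ atTop (𝓝 (0 : ℝ))).congr' ?_
  filter_upwards [eventually_gt_atTop 0] with N hN
  rw [← Lp.toLp_coeFn (birkhoffAverage ℝ _ _ _ _) (Lp.memLp _), ← lpNorm_eq_norm_toLp]
  refine lpNorm_congr_ae ((birkhoffAverage_compMeasurePreserving_toLp hT hh N).trans ?_)
  filter_upwards with y
  simp only [expect_sub_distrib, invExp_apply_iterate, expect_range_const hN]

end InvariantExpectation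

/-! ### The functional monotone class theorem -/

section MonotoneClass

variable {Y Z : Type*} {f : Y → ℝ}

/-- A class of bounded measurable functions closed under linear combinations and bounded pointwise
limits, given by its defining predicate `P`. -/
structure IsMonotoneClass [MeasurableSpace Y] (P : (Y → ℝ) → Prop) : Prop where
  add : ∀ {f g}, BddMeasurable f → BddMeasurable g → P f → P g → P fun x => f x + g x
  const_mul : ∀ (c : ℝ) {f}, BddMeasurable f → P f → P fun x => c * f x
  lim : ∀ {F : ℕ → Y → ℝ} {f : Y → ℝ} {C : ℝ}, (∀ n, BddMeasurable (F n)) → (∀ n, P (F n)) →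
    (∀ n x, |F n x| ≤ C) → (∀ x, Tendsto (F · x) atTop (𝓝 (f x))) → P f

lemma BddMeasurable.tendsto_lpNorm_sub [MeasurableSpace Y] {μ : Measure Y} [IsFiniteMeasure μ]
    {F : ℕ → Y → ℝ} {C : ℝ} (hF : ∀ n, BddMeasurable (F n)) (hf : BddMeasurable f)
    (hC : ∀ n x, |F n x| ≤ C) (hlim : ∀ x, Tendsto (F · x) atTop (𝓝 (f x))) :
    Tendsto (fun n => lpNorm (fun x => f x - F n x) 2 μ) atTop (𝓝 0) := by
  obtain ⟨D, hD⟩ := hf.bdd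
  have hdiff (n : ℕ) (x : Y) : |f x - F n x| ≤ D + C :=
    (abs_sub _ _).trans (add_le_add (hD x) (hC n x))
  have hsq : Tendsto (fun n => ∫ x, (f x - F n x) * (f x - F n x) ∂μ) atTop
      (𝓝 (∫ x, (f x - f x) * (f x - f x) ∂μ)) :=
    tendsto_integral (C := (D + C) * (D + C))
      (fun n => ((hf.sub (hF n)).mul (hf.sub (hF n))).measurable)
      (fun n x => by
        rw [abs_mul]
        exact mul_le_mul (hdiff n x) (hdiff n x) (abs_nonneg _)
          ((abs_nonneg _).trans (hdiff n x)))
      (fun x => ((hlim x).const_sub _).mul ((hlim x).const_sub _))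
  simp only [← lpNorm_two_sq ((hf.sub (hF _)).memLp 2), sub_self, mul_zero, integral_zero] at hsq
  simpa [Real.sqrt_sq lpNorm_nonneg] using hsq.sqrt

lemma BddMeasurable.of_tendsto [MeasurableSpace Y] {F : ℕ → Y → ℝ} {C : ℝ}
    (hF : ∀ n, BddMeasurable (F n)) (hC : ∀ n x, |F n x| ≤ C)
    (hlim : ∀ x, Tendsto (F · x) atTop (𝓝 (f x))) : BddMeasurable f :=
  ⟨measurable_of_tendsto_metrizable (fun n => (hF n).measurable) (tendsto_pi_nhds.2 hlim), C,
    fun x => le_of_tendsto' (hlim x).abs fun n => hC n x⟩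

lemma IsMonotoneClass.of_lpNorm_closed [MeasurableSpace Y] (μ : Measure Y) [IsFiniteMeasure μ]
    {P : (Y → ℝ) → Prop}
    (hadd : ∀ {f g}, BddMeasurable f → BddMeasurable g → P f → P g → P fun x => f x + g x)
    (hmul : ∀ (c : ℝ) {f}, BddMeasurable f → P f → P fun x => c * f x)
    (hclosed : ∀ {f}, BddMeasurable f →
      (∀ ε > 0, ∃ v, BddMeasurable v ∧ P v ∧ lpNorm (fun x => f x - v x) 2 μ < ε) → P f) :
    IsMonotoneClass P where
  add := hadd
  const_mul := hmul
  lim hF hP hC hlim := by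
    have hf := BddMeasurable.of_tendsto hF hC hlim
    refine hclosed hf fun ε hε => ?_
    obtain ⟨n, hn⟩ :=
      ((BddMeasurable.tendsto_lpNorm_sub (μ := μ) hF hf hC hlim).eventually_lt_const hε).exists
    exact ⟨_, hF n, hP n, hn⟩

namespace IsMonotoneClass

variable {m : MeasurableSpace Y} [MeasurableSpace Z] {P : (Y → ℝ) → Prop}

lemma mono {m' : MeasurableSpace Y} (hm : m' ≤ m) (hP : @IsMonotoneClass Y m P) :
    @IsMonotoneClass Y m' P :=
  { add := fun hf hg => @add Y m P hP _ _ (.of_le hm hf) (.of_le hm hg)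
    const_mul := fun c _ hf => @const_mul Y m P hP c _ (.of_le hm hf)
    lim := fun hF => @lim Y m P hP _ _ _ fun n => .of_le hm (hF n) }

lemma sum (hP : IsMonotoneClass P) (hzero : P fun _ => 0) {ι : Type*} (s : Finset ι)
    {F : ι → Y → ℝ} (hF : ∀ i, BddMeasurable (F i)) (h : ∀ i, P (F i)) :
    P fun x => ∑ i ∈ s, F i x := by
  classical
  induction s using Finset.induction_on with
  | empty => simpa using hzero
  | insert a s ha ih =>
    simp only [Finset.sum_insert ha]
    exact hP.add (hF a) (.sum s fun i _ => hF i) (h a) ih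

lemma indicator_iUnion (hP : IsMonotoneClass P) (hzero : P fun _ => 0) {A : ℕ → Set Y}
    (hdisj : Pairwise (Function.onFun Disjoint A)) (hA : ∀ i, MeasurableSet (A i))
    (h : ∀ i, P ((A i).indicator fun _ => 1)) : P ((⋃ i, A i).indicator fun _ => 1) := by
  have hB (i : ℕ) : BddMeasurable ((A i).indicator fun _ => 1) := .indicator (hA i) (.const 1)
  have hsum (n : ℕ) (x : Y) : ∑ i ∈ range n, (A i).indicator (fun _ => (1 : ℝ)) x =
      (⋃ i ∈ range n, A i).indicator (fun _ => 1) x :=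
    (Finset.indicator_biUnion_apply (range n) A (fun i _ j _ hij => hdisj hij) x).symm
  refine hP.lim (F := fun n x => ∑ i ∈ range n, (A i).indicator (fun _ => 1) x) (C := 1)
    (fun n => .sum _ fun i _ => hB i) (fun n => hP.sum hzero _ hB h) (fun n x => ?_) fun x => ?_
  · rw [hsum, Set.indicator]
    split_ifs <;> simp
  · simp only [hsum]
    refine tendsto_const_nhds.congr' ?_
    by_cases hx : x ∈ ⋃ i, A i
    · obtain ⟨i, hi⟩ := Set.mem_iUnion.1 hx
      filter_upwards [eventually_gt_atTop i] with n hn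
      have hxn : x ∈ ⋃ i ∈ range n, A i := Set.mem_iUnion₂.2 ⟨i, mem_range.2 hn, hi⟩
      rw [Set.indicator_of_mem hx, Set.indicator_of_mem hxn]
    · refine Eventually.of_forall fun n => ?_
      have hxn : x ∉ ⋃ i ∈ range n, A i := fun hx' => hx (Set.iUnion₂_subset_iUnion _ _ hx')
      simp only [Set.indicator_of_notMem hx, Set.indicator_of_notMem hxn]

lemma indicator_of_isPiSystem (hP : IsMonotoneClass P) {S : Set (Set Y)}
    (hgen : m = MeasurableSpace.generateFrom S) (hpi : IsPiSystem S) (hone : P fun _ => 1)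
    (hS : ∀ s ∈ S, P (s.indicator fun _ => 1)) {s : Set Y} (hs : MeasurableSet s) :
    P (s.indicator fun _ => 1) := by
  have hzero : P fun _ => 0 := by simpa using hP.const_mul 0 (.const 1) hone
  induction s, hs using MeasurableSpace.induction_on_inter hgen hpi with
  | empty => simpa using hzero
  | basic t ht => exact hS t ht
  | compl t ht ih =>
    have hB : BddMeasurable (t.indicator fun _ => 1) := .indicator ht (.const 1)
    convert hP.add (.const 1) (hB.const_mul (-1)) hone (hP.const_mul (-1) hB ih) using 1
    ext x
    by_cases hx : x ∈ t <;> simp [hx]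
  | iUnion A hdisj hA ih => exact hP.indicator_iUnion hzero hdisj hA ih

lemma simpleFunc (hP : IsMonotoneClass P)
    (hind : ∀ s, MeasurableSet s → P (s.indicator fun _ => 1)) (φ : SimpleFunc Y ℝ) : P φ := by
  induction φ using SimpleFunc.induction with
  | @const c s hs =>
    convert hP.const_mul c (.indicator hs (.const 1)) (hind s hs) using 1
    ext x
    by_cases hx : x ∈ s <;> simp [hx]
  | @add φ ψ _ hφ hψ =>
    exact hP.add ⟨φ.measurable, φ.exists_forall_norm_le⟩ ⟨ψ.measurable, ψ.exists_forall_norm_le⟩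
      hφ hψ

theorem of_isPiSystem (hP : IsMonotoneClass P) {S : Set (Set Y)}
    (hgen : m = MeasurableSpace.generateFrom S) (hpi : IsPiSystem S) (hone : P fun _ => 1)
    (hS : ∀ s ∈ S, P (s.indicator fun _ => 1)) (hf : BddMeasurable f) : P f := by
  obtain ⟨C, hC0, hC⟩ := hf.exists_nonneg_bound
  have hsm := hf.measurable.stronglyMeasurable
  exact hP.lim (F := fun n => hsm.approxBounded C n)
    (fun n => ⟨SimpleFunc.measurable _, (hsm.approxBounded C n).exists_forall_norm_le⟩)
    (fun n => hP.simpleFunc (fun s hs => hP.indicator_of_isPiSystem hgen hpi hone hS hs) _)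
    (fun n x => hsm.norm_approxBounded_le hC0 n x)
    (fun x => hsm.tendsto_approxBounded_of_norm_le (hC x))

theorem of_tensor {P : (Y × Z → ℝ) → Prop} (hP : IsMonotoneClass P)
    (h : ∀ (a : Y → ℝ) (b : Z → ℝ), BddMeasurable a → BddMeasurable b →
      P fun p => a p.1 * b p.2) {f : Y × Z → ℝ} (hf : BddMeasurable f) : P f := by
  refine hP.of_isPiSystem generateFrom_prod.symm isPiSystem_prod
    (by simpa using h _ _ (.const 1) (.const 1)) ?_ hf
  rintro _ ⟨s, hs, t, ht, rfl⟩
  convert h _ _ (.indicator hs (.const 1)) (.indicator ht (.const 1)) using 1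
  ext ⟨x, y⟩
  by_cases hx : x ∈ s <;> by_cases hy : y ∈ t <;> simp [hx, hy]

lemma ae {W : Type*} [MeasurableSpace W] {ω : Measure W} {Q : W → (Y → ℝ) → Prop}
    (hQ : ∀ w, IsMonotoneClass (Q w)) : IsMonotoneClass fun f => ∀ᵐ w ∂ω, Q w f where
  add hf hg hPf hPg := by
    filter_upwards [hPf, hPg] with w hwf hwg using (hQ w).add hf hg hwf hwg
  const_mul c _ hf hPf := hPf.mono fun w hw => (hQ w).const_mul c hf hw
  lim hF hPF hC hlim := by
    filter_upwards [ae_all_iff.2 hPF] with w hw using (hQ w).lim hF hw hC hlim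

lemma tendsto_integral_mul_comp {V : Type*} [MeasurableSpace V] {κ : Measure V}
    [IsFiniteMeasure κ] {h : V → ℝ} (hh : BddMeasurable h) {θ : V → Y} (hθ : Measurable θ)
    {F : ℕ → Y → ℝ} {C : ℝ} (hF : ∀ n, BddMeasurable (F n)) (hC : ∀ n y, |F n y| ≤ C)
    (hlim : ∀ y, Tendsto (fun n => F n y) atTop (𝓝 (f y))) :
    Tendsto (fun n => ∫ v, h v * F n (θ v) ∂κ) atTop (𝓝 (∫ v, h v * f (θ v) ∂κ)) := by
  obtain ⟨D, hD0, hD⟩ := hh.exists_nonneg_bound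
  refine BddMeasurable.tendsto_integral (C := D * C)
    (fun n => (hh.mul ((hF n).comp hθ)).measurable) (fun n v => ?_)
    fun v => (hlim (θ v)).const_mul _
  rw [abs_mul]
  exact mul_le_mul (hD v) (hC n _) (abs_nonneg _) hD0

lemma integral_mul_eq {V V' : Type*} [MeasurableSpace V] [MeasurableSpace V'] {κ : Measure V}
    {η : Measure V'} [IsFiniteMeasure κ] [IsFiniteMeasure η] {h : V → ℝ} {k : V' → ℝ}
    (hh : BddMeasurable h) (hk : BddMeasurable k) {θ : V → Y} {φ : V' → Y} (hθ : Measurable θ)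
    (hφ : Measurable φ) :
    IsMonotoneClass fun f => ∫ v, h v * f (θ v) ∂κ = ∫ v, k v * f (φ v) ∂η where
  add hf hg hPf hPg := by
    simp only [mul_add]
    rw [integral_add (hh.mul (hf.comp hθ)).integrable (hh.mul (hg.comp hθ)).integrable,
      integral_add (hk.mul (hf.comp hφ)).integrable (hk.mul (hg.comp hφ)).integrable, hPf, hPg]
  const_mul c _ _ hPf := by
    simp only [mul_left_comm _ c, integral_const_mul, hPf]
  lim {F f C} hF hPF hC hlim := by
    exact tendsto_nhds_unique (tendsto_integral_mul_comp hh hθ hF hC hlim)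
      ((tendsto_integral_mul_comp hk hφ hF hC hlim).congr fun n => (hPF n).symm)

lemma integral_eq {V V' : Type*} [MeasurableSpace V] [MeasurableSpace V'] {κ : Measure V}
    {η : Measure V'} [IsFiniteMeasure κ] [IsFiniteMeasure η] {θ : V → Y} {φ : V' → Y}
    (hθ : Measurable θ) (hφ : Measurable φ) :
    IsMonotoneClass fun f => ∫ v, f (θ v) ∂κ = ∫ v, f (φ v) ∂η := by
  simpa only [one_mul] using integral_mul_eq (.const 1) (.const 1) hθ hφ

end IsMonotoneClass

end MonotoneClass

lemma measurable_invariants_of_apply_map {Y : Type*} [MeasurableSpace Y] {T : Y → Y}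
    {q : Y → ℝ} (hq : Measurable q) (hinv : ∀ y, q (T y) = q y) :
    Measurable[MeasurableSpace.invariants T] q :=
  MeasurableSpace.measurable_invariants_dom.2 ⟨hq, fun s _ => by ext y; simp [hinv]⟩

section InvariantExpectation

variable {Y : Type*} [MeasurableSpace Y] [StandardBorelSpace Y]
  {μ : Measure Y} [IsFiniteMeasure μ] {T : Y → Y} {f g q : Y → ℝ}

lemma invExp_ae_eq_self (hT : MeasurePreserving T μ μ) (hf : BddMeasurable f)
    (h : (fun y => f (T y)) =ᵐ[μ] f) : invExp μ T f =ᵐ[μ] f := by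
  obtain ⟨q, hq, hqf⟩ := exists_measurable_invariants_ae_eq hT hf.measurable h
  have hcond := condExp_of_stronglyMeasurable (μ := μ) (MeasurableSpace.invariants_le T)
    hq.stronglyMeasurable ((integrable_congr hqf).2 hf.integrable)
  exact (condExp_ae_eq_invExp hf).symm.trans
    ((condExp_congr_ae hqf.symm).trans (hcond.eventuallyEq.trans hqf))

lemma invExp_mul_of_invariant (hq : BddMeasurable q) (hinv : ∀ y, q (T y) = q y)
    (hf : BddMeasurable f) :
    invExp μ T (fun y => q y * f y) =ᵐ[μ] fun y => q y * invExp μ T f y := by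
  have hpull := condExp_mul_of_stronglyMeasurable_left (μ := μ)
    (measurable_invariants_of_apply_map hq.measurable hinv).stronglyMeasurable
    (hq.mul hf).integrable hf.integrable
  refine (condExp_ae_eq_invExp (hq.mul hf)).symm.trans (hpull.trans ?_)
  filter_upwards [condExp_ae_eq_invExp (μ := μ) (T := T) hf] with y hy
  rw [Pi.mul_apply, hy]

lemma integral_mul_invExp_of_invariant (hq : BddMeasurable q) (hinv : ∀ y, q (T y) = q y)
    (hf : BddMeasurable f) : ∫ y, q y * invExp μ T f y ∂μ = ∫ y, q y * f y ∂μ :=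
  integral_mul_invExp_of_measurable_invariants
    (measurable_invariants_of_apply_map hq.measurable hinv) (hq.memLp 2) hf

lemma integral_invExp_mul_invExp (hf : BddMeasurable f) (hg : BddMeasurable g) :
    ∫ y, invExp μ T f y * invExp μ T g y ∂μ = ∫ y, invExp μ T f y * g y ∂μ :=
  integral_mul_invExp_of_invariant hf.invExp (invExp_apply_map f) hg

lemma integral_mul_invExp_comm (hf : BddMeasurable f) (hg : BddMeasurable g) :
    ∫ y, f y * invExp μ T g y ∂μ = ∫ y, g y * invExp μ T f y ∂μ := by
  calc ∫ y, f y * invExp μ T g y ∂μ = ∫ y, invExp μ T g y * invExp μ T f y ∂μ := by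
        simp only [integral_invExp_mul_invExp hg hf, mul_comm (f _)]
    _ = ∫ y, g y * invExp μ T f y ∂μ := by
        simp only [mul_comm (invExp μ T g _), integral_invExp_mul_invExp hf hg, mul_comm (g _)]

theorem invExp_comp_ae_eq {Z : Type*} [MeasurableSpace Z] [StandardBorelSpace Z] {ν : Measure Z}
    [IsFiniteMeasure ν] {S : Z → Z} {π : Y → Z} {f : Z → ℝ} (hT : MeasurePreserving T μ μ)
    (hS : MeasurePreserving S ν ν) (hπ : MeasurePreserving π μ ν) (hsemi : Function.Semiconj π T S)
    (hf : BddMeasurable f) :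
    invExp μ T (fun y => f (π y)) =ᵐ[μ] fun y => invExp ν S f (π y) := by
  have hfπ : BddMeasurable fun y => f (π y) := hf.comp hπ.measurable
  have havg (N : ℕ) : BddMeasurable fun z => 𝔼 n ∈ range N, f (S^[n] z) :=
    .expect _ fun n _ => hf.comp (hS.iterate n).measurable
  have hlim := (tendsto_lpNorm_expect_iterate_sub_invExp hT hfπ).add
    (tendsto_lpNorm_expect_iterate_sub_invExp hS hf)
  rw [add_zero] at hlim
  refine hfπ.invExp.ae_eq_of_lpNorm_sub (hf.invExp.comp hπ.measurable)
    (le_antisymm (ge_of_tendsto' hlim fun N => ?_) lpNorm_nonneg)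
  have hiter (n : ℕ) (y : Y) : π (T^[n] y) = S^[n] (π y) := (hsemi.iterate_right n).eq y
  rw [← lpNorm_comp_measurePreserving hπ
      ((havg N).sub hf.invExp).measurable.aestronglyMeasurable,
    lpNorm_fun_sub_comm (fun y => 𝔼 n ∈ range N, f (π (T^[n] y)))]
  simp only [hiter]
  exact hfπ.invExp.lpNorm_sub_triangle ((havg N).comp hπ.measurable) _

end InvariantExpectation

/-! ### The relatively independent square over the invariant σ-algebra -/

section Tensor

variable {Y Z : Type*} [MeasurableSpace Y] [MeasurableSpace Z]

lemma BddMeasurable.tensor {a : Y → ℝ} {b : Z → ℝ} (ha : BddMeasurable a) (hb : BddMeasurable b) :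
    BddMeasurable fun p : Y × Z => a p.1 * b p.2 :=
  (ha.comp measurable_fst).mul (hb.comp measurable_snd)

theorem measurePreserving_of_tensor {W : Type*} [MeasurableSpace W] {ω : Measure W}
    {ρ : Measure (Y × Z)} [IsFiniteMeasure ω] [IsFiniteMeasure ρ] {θ : W → Y × Z}
    (hθ : Measurable θ)
    (h : ∀ (a : Y → ℝ) (b : Z → ℝ), BddMeasurable a → BddMeasurable b →
      ∫ w, a (θ w).1 * b (θ w).2 ∂ω = ∫ p, a p.1 * b p.2 ∂ρ) : MeasurePreserving θ ω ρ := by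
  refine ⟨hθ, Measure.ext fun s hs => ?_⟩
  have hind := (IsMonotoneClass.integral_eq hθ measurable_id).of_tensor h
    (.indicator hs (.const 1))
  have hpre : (fun w => s.indicator (fun _ => (1 : ℝ)) (θ w)) = (θ ⁻¹' s).indicator 1 := rfl
  rw [hpre, integral_indicator_one (hθ hs)] at hind
  rw [Measure.map_apply hθ hs, ← measureReal_eq_measureReal_iff, hind]
  exact integral_indicator_one hs

theorem ae_eq_of_integral_mul_tensor {ρ : Measure (Y × Z)} [IsFiniteMeasure ρ] {Φ Ψ : Y × Z → ℝ}
    (hΦ : BddMeasurable Φ) (hΨ : BddMeasurable Ψ)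
    (h : ∀ (a : Y → ℝ) (b : Z → ℝ), BddMeasurable a → BddMeasurable b →
      ∫ p, Φ p * (a p.1 * b p.2) ∂ρ = ∫ p, Ψ p * (a p.1 * b p.2) ∂ρ) : Φ =ᵐ[ρ] Ψ := by
  have heq {f : Y × Z → ℝ} (hf : BddMeasurable f) : ∫ p, Φ p * f p ∂ρ = ∫ p, Ψ p * f p ∂ρ :=
    (IsMonotoneClass.integral_mul_eq hΦ hΨ measurable_id measurable_id).of_tensor h hf
  refine hΦ.ae_eq_of_integral_mul hΨ ?_ (heq hΨ).symm
  simp only [heq hΦ, mul_comm (Ψ _)]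

end Tensor

section RelSquare

variable {Y : Type*} [MeasurableSpace Y] [StandardBorelSpace Y]

/-- The relatively independent square of `μ` over the σ-algebra of `T`-invariant sets. -/
noncomputable def relSquare (μ : Measure Y) [IsFiniteMeasure μ] (T : Y → Y) : Measure (Y × Y) :=
  μ.compProd (invKernel μ T)

instance (μ : Measure Y) [IsFiniteMeasure μ] (T : Y → Y) : IsFiniteMeasure (relSquare μ T) := by
  unfold relSquare; infer_instance

instance (μ : Measure Y) [IsProbabilityMeasure μ] (T : Y → Y) :
    IsProbabilityMeasure (relSquare μ T) := by
  unfold relSquare; infer_instance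

/-- The conditional expectation of `Φ` on the first coordinate of `relSquare μ T`. -/
noncomputable def fstExp (μ : Measure Y) [IsFiniteMeasure μ] (T : Y → Y) (Φ : Y × Y → ℝ)
    (y : Y) : ℝ :=
  ∫ z, Φ (y, z) ∂(invKernel μ T y)

variable {μ : Measure Y} [IsFiniteMeasure μ] {T : Y → Y} {a b f : Y → ℝ} {Φ Ψ : Y × Y → ℝ}

lemma BddMeasurable.fstExp (hΦ : BddMeasurable Φ) : BddMeasurable (fstExp μ T Φ) := by
  obtain ⟨C, hC⟩ := hΦ.bdd
  refine ⟨(hΦ.measurable.stronglyMeasurable.integral_kernel_prod_right'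
    (κ := invKernel μ T)).measurable, C, fun y => ?_⟩
  simpa [HostKra.fstExp] using norm_integral_le_of_norm_le_const (μ := invKernel μ T y)
    (f := fun z => Φ (y, z)) (Eventually.of_forall fun z => hC (y, z))

lemma fstExp_fst_mul (a : Y → ℝ) (Φ : Y × Y → ℝ) (y : Y) :
    fstExp μ T (fun p => a p.1 * Φ p) y = a y * fstExp μ T Φ y := by
  simp only [fstExp, integral_const_mul]

lemma fstExp_tensor (a b : Y → ℝ) (y : Y) :
    fstExp μ T (fun p => a p.1 * b p.2) y = a y * invExp μ T b y :=
  fstExp_fst_mul a _ y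

lemma fstExp_sub (hΦ : BddMeasurable Φ) (hΨ : BddMeasurable Ψ) (y : Y) :
    fstExp μ T (fun p => Φ p - Ψ p) y = fstExp μ T Φ y - fstExp μ T Ψ y :=
  integral_sub (hΦ.comp measurable_prodMk_left).integrable
    (hΨ.comp measurable_prodMk_left).integrable

lemma fstExp_expect {ι : Type*} {s : Finset ι} {F : ι → Y × Y → ℝ}
    (hF : ∀ i ∈ s, BddMeasurable (F i)) (y : Y) :
    fstExp μ T (fun p => 𝔼 i ∈ s, F i p) y = 𝔼 i ∈ s, fstExp μ T (F i) y :=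
  integral_expect fun i hi => (hF i hi).comp measurable_prodMk_left

lemma integral_relSquare (hΦ : BddMeasurable Φ) :
    ∫ p, Φ p ∂relSquare μ T = ∫ y, fstExp μ T Φ y ∂μ :=
  Measure.integral_compProd hΦ.integrable

lemma integral_relSquare_fst_mul (ha : BddMeasurable a) (hΦ : BddMeasurable Φ) :
    ∫ p, a p.1 * Φ p ∂relSquare μ T = ∫ y, a y * fstExp μ T Φ y ∂μ := by
  simp only [integral_relSquare ((ha.comp measurable_fst).mul hΦ), fstExp_fst_mul]

lemma integral_relSquare_tensor (ha : BddMeasurable a) (hb : BddMeasurable b) :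
    ∫ p, a p.1 * b p.2 ∂relSquare μ T = ∫ y, a y * invExp μ T b y ∂μ :=
  integral_relSquare_fst_mul ha (hb.comp measurable_snd)

lemma integral_relSquare_tensor_eq_invExp_mul (ha : BddMeasurable a) (hb : BddMeasurable b) :
    ∫ p, a p.1 * b p.2 ∂relSquare μ T = ∫ y, invExp μ T a y * invExp μ T b y ∂μ := by
  rw [integral_relSquare_tensor ha hb, integral_invExp_mul_invExp ha hb,
    integral_mul_invExp_comm ha hb]
  simp only [mul_comm (b _)]

lemma measurePreserving_fst : MeasurePreserving Prod.fst (relSquare μ T) μ :=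
  ⟨measurable_fst, Measure.fst_compProd μ (invKernel μ T)⟩

lemma measurePreserving_swap :
    MeasurePreserving Prod.swap (relSquare μ T) (relSquare μ T) := by
  refine measurePreserving_of_tensor measurable_swap fun a b ha hb => ?_
  have hba := integral_relSquare_tensor_eq_invExp_mul (μ := μ) (T := T) hb ha
  rw [integral_relSquare_tensor_eq_invExp_mul ha hb]
  simpa only [Prod.fst_swap, Prod.snd_swap, mul_comm (a _), mul_comm (invExp μ T a _)] using hba

lemma measurePreserving_snd : MeasurePreserving Prod.snd (relSquare μ T) μ :=
  measurePreserving_fst.comp measurePreserving_swap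

lemma lpNorm_fstExp_le (hΦ : BddMeasurable Φ) :
    lpNorm (fstExp μ T Φ) 2 μ ≤ lpNorm Φ 2 (relSquare μ T) := by
  have hsq : lpNorm (fstExp μ T Φ) 2 μ ^ 2 ≤
      lpNorm (fstExp μ T Φ) 2 μ * lpNorm Φ 2 (relSquare μ T) := by
    rw [lpNorm_two_sq (hΦ.fstExp.memLp 2), ← integral_relSquare_fst_mul hΦ.fstExp hΦ,
      ← lpNorm_comp_measurePreserving measurePreserving_fst
        hΦ.fstExp.measurable.aestronglyMeasurable]
    exact (le_abs_self _).trans (abs_integral_mul_le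
      ((hΦ.fstExp.comp measurable_fst).memLp 2) (hΦ.memLp 2))
  rw [sq] at hsq
  rcases (lpNorm_nonneg (f := fstExp μ T Φ) (p := 2) (μ := μ)).eq_or_lt with hzero | hpos
  · rw [← hzero]; exact lpNorm_nonneg
  · exact le_of_mul_le_mul_left hsq hpos

theorem comp_fst_ae_eq_comp_snd (hT : MeasurePreserving T μ μ) (hf : BddMeasurable f)
    (h : (fun y => f (T y)) =ᵐ[μ] f) :
    (fun p : Y × Y => f p.1) =ᵐ[relSquare μ T] fun p => f p.2 := by
  have htensor : ∫ p, f p.1 * f p.2 ∂relSquare μ T = ∫ y, f y * f y ∂μ := by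
    rw [integral_relSquare_tensor hf hf]
    refine integral_congr_ae ?_
    filter_upwards [invExp_ae_eq_self hT hf h] with y hy
    rw [hy]
  refine (hf.comp measurable_fst).ae_eq_of_integral_mul (hf.comp measurable_snd) ?_ ?_
  · rw [htensor, integral_comp_measurePreserving measurePreserving_fst
      (hf.mul hf).measurable.aestronglyMeasurable]
  · rw [htensor, integral_comp_measurePreserving measurePreserving_snd
      (hf.mul hf).measurable.aestronglyMeasurable]

end RelSquare

section SystemEndo

variable {Y : Type*} [MeasurableSpace Y] {μ : Measure Y} {T g h : Y → Y}

/-- `g` is an endomorphism of the measure preserving system `(Y, μ, T)`. -/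
structure IsSystemEndo (μ : Measure Y) (T g : Y → Y) : Prop where
  measurePreserving : MeasurePreserving g μ μ
  comm : Function.Commute g T

/-- `g` is an endomorphism of `(Y, μ, T)` acting trivially on the factor of `T`-invariant
functions. These are the maps over which the convergence of multiple averages is uniform. -/
structure FixesInvariants (μ : Measure Y) (T g : Y → Y) : Prop extends IsSystemEndo μ T g where
  ae_eq_of_invariant : ∀ φ : Y → ℝ, BddMeasurable φ → (fun y => φ (T y)) =ᵐ[μ] φ →
    (fun y => φ (g y)) =ᵐ[μ] φ

lemma IsSystemEndo.measurable (hg : IsSystemEndo μ T g) : Measurable g :=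
  hg.measurePreserving.measurable

protected lemma IsSystemEndo.id : IsSystemEndo μ T id :=
  ⟨.id μ, Function.Commute.id_left⟩

protected lemma IsSystemEndo.self (hT : MeasurePreserving T μ μ) : IsSystemEndo μ T T :=
  ⟨hT, .refl T⟩

protected lemma IsSystemEndo.comp (hg : IsSystemEndo μ T g) (hh : IsSystemEndo μ T h) :
    IsSystemEndo μ T (g ∘ h) :=
  ⟨hg.measurePreserving.comp hh.measurePreserving, hg.comm.comp_left hh.comm⟩

protected lemma IsSystemEndo.iterate (hg : IsSystemEndo μ T g) (n : ℕ) : IsSystemEndo μ T g^[n] :=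
  ⟨hg.measurePreserving.iterate n, hg.comm.iterate_left n⟩

protected lemma FixesInvariants.id : FixesInvariants μ T id :=
  ⟨.id, fun _ _ _ => .rfl⟩

protected lemma FixesInvariants.self (hT : MeasurePreserving T μ μ) : FixesInvariants μ T T :=
  ⟨.self hT, fun _ _ h => h⟩

protected lemma FixesInvariants.comp (hg : FixesInvariants μ T g) (hh : FixesInvariants μ T h) :
    FixesInvariants μ T (g ∘ h) :=
  ⟨hg.toIsSystemEndo.comp hh.toIsSystemEndo, fun φ hφ hinv =>
    (hh.measurePreserving.quasiMeasurePreserving.ae_eq_comp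
      (hg.ae_eq_of_invariant φ hφ hinv)).trans (hh.ae_eq_of_invariant φ hφ hinv)⟩

protected lemma FixesInvariants.iterate (hg : FixesInvariants μ T g) (n : ℕ) :
    FixesInvariants μ T g^[n] := by
  induction n with
  | zero => exact .id
  | succ n ih => rw [Function.iterate_succ]; exact ih.comp hg

lemma FixesInvariants.of_ergodic (hT : Ergodic T μ) (hg : IsSystemEndo μ T g) :
    FixesInvariants μ T g := by
  refine ⟨hg, fun φ hφ hinv => ?_⟩
  obtain ⟨c, hc⟩ := hT.ae_eq_const_of_ae_eq_comp_ae hφ.measurable.aestronglyMeasurable hinv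
  exact (hg.measurePreserving.quasiMeasurePreserving.ae_eq_comp hc).trans hc.symm

end SystemEndo

section Endo

variable {Y : Type*} [MeasurableSpace Y] [StandardBorelSpace Y]
  {μ : Measure Y} [IsFiniteMeasure μ] {T α g : Y → Y} {f : Y → ℝ} {Φ : Y × Y → ℝ}

lemma invExp_comp_endo_ae_eq (hT : MeasurePreserving T μ μ) (hα : IsSystemEndo μ T α)
    (hf : BddMeasurable f) :
    invExp μ T (fun y => f (α y)) =ᵐ[μ] fun y => invExp μ T f (α y) :=
  invExp_comp_ae_eq hT hT hα.measurePreserving hα.comm hf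

lemma FixesInvariants.invExp_ae_eq (hg : FixesInvariants μ T g) (hf : BddMeasurable f) :
    (fun y => invExp μ T f (g y)) =ᵐ[μ] invExp μ T f :=
  hg.ae_eq_of_invariant _ hf.invExp (.of_forall fun y => invExp_apply_map f y)

lemma IsSystemEndo.prodMap_self (hT : MeasurePreserving T μ μ) (hα : IsSystemEndo μ T α) :
    IsSystemEndo (relSquare μ T) (Prod.map T T) (Prod.map α α) := by
  refine ⟨measurePreserving_of_tensor (hα.measurable.prodMap hα.measurable)
    fun a b ha hb => ?_, fun p => Prod.ext (hα.comm p.1) (hα.comm p.2)⟩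
  have hcomp := integral_relSquare_tensor (μ := μ) (T := T) (ha.comp hα.measurable)
    (hb.comp hα.measurable)
  simp only [Prod.map_fst, Prod.map_snd]
  rw [hcomp, integral_relSquare_tensor ha hb, ← integral_comp_measurePreserving
    hα.measurePreserving (ha.mul hb.invExp).measurable.aestronglyMeasurable]
  refine integral_congr_ae ?_
  filter_upwards [invExp_comp_endo_ae_eq hT hα hb] with y hy
  rw [hy]

lemma measurePreserving_prodMap_self (hT : MeasurePreserving T μ μ) :
    MeasurePreserving (Prod.map T T) (relSquare μ T) (relSquare μ T) :=
  ((IsSystemEndo.self hT).prodMap_self hT).measurePreserving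

lemma FixesInvariants.measurePreserving_prodMap_id (hg : FixesInvariants μ T g) :
    MeasurePreserving (Prod.map g id) (relSquare μ T) (relSquare μ T) := by
  refine measurePreserving_of_tensor (hg.measurable.prodMap measurable_id) fun a b ha hb => ?_
  have hcomp := integral_relSquare_tensor (μ := μ) (T := T) (ha.comp hg.measurable) hb
  simp only [Prod.map_fst, Prod.map_snd, id]
  rw [hcomp, integral_relSquare_tensor ha hb, ← integral_comp_measurePreserving
    hg.measurePreserving (ha.mul hb.invExp).measurable.aestronglyMeasurable]
  refine integral_congr_ae ?_
  filter_upwards [hg.invExp_ae_eq hb] with y hy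
  rw [hy]

lemma measurePreserving_id_prodMap (hT : MeasurePreserving T μ μ) :
    MeasurePreserving (Prod.map id T) (relSquare μ T) (relSquare μ T) :=
  measurePreserving_swap.comp
    ((FixesInvariants.self hT).measurePreserving_prodMap_id.comp measurePreserving_swap)

theorem fstExp_comp_prodMap_ae_eq (hT : MeasurePreserving T μ μ) (hα : IsSystemEndo μ T α)
    (hΦ : BddMeasurable Φ) :
    fstExp μ T (fun p => Φ (Prod.map α α p)) =ᵐ[μ] fun y => fstExp μ T Φ (α y) := by
  refine (IsMonotoneClass.ae (Q := fun y Φ => ∫ z, Φ (α y, α z) ∂invKernel μ T y =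
      ∫ z, Φ (α y, z) ∂invKernel μ T (α y)) fun y => IsMonotoneClass.integral_eq
    (measurable_prodMk_left.comp hα.measurable) measurable_prodMk_left).of_tensor
      (fun a b _ hb => ?_) hΦ
  filter_upwards [invExp_comp_endo_ae_eq hT hα hb] with y hy
  simp only [integral_const_mul]
  exact congrArg (a (α y) * ·) hy

theorem invExp_id_prodMap_ae_eq (hT : MeasurePreserving T μ μ) (hΦ : BddMeasurable Φ) :
    invExp (relSquare μ T) (Prod.map id T) Φ =ᵐ[relSquare μ T] fun p => fstExp μ T Φ p.1 := by
  refine (IsMonotoneClass.ae fun p => IsMonotoneClass.integral_eq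
    (κ := invKernel (relSquare μ T) (Prod.map id T) p) (η := invKernel μ T p.1)
    measurable_id (measurable_prodMk_left (x := p.1))).of_tensor (fun a b ha hb => ?_) hΦ
  have hmul := invExp_mul_of_invariant (μ := relSquare μ T) (T := Prod.map id T)
    (ha.comp measurable_fst) (fun _ => rfl) (hb.comp measurable_snd)
  have hsnd := invExp_comp_ae_eq (measurePreserving_id_prodMap hT) hT measurePreserving_snd
    (fun _ => rfl) hb
  have hinv := comp_fst_ae_eq_comp_snd hT (hb.invExp (μ := μ) (T := T))
    (.of_forall fun y => invExp_apply_map b y)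
  filter_upwards [hmul, hsnd, hinv] with p hpmul hpsnd hpinv
  rw [← hpinv] at hpsnd
  simp only [integral_const_mul]
  exact hpmul.trans (congrArg (a p.1 * ·) hpsnd)

end Endo

/-! ### Relative almost periodicity -/

section ErgodicDeviation

variable {Y : Type*} [MeasurableSpace Y] [StandardBorelSpace Y]
  {μ : Measure Y} [IsFiniteMeasure μ] {T : Y → Y} {c f g r w : Y → ℝ} {K : ℕ}

lemma lpNorm_invExp_le (hf : BddMeasurable f) : lpNorm (invExp μ T f) 2 μ ≤ lpNorm f 2 μ := by
  have hsnd := lpNorm_fstExp_le (μ := μ) (T := T) (hf.comp measurable_snd)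
  rwa [lpNorm_comp_measurePreserving measurePreserving_snd
    hf.measurable.aestronglyMeasurable] at hsnd

/-- The difference between the `K`-th ergodic average of `r` and its limit. -/
noncomputable def ergodicDeviation (μ : Measure Y) [IsFiniteMeasure μ] (T : Y → Y) (K : ℕ)
    (r : Y → ℝ) (y : Y) : ℝ :=
  (𝔼 k ∈ range K, r (T^[k] y)) - invExp μ T r y

lemma BddMeasurable.ergodicDeviation (hT : Measurable T) (K : ℕ) (hr : BddMeasurable r) :
    BddMeasurable (ergodicDeviation μ T K r) :=
  (expect _ fun k _ => hr.comp (hT.iterate k)).sub hr.invExp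

lemma abs_expect_integral_mul_iterate_sub_le (hT : Measurable T) (K : ℕ) (hf : BddMeasurable f)
    (hr : BddMeasurable r) :
    |(𝔼 k ∈ range K, ∫ y, f y * r (T^[k] y) ∂μ) - ∫ y, f y * invExp μ T r y ∂μ| ≤
      lpNorm (ergodicDeviation μ T K r) 2 μ * lpNorm f 2 μ := by
  have hiter (k : ℕ) : BddMeasurable fun y => r (T^[k] y) := hr.comp (hT.iterate k)
  rw [← integral_expect fun k _ => hf.mul (hiter k)]
  simp only [mul_comm (f _), ← expect_mul]
  exact (BddMeasurable.expect _ fun k _ => hiter k).abs_integral_mul_sub_le hr.invExp hf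

theorem tendsto_expect_integral_mul_iterate (hT : MeasurePreserving T μ μ)
    (hf : BddMeasurable f) (hr : BddMeasurable r) :
    Tendsto (fun N => 𝔼 n ∈ range N, ∫ y, f y * r (T^[n] y) ∂μ) atTop
      (𝓝 (∫ y, f y * invExp μ T r y ∂μ)) := by
  have hzero := (tendsto_lpNorm_expect_iterate_sub_invExp hT hr).mul_const (lpNorm f 2 μ)
  rw [zero_mul] at hzero
  exact tendsto_iff_norm_sub_tendsto_zero.2 (squeeze_zero (fun _ => norm_nonneg _)
    (fun N => abs_expect_integral_mul_iterate_sub_le hT.measurable N hf hr) hzero)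

lemma lpNorm_ergodicDeviation_le (hT : MeasurePreserving T μ μ) (K : ℕ) (hr : BddMeasurable r) :
    lpNorm (ergodicDeviation μ T K r) 2 μ ≤ 2 * lpNorm r 2 μ := by
  have hiter (k : ℕ) : BddMeasurable fun y => r (T^[k] y) := hr.comp (hT.iterate k).measurable
  have havg : lpNorm (fun y => 𝔼 k ∈ range K, r (T^[k] y)) 2 μ ≤ lpNorm r 2 μ := by
    refine (lpNorm_fun_expect_le fun k _ => hiter k).trans
      (expect_le_of_nonneg lpNorm_nonneg fun k _ => ?_)
    rw [lpNorm_comp_measurePreserving (hT.iterate k) hr.measurable.aestronglyMeasurable]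
  rw [two_mul]
  exact ((BddMeasurable.expect _ fun k _ => hiter k).lpNorm_sub_le _).trans
    (add_le_add havg (lpNorm_invExp_le hr))

lemma lpNorm_ergodicDeviation_le_add (hT : MeasurePreserving T μ μ) (K : ℕ)
    (hf : BddMeasurable f) (hg : BddMeasurable g) :
    lpNorm (ergodicDeviation μ T K f) 2 μ ≤
      2 * lpNorm (fun y => f y - g y) 2 μ + lpNorm (ergodicDeviation μ T K g) 2 μ := by
  have hsplit : ergodicDeviation μ T K f =
      fun y => ergodicDeviation μ T K (fun y => f y - g y) y + ergodicDeviation μ T K g y := by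
    ext y
    simp only [ergodicDeviation, expect_sub_distrib, invExp_sub hf hg]
    ring
  have htri := ((hf.sub hg).ergodicDeviation (μ := μ) hT.measurable K).lpNorm_add_le (μ := μ)
    (ergodicDeviation μ T K g)
  rw [← hsplit] at htri
  exact htri.trans (add_le_add_left (lpNorm_ergodicDeviation_le hT K (hf.sub hg)) _)

lemma ergodicDeviation_mul_of_invariant (hw : BddMeasurable w) (hinv : ∀ y, w (T y) = w y)
    (K : ℕ) (hr : BddMeasurable r) :
    ergodicDeviation μ T K (fun y => w y * r y) =ᵐ[μ]
      fun y => w y * ergodicDeviation μ T K r y := by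
  have hiter (k : ℕ) (y : Y) : w (T^[k] y) = w y := by
    induction k with
    | zero => rfl
    | succ k ih => rw [Function.iterate_succ_apply', hinv, ih]
  filter_upwards [invExp_mul_of_invariant hw hinv hr] with y hy
  simp only [ergodicDeviation, hiter, ← mul_expect, hy, mul_sub]

lemma lpNorm_ergodicDeviation_expect_mul_le {ι : Type*} {s : Finset ι} {r w : ι → Y → ℝ}
    {C δ : ℝ} (hT : Measurable T) (hr : ∀ j, BddMeasurable (r j)) (hw : ∀ j, BddMeasurable (w j))
    (hinv : ∀ j y, w j (T y) = w j y) (hC0 : 0 ≤ C) (hC : ∀ j y, |w j y| ≤ C) (hδ0 : 0 ≤ δ)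
    (hδ : ∀ j ∈ s, lpNorm (ergodicDeviation μ T K (r j)) 2 μ ≤ δ) :
    lpNorm (ergodicDeviation μ T K fun y => 𝔼 j ∈ s, w j y * r j y) 2 μ ≤ C * δ := by
  have hexpect : ergodicDeviation μ T K (fun y => 𝔼 j ∈ s, w j y * r j y) =ᵐ[μ]
      fun y => 𝔼 j ∈ s, w j y * ergodicDeviation μ T K (r j) y := by
    have hmul : ∀ᵐ y ∂μ, ∀ j ∈ s, ergodicDeviation μ T K (fun y => w j y * r j y) y =
        w j y * ergodicDeviation μ T K (r j) y := (Finset.eventually_all s).2 fun j _ =>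
      ergodicDeviation_mul_of_invariant (hw j) (hinv j) K (hr j)
    filter_upwards [hmul] with y hy
    rw [← expect_congr rfl hy]
    simp only [ergodicDeviation, expect_sub_distrib]
    rw [expect_comm]
    exact congrArg _ (integral_expect fun j _ => (hw j).mul (hr j))
  have hdev (j : ι) : BddMeasurable (ergodicDeviation μ T K (r j)) := (hr j).ergodicDeviation hT K
  rw [lpNorm_congr_ae hexpect]
  refine (lpNorm_fun_expect_le fun j _ => (hw j).mul (hdev j)).trans
    (expect_le_of_nonneg (mul_nonneg hC0 hδ0) fun j hj => ?_)
  exact (lpNorm_mul_le_of_bound hC0 ((hdev j).memLp 2) (hC j)).trans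
    (mul_le_mul_of_nonneg_left (hδ j hj) hC0)

/-- `f` is almost periodic relative to the invariant factor: up to `ε`, its whole orbit lies in the
averages of finitely many fixed functions with uniformly bounded `T`-invariant coefficients. -/
def IsRelAlmostPeriodic (μ : Measure Y) (T : Y → Y) (f : Y → ℝ) : Prop :=
  ∀ ε > 0, ∃ (J : ℕ) (C : ℝ) (r : ℕ → Y → ℝ), 0 ≤ C ∧ (∀ j, BddMeasurable (r j)) ∧
    ∀ h, ∃ w : ℕ → Y → ℝ, (∀ j, BddMeasurable (w j)) ∧ (∀ j y, w j (T y) = w j y) ∧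
      (∀ j y, |w j y| ≤ C) ∧
      lpNorm (fun y => f (T^[h] y) - 𝔼 j ∈ range J, w j y * r j y) 2 μ ≤ ε

theorem IsRelAlmostPeriodic.eventually_lpNorm_ergodicDeviation_le
    (hap : IsRelAlmostPeriodic μ T f) (hT : MeasurePreserving T μ μ) (hf : BddMeasurable f)
    (hc : BddMeasurable c) {ε : ℝ} (hε : 0 < ε) :
    ∀ᶠ K in atTop, ∀ h,
      lpNorm (ergodicDeviation μ T K fun y => c y * f (T^[h] y)) 2 μ ≤ ε := by
  obtain ⟨D, hD0, hD⟩ := hc.exists_nonneg_bound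
  obtain ⟨J, C, r, hC0, hr, happrox⟩ := hap (ε / (4 * (D + 1))) (by positivity)
  have hcr (j : ℕ) : BddMeasurable fun y => c y * r j y := hc.mul (hr j)
  have hsmall : ∀ᶠ K in atTop, ∀ j ∈ range J,
      lpNorm (ergodicDeviation μ T K fun y => c y * r j y) 2 μ < ε / (2 * (C + 1)) :=
    (Finset.eventually_all _).2 fun j _ =>
      (tendsto_lpNorm_expect_iterate_sub_invExp hT (hcr j)).eventually_lt_const (by positivity)
  filter_upwards [hsmall] with K hK h
  obtain ⟨w, hw, hinv, hC, hdist⟩ := happrox h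
  have hfh : BddMeasurable fun y => f (T^[h] y) := hf.comp (hT.iterate h).measurable
  have hwr : BddMeasurable fun y => 𝔼 j ∈ range J, w j y * r j y :=
    .expect _ fun j _ => (hw j).mul (hr j)
  have hmodel : (fun y => c y * 𝔼 j ∈ range J, w j y * r j y) =
      fun y => 𝔼 j ∈ range J, w j y * (c y * r j y) := by
    simp only [mul_expect, mul_left_comm]
  have herror : lpNorm (fun y => c y * f (T^[h] y) - c y * 𝔼 j ∈ range J, w j y * r j y) 2 μ ≤
      D * (ε / (4 * (D + 1))) := by
    simp only [← mul_sub]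
    exact (lpNorm_mul_le_of_bound hD0 ((hfh.sub hwr).memLp 2) hD).trans
      (mul_le_mul_of_nonneg_left hdist hD0)
  have hdev := lpNorm_ergodicDeviation_expect_mul_le hT.measurable hcr hw hinv hC0 hC
    (by positivity) fun j hj => (hK j hj).le
  rw [← hmodel] at hdev
  have hD_le : D * (ε / (4 * (D + 1))) ≤ ε / 4 := by
    field_simp
    linarith
  have hC_le : C * (ε / (2 * (C + 1))) ≤ ε / 2 := by
    field_simp
    linarith
  linarith [lpNorm_ergodicDeviation_le_add hT K (hc.mul hfh) (hc.mul hwr)]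

end ErgodicDeviation

/-! ### The four-point form -/

section FourPointForm

variable {Y : Type*} [MeasurableSpace Y] [StandardBorelSpace Y]
  {μ : Measure Y} [IsFiniteMeasure μ] {T g : Y → Y} {a b c d : Y → ℝ}

/-- The integral of `a ⊗ b ⊗ c ⊗ d` against the relatively independent square of
`(relSquare μ T, T × T)` over its invariant factor. -/
noncomputable def fourPointForm (μ : Measure Y) [IsFiniteMeasure μ] (T : Y → Y)
    (a b c d : Y → ℝ) : ℝ :=
  ∫ p, (a p.1 * b p.2) * invExp (relSquare μ T) (Prod.map T T) (fun p => c p.1 * d p.2) p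
    ∂relSquare μ T

/-- The function representing `a ↦ fourPointForm μ T a b c d` as an integral against `a`. -/
noncomputable def fourPointDual (μ : Measure Y) [IsFiniteMeasure μ] (T : Y → Y)
    (b c d : Y → ℝ) : Y → ℝ :=
  fstExp μ T fun p =>
    b p.2 * invExp (relSquare μ T) (Prod.map T T) (fun p => c p.1 * d p.2) p

lemma BddMeasurable.fourPointDual (hb : BddMeasurable b) (hc : BddMeasurable c)
    (hd : BddMeasurable d) : BddMeasurable (fourPointDual μ T b c d) :=
  ((hb.comp measurable_snd).mul (hc.tensor hd).invExp).fstExp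

lemma fourPointForm_eq_integral_mul_dual (ha : BddMeasurable a) (hb : BddMeasurable b)
    (hc : BddMeasurable c) (hd : BddMeasurable d) :
    fourPointForm μ T a b c d = ∫ y, a y * fourPointDual μ T b c d y ∂μ := by
  simp only [fourPointForm, fourPointDual, mul_assoc]
  exact integral_relSquare_fst_mul ha ((hb.comp measurable_snd).mul (hc.tensor hd).invExp)

lemma fourPointForm_symm (ha : BddMeasurable a) (hb : BddMeasurable b) (hc : BddMeasurable c)
    (hd : BddMeasurable d) : fourPointForm μ T a b c d = fourPointForm μ T c d a b :=
  integral_mul_invExp_comm (ha.tensor hb) (hc.tensor hd)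

theorem tendsto_fourPointForm (hT : MeasurePreserving T μ μ) (ha : BddMeasurable a)
    (hb : BddMeasurable b) (hc : BddMeasurable c) (hd : BddMeasurable d) :
    Tendsto (fun N => 𝔼 h ∈ range N, ∫ y, (a y * c (T^[h] y)) *
        invExp μ T (fun y => b y * d (T^[h] y)) y ∂μ) atTop (𝓝 (fourPointForm μ T a b c d)) := by
  refine (tendsto_expect_integral_mul_iterate (measurePreserving_prodMap_self hT)
    (ha.tensor hb) (hc.tensor hd)).congr fun N => expect_congr rfl fun h _ => ?_
  have hTh := (hT.iterate h).measurable
  rw [← integral_relSquare_tensor (ha.mul (hc.comp hTh)) (hb.mul (hd.comp hTh))]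
  simp only [Prod.map_iterate, Prod.map_fst, Prod.map_snd, mul_mul_mul_comm]

lemma fourPointDual_iterate_ae_eq (hT : MeasurePreserving T μ μ) (hb : BddMeasurable b)
    (hc : BddMeasurable c) (hd : BddMeasurable d) (h : ℕ) :
    (fun y => fourPointDual μ T b c d (T^[h] y)) =ᵐ[μ]
      fourPointDual μ T (fun y => b (T^[h] y)) c d := by
  refine (fstExp_comp_prodMap_ae_eq hT ((IsSystemEndo.self hT).iterate h)
    ((hb.comp measurable_snd).mul (hc.tensor hd).invExp)).symm.trans (.of_eq ?_)
  simp only [fourPointDual, ← Prod.map_iterate, invExp_apply_iterate]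
  simp only [Prod.map_iterate, Prod.map_snd]

lemma fstExp_snd_mul_expect_tensor {ι : Type*} {s : Finset ι} {c d : ι → Y → ℝ}
    (hb : BddMeasurable b) (hc : ∀ j, BddMeasurable (c j)) (hd : ∀ j, BddMeasurable (d j))
    (y : Y) :
    fstExp μ T (fun p => b p.2 * 𝔼 j ∈ s, c j p.1 * d j p.2) y =
      𝔼 j ∈ s, invExp μ T (fun z => b z * d j z) y * c j y := by
  simp only [mul_expect, mul_left_comm (b _)]
  rw [fstExp_expect fun j _ => (hc j).tensor (hb.mul (hd j))]
  exact expect_congr rfl fun j _ => 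
    (fstExp_tensor (c j) (fun z => b z * d j z) y).trans (mul_comm _ _)

lemma lpNorm_fourPointDual_sub_expect_le (hT : Measurable T) (hb : BddMeasurable b)
    (hc : BddMeasurable c) (hd : BddMeasurable d) {B : ℝ} (hB0 : 0 ≤ B) (hB : ∀ y, |b y| ≤ B)
    (J : ℕ) :
    lpNorm (fun y => fourPointDual μ T b c d y -
        𝔼 j ∈ range J, invExp μ T (fun z => b z * d (T^[j] z)) y * c (T^[j] y)) 2 μ ≤
      B * lpNorm (ergodicDeviation (relSquare μ T) (Prod.map T T) J fun p => c p.1 * d p.2) 2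
        (relSquare μ T) := by
  have hcj (j : ℕ) : BddMeasurable fun y => c (T^[j] y) := hc.comp (hT.iterate j)
  have hdj (j : ℕ) : BddMeasurable fun y => d (T^[j] y) := hd.comp (hT.iterate j)
  have havg : BddMeasurable fun p : Y × Y => 𝔼 j ∈ range J, c (T^[j] p.1) * d (T^[j] p.2) :=
    .expect _ fun j _ => (hcj j).tensor (hdj j)
  have hlim : BddMeasurable (invExp (relSquare μ T) (Prod.map T T) fun p => c p.1 * d p.2) :=
    (hc.tensor hd).invExp
  have hbsnd : BddMeasurable fun p : Y × Y => b p.2 := hb.comp measurable_snd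
  have hdiff (y : Y) : fourPointDual μ T b c d y -
      𝔼 j ∈ range J, invExp μ T (fun z => b z * d (T^[j] z)) y * c (T^[j] y) =
      fstExp μ T (fun p => b p.2 *
        (invExp (relSquare μ T) (Prod.map T T) (fun p => c p.1 * d p.2) p -
          𝔼 j ∈ range J, c (T^[j] p.1) * d (T^[j] p.2))) y := by
    rw [← fstExp_snd_mul_expect_tensor hb hcj hdj]
    simp only [mul_sub]
    exact (fstExp_sub (hbsnd.mul hlim) (hbsnd.mul havg) y).symm
  rw [funext hdiff]
  refine (lpNorm_fstExp_le (hbsnd.mul (hlim.sub havg))).trans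
    ((lpNorm_mul_le_of_bound hB0 ((hlim.sub havg).memLp 2) fun p => hB p.2).trans_eq ?_)
  rw [lpNorm_fun_sub_comm]
  refine congrArg (B * lpNorm · 2 _) (funext fun p => ?_)
  simp only [ergodicDeviation, Prod.map_iterate, Prod.map_fst, Prod.map_snd]

theorem isRelAlmostPeriodic_fourPointDual (hT : MeasurePreserving T μ μ) (hb : BddMeasurable b)
    (hc : BddMeasurable c) (hd : BddMeasurable d) :
    IsRelAlmostPeriodic μ T (fourPointDual μ T b c d) := by
  intro ε hε
  obtain ⟨B, hB0, hB⟩ := hb.exists_nonneg_bound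
  obtain ⟨D, hD0, hD⟩ := hd.exists_nonneg_bound
  obtain ⟨J, hJ⟩ := ((tendsto_lpNorm_expect_iterate_sub_invExp (measurePreserving_prodMap_self hT)
    (hc.tensor hd)).eventually_lt_const (show 0 < ε / (B + 1) by positivity)).exists
  have hiter {f : Y → ℝ} (hf : BddMeasurable f) (n : ℕ) : BddMeasurable fun y => f (T^[n] y) :=
    hf.comp (hT.iterate n).measurable
  refine ⟨J, B * D, fun j y => c (T^[j] y), by positivity, hiter hc, fun h =>
    ⟨fun j => invExp μ T fun z => b (T^[h] z) * d (T^[j] z),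
      fun j => ((hiter hb h).mul (hiter hd j)).invExp, fun j => invExp_apply_map _,
      fun j => abs_invExp_le fun y => ?_, ?_⟩⟩
  · rw [abs_mul]
    exact mul_le_mul (hB _) (hD _) (abs_nonneg _) hB0
  · have hdual := fourPointDual_iterate_ae_eq hT hb hc hd h
    refine (lpNorm_congr_ae (hdual.sub (ae_eq_refl _))).trans_le ?_
    refine (lpNorm_fourPointDual_sub_expect_le hT.measurable (hiter hb h) hc hd hB0
      (fun y => hB _) J).trans ((mul_le_mul_of_nonneg_left hJ.le hB0).trans ?_)
    field_simp
    linarith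

lemma tendsto_expect_of_iterated {X Z : ℕ → ℝ} {α : ℕ → ℕ → ℝ} {x : ℝ}
    (hX : Tendsto (fun H => 𝔼 h ∈ range H, X h) atTop (𝓝 x))
    (hZ : ∀ k, Tendsto (fun H => 𝔼 h ∈ range H, α h k) atTop (𝓝 (Z k)))
    (hunif : ∀ ε > 0, ∀ᶠ K in atTop, ∀ h, |(𝔼 k ∈ range K, α h k) - X h| ≤ ε) :
    Tendsto (fun K => 𝔼 k ∈ range K, Z k) atTop (𝓝 x) := by
  refine Metric.nhds_basis_closedBall.tendsto_right_iff.2 fun ε hε => ?_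
  filter_upwards [hunif ε hε] with K hK
  have hlim : Tendsto (fun H => 𝔼 h ∈ range H, 𝔼 k ∈ range K, α h k) atTop
      (𝓝 (𝔼 k ∈ range K, Z k)) := by
    simp only [expect_comm _ (range K)]
    simp only [expect_eq_sum_div_card (range K)]
    exact (tendsto_finsetSum _ fun k _ => hZ k).div_const _
  refine le_of_tendsto' (hlim.dist hX) fun H => ?_
  rw [Real.dist_eq, ← expect_sub_distrib]
  exact abs_expect_le_of_nonneg hε.le fun h _ => hK h

theorem fourPointForm_swap_of_isRelAlmostPeriodic (hT : MeasurePreserving T μ μ)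
    (hap : IsRelAlmostPeriodic μ T a) (ha : BddMeasurable a) (hb : BddMeasurable b)
    (hc : BddMeasurable c) (hd : BddMeasurable d) :
    fourPointForm μ T a b c d = fourPointForm μ T a c b d := by
  have hiter {f : Y → ℝ} (hf : BddMeasurable f) (n : ℕ) : BddMeasurable fun y => f (T^[n] y) :=
    hf.comp (hT.iterate n).measurable
  have hlim {u v : Y → ℝ} (hu : BddMeasurable u) (hv : BddMeasurable v) :
      Tendsto (fun N => 𝔼 h ∈ range N, ∫ y, (d y * v (T^[h] y)) *
        invExp μ T (fun y => u y * a (T^[h] y)) y ∂μ) atTop (𝓝 (fourPointForm μ T a v u d)) := by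
    rw [fourPointForm_symm ha hv hu hd]
    refine (tendsto_fourPointForm hT hu hd ha hv).congr fun N => expect_congr rfl fun h _ => ?_
    exact integral_mul_invExp_comm (hu.mul (hiter ha h)) (hd.mul (hiter hv h))
  refine tendsto_nhds_unique_of_eventuallyEq (tendsto_expect_of_iterated (hlim hc hb)
    (α := fun h k => ∫ y, (d y * b (T^[h] y)) * (c (T^[k] y) * a (T^[h] (T^[k] y))) ∂μ)
    (fun k => ?_) fun ε hε => ?_) (hlim hb hc) .rfl
  · have hmean := tendsto_expect_integral_mul_iterate hT (hd.mul (hiter hc k))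
      (hb.mul (hiter ha k))
    refine hmean.congr fun N => expect_congr rfl fun h _ => ?_
    simp only [(Function.Commute.refl T).iterate_iterate h k _, mul_mul_mul_comm]
  · obtain ⟨D, hD0, hD⟩ := hd.exists_nonneg_bound
    have hb0 : 0 ≤ lpNorm b 2 μ := lpNorm_nonneg
    filter_upwards [hap.eventually_lpNorm_ergodicDeviation_le hT ha hc
      (show 0 < ε / (D * lpNorm b 2 μ + 1) by positivity)] with K hK h
    have hdb : lpNorm (fun y => d y * b (T^[h] y)) 2 μ ≤ D * lpNorm b 2 μ := by
      refine (lpNorm_mul_le_of_bound hD0 ((hiter hb h).memLp 2) hD).trans_eq ?_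
      rw [lpNorm_comp_measurePreserving (hT.iterate h) hb.measurable.aestronglyMeasurable]
    refine (abs_expect_integral_mul_iterate_sub_le hT.measurable K (hd.mul (hiter hb h))
      (hc.mul (hiter ha h))).trans ((mul_le_mul (hK h) hdb lpNorm_nonneg (by positivity)).trans ?_)
    field_simp
    linarith

theorem fourPointForm_swap (hT : MeasurePreserving T μ μ) (ha : BddMeasurable a)
    (hb : BddMeasurable b) (hc : BddMeasurable c) (hd : BddMeasurable d) :
    fourPointForm μ T a b c d = fourPointForm μ T a c b d := by
  have hbc : BddMeasurable (fourPointDual μ T b c d) := hb.fourPointDual hc hd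
  have hcb : BddMeasurable (fourPointDual μ T c b d) := hc.fourPointDual hb hd
  have hswap_bc := fourPointForm_swap_of_isRelAlmostPeriodic hT
    (isRelAlmostPeriodic_fourPointDual hT hb hc hd) hbc hb hc hd
  have hswap_cb := fourPointForm_swap_of_isRelAlmostPeriodic hT
    (isRelAlmostPeriodic_fourPointDual hT hc hb hd) hcb hb hc hd
  rw [fourPointForm_eq_integral_mul_dual hbc hb hc hd,
    fourPointForm_eq_integral_mul_dual hbc hc hb hd] at hswap_bc
  rw [fourPointForm_eq_integral_mul_dual hcb hb hc hd,
    fourPointForm_eq_integral_mul_dual hcb hc hb hd] at hswap_cb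
  have hdual : fourPointDual μ T b c d =ᵐ[μ] fourPointDual μ T c b d := by
    refine hbc.ae_eq_of_integral_mul hcb hswap_bc ?_
    simpa only [mul_comm] using hswap_cb.symm
  rw [fourPointForm_eq_integral_mul_dual ha hb hc hd,
    fourPointForm_eq_integral_mul_dual ha hc hb hd]
  exact integral_congr_ae ((ae_eq_refl a).mul hdual)

lemma FixesInvariants.fourPointForm_comp (hT : MeasurePreserving T μ μ)
    (hg : FixesInvariants μ T g) (ha : BddMeasurable a) (hb : BddMeasurable b)
    (hc : BddMeasurable c) (hd : BddMeasurable d) :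
    fourPointForm μ T a b (fun y => c (g y)) (fun y => d (g y)) = fourPointForm μ T a b c d := by
  have hcg : BddMeasurable fun y => c (g y) := hc.comp hg.measurable
  have hdg : BddMeasurable fun y => d (g y) := hd.comp hg.measurable
  rw [fourPointForm_swap hT ha hb hcg hdg, fourPointForm_swap hT ha hb hc hd]
  refine tendsto_nhds_unique (tendsto_fourPointForm hT ha hcg hb hdg)
    ((tendsto_fourPointForm hT ha hc hb hd).congr fun N => expect_congr rfl fun h _ => ?_)
  have hcd : BddMeasurable fun y => c y * d (T^[h] y) := hc.mul (hd.comp (hT.iterate h).measurable)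
  have hinv := (invExp_comp_endo_ae_eq hT hg.toIsSystemEndo hcd).trans (hg.invExp_ae_eq hcd)
  refine integral_congr_ae ?_
  filter_upwards [hinv] with y hy
  have hcomm (z : Y) : g (T^[h] z) = T^[h] (g z) := hg.comm.iterate_right h z
  simp only [hcomm]
  rw [hy]

theorem FixesInvariants.prodMap_self (hT : MeasurePreserving T μ μ)
    (hg : FixesInvariants μ T g) :
    FixesInvariants (relSquare μ T) (Prod.map T T) (Prod.map g g) := by
  have hgg := hg.toIsSystemEndo.prodMap_self hT
  have hTT := measurePreserving_prodMap_self (μ := μ) hT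
  refine ⟨hgg, fun Φ hΦ hinv => ?_⟩
  have hΦg : BddMeasurable fun p => Φ (Prod.map g g p) := hΦ.comp hgg.measurable
  have hinvg : (fun p => Φ (Prod.map g g (Prod.map T T p))) =ᵐ[relSquare μ T]
      fun p => Φ (Prod.map g g p) := by
    filter_upwards [hgg.measurePreserving.quasiMeasurePreserving.ae_eq_comp hinv] with p hp
    rw [hgg.comm p]
    exact hp
  refine ae_eq_of_integral_mul_tensor hΦg hΦ fun a b ha hb => ?_
  have hab := ha.tensor hb
  have hE := hab.invExp (μ := relSquare μ T) (T := Prod.map T T)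
  have hinvariance := (IsMonotoneClass.integral_mul_eq (κ := relSquare μ T) (η := relSquare μ T)
    hE hE hgg.measurable measurable_id).of_tensor (fun c d hc hd => ?_) hΦ
  · rw [← integral_mul_invExp_of_ae_invariant hTT hΦg.measurable (hΦg.memLp 2) hinvg hab,
      ← integral_mul_invExp_of_ae_invariant hTT hΦ.measurable (hΦ.memLp 2) hinv hab]
    simpa only [mul_comm, id] using hinvariance
  · have hform := hg.fourPointForm_comp hT ha hb hc hd
    rw [fourPointForm_symm ha hb (hc.comp hg.measurable) (hd.comp hg.measurable),
      fourPointForm_symm ha hb hc hd] at hform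
    simp only [mul_comm (invExp _ _ _ _)]
    exact hform

end FourPointForm

/-! ### Host–Kra cubes -/

section Box

variable {Y : Type*}

/-- The projection of the cube `Y^{[k]}` to its vertex `0`. -/
def boxBase : ∀ k, HKBox Y k → Y
  | 0 => id
  | k + 1 => fun w => boxBase k w.1

/-- The transformation of `Y^{[k]}` acting by `g^{k - |ε|}` on the coordinate at the vertex `ε`; it
is a product of face transformations. -/
def boxFace (g : Y → Y) : ∀ k, HKBox Y k → HKBox Y k
  | 0 => id
  | k + 1 => Prod.map (HKBox.map g k ∘ boxFace g k) (boxFace g k)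

variable {k : ℕ} {g h : Y → Y}

lemma boxMap_id (k : ℕ) : HKBox.map (id : Y → Y) k = id := by
  induction k with
  | zero => rfl
  | succ k ih => exact funext fun w => Prod.ext (congrFun ih w.1) (congrFun ih w.2)

lemma boxMap_comp (g h : Y → Y) (k : ℕ) : HKBox.map (g ∘ h) k = HKBox.map g k ∘ HKBox.map h k := by
  induction k with
  | zero => rfl
  | succ k ih => exact funext fun w => Prod.ext (congrFun ih w.1) (congrFun ih w.2)

lemma boxMap_iterate (g : Y → Y) (k n : ℕ) : HKBox.map g^[n] k = (HKBox.map g k)^[n] := by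
  induction n with
  | zero => exact boxMap_id k
  | succ n ih => rw [Function.iterate_succ, boxMap_comp, ih, Function.iterate_succ]

lemma boxMap_commute (hgh : Function.Commute g h) (k : ℕ) :
    Function.Commute (HKBox.map g k) (HKBox.map h k) := fun w => by
  have hcomp := congrArg (fun φ => HKBox.map φ k w) hgh.comp_eq
  simpa only [boxMap_comp, Function.comp_apply] using hcomp

lemma boxFace_commute_map (hgh : Function.Commute g h) (k : ℕ) :
    Function.Commute (boxFace g k) (HKBox.map h k) := by
  induction k with
  | zero => exact Function.Commute.id_left
  | succ k ih =>
    exact fun w => Prod.ext (((boxMap_commute hgh k).comp_left ih) w.1) (ih w.2)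

lemma boxBase_map (g : Y → Y) (k : ℕ) : Function.Semiconj (boxBase k) (HKBox.map g k) g := by
  induction k with
  | zero => exact fun _ => rfl
  | succ k ih => exact fun w => ih w.1

lemma boxBase_face (g : Y → Y) (k : ℕ) : Function.Semiconj (boxBase k) (boxFace g k) g^[k] := by
  induction k with
  | zero => exact fun _ => rfl
  | succ k ih =>
    intro w
    rw [Function.iterate_succ']
    exact (boxBase_map g k (boxFace g k w.1)).trans (congrArg g (ih w.1))

lemma prodFun_mul (a b : Y → ℝ) (w : HKBox Y k) :
    HKBox.prodFun (fun y => a y * b y) k w = HKBox.prodFun a k w * HKBox.prodFun b k w := by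
  induction k with
  | zero => rfl
  | succ k ih =>
    exact (congrArg₂ (· * ·) (ih w.1) (ih w.2)).trans (mul_mul_mul_comm _ _ _ _)

lemma prodFun_comp (a : Y → ℝ) (g : Y → Y) (w : HKBox Y k) :
    HKBox.prodFun (fun y => a (g y)) k w = HKBox.prodFun a k (HKBox.map g k w) := by
  induction k with
  | zero => rfl
  | succ k ih => exact congrArg₂ (· * ·) (ih w.1) (ih w.2)

end Box

section StarSigma

variable {Y : Type*} [MeasurableSpace Y]

/-- The σ-algebra on `Y^{[k]}` generated by the coordinates at the vertices other than `0`. -/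
@[reducible] def boxStar : ∀ k, MeasurableSpace (HKBox Y k)
  | 0 => ⊥
  | k + 1 => (boxStar k).prod (HKBox.instMS Y k)

lemma boxStar_le (k : ℕ) : boxStar k ≤ (inferInstance : MeasurableSpace (HKBox Y k)) := by
  induction k with
  | zero => exact bot_le
  | succ k ih => exact sup_le_sup (MeasurableSpace.comap_mono ih) le_rfl

instance [StandardBorelSpace Y] (k : ℕ) : StandardBorelSpace (HKBox Y k) := by
  induction k with
  | zero => assumption
  | succ k ih => exact inferInstanceAs (StandardBorelSpace (HKBox Y k × HKBox Y k))

lemma measurable_boxBase (k : ℕ) : Measurable (boxBase k : HKBox Y k → Y) := by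
  induction k with
  | zero => exact measurable_id
  | succ k ih => exact ih.comp measurable_fst

lemma BddMeasurable.prodFun {f : Y → ℝ} (hf : BddMeasurable f) (k : ℕ) :
    BddMeasurable (HKBox.prodFun f k) := by
  induction k with
  | zero => exact hf
  | succ k ih => exact ih.tensor ih

lemma exists_prodFun_eq_base_mul {f : Y → ℝ} (hf : BddMeasurable f) (k : ℕ) :
    ∃ G, BddMeasurable G ∧ Measurable[boxStar k] G ∧
      ∀ w, HKBox.prodFun f k w = f (boxBase k w) * G w := by
  induction k with
  | zero => exact ⟨fun _ => 1, .const 1, measurable_const, fun w => (mul_one (f w)).symm⟩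
  | succ k ih =>
    obtain ⟨G, hG, hGstar, hsplit⟩ := ih
    have hfst : Measurable[boxStar (k + 1)] fun p : HKBox Y k × HKBox Y k => G p.1 :=
      hGstar.comp (@measurable_fst _ _ (boxStar k) _)
    have hsnd : Measurable[boxStar (k + 1)]
        fun p : HKBox Y k × HKBox Y k => HKBox.prodFun f k p.2 :=
      (hf.prodFun k).measurable.comp (@measurable_snd _ _ (boxStar k) _)
    exact ⟨fun p => G p.1 * HKBox.prodFun f k p.2, hG.tensor (hf.prodFun k),
      Measurable.mul (m := boxStar (k + 1)) hfst hsnd, fun p =>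
      (congrArg (· * HKBox.prodFun f k p.2) (hsplit p.1)).trans (mul_assoc _ _ _)⟩

end StarSigma

section Measure

variable {Y : Type*} [MeasurableSpace Y] [StandardBorelSpace Y] {μ : ProbabilityMeasure Y}
  {T g : Y → Y}

/-- The Host–Kra measure `μ^{[k]}` on the cube `Y^{[k]}`. It is bundled as a probability measure
because the relative square of the previous stage needs a finite measure. -/
noncomputable def boxMeasure (μ : ProbabilityMeasure Y) (T : Y → Y) :
    ∀ k, ProbabilityMeasure (HKBox Y k)
  | 0 => μ
  | k + 1 => ⟨relSquare (boxMeasure μ T k : Measure (HKBox Y k)) (HKBox.map T k),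
    inferInstanceAs (IsProbabilityMeasure (relSquare _ _))⟩

lemma measurePreserving_boxBase (k : ℕ) :
    MeasurePreserving (boxBase k) (boxMeasure μ T k : Measure (HKBox Y k)) μ := by
  induction k with
  | zero => exact MeasurePreserving.id _
  | succ k ih => exact ih.comp measurePreserving_fst

lemma measurePreserving_boxMap (hT : MeasurePreserving T μ μ) (k : ℕ) :
    MeasurePreserving (HKBox.map T k) (boxMeasure μ T k : Measure (HKBox Y k))
      (boxMeasure μ T k) := by
  induction k with
  | zero => exact hT
  | succ k ih => exact measurePreserving_prodMap_self ih

lemma FixesInvariants.boxMap (hT : MeasurePreserving T μ μ) (hg : FixesInvariants μ T g) (k : ℕ) :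
    FixesInvariants (boxMeasure μ T k : Measure (HKBox Y k)) (HKBox.map T k) (HKBox.map g k) := by
  induction k with
  | zero => exact hg
  | succ k ih => exact ih.prodMap_self (measurePreserving_boxMap hT k)

lemma FixesInvariants.isSystemEndo_boxFace (hT : MeasurePreserving T μ μ)
    (hg : FixesInvariants μ T g) (k : ℕ) :
    IsSystemEndo (boxMeasure μ T k) (HKBox.map T k) (boxFace g k) := by
  refine ⟨?_, boxFace_commute_map hg.comm k⟩
  induction k with
  | zero => exact MeasurePreserving.id _
  | succ k ih =>
    have hface : IsSystemEndo (boxMeasure μ T k) (HKBox.map T k) (boxFace g k) :=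
      ⟨ih, boxFace_commute_map hg.comm k⟩
    exact (hg.boxMap hT k).measurePreserving_prodMap_id.comp
      (hface.prodMap_self (measurePreserving_boxMap hT k)).measurePreserving

end Measure

/-! ### Functions factoring along the orbits of the face transformations -/

section FaceOrbit

variable {Y : Type*} [MeasurableSpace Y] {k m : ℕ}

/-- `v` turns the face transformation of any `g` into a product over `m` steps of the diagonal
orbit of `g`: this converts an average of `v` along face transformations of the cube into a
multiple average for the diagonal transformation. -/
def IsFaceOrbitProduct (m : ℕ) (v : HKBox Y k → ℝ) : Prop :=
  ∃ H : ℕ → HKBox Y k → ℝ, (∀ i, BddMeasurable (H i)) ∧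
    ∀ (g : Y → Y) w, v (boxFace g k w) = ∏ i ∈ range m, H i ((HKBox.map g k)^[i] w)

namespace IsFaceOrbitProduct

lemma one : IsFaceOrbitProduct m fun _ : HKBox Y k => 1 :=
  ⟨fun _ _ => 1, fun _ => .const 1, fun _ _ => prod_const_one.symm⟩

lemma mul {u v : HKBox Y k → ℝ} (hu : IsFaceOrbitProduct m u) (hv : IsFaceOrbitProduct m v) :
    IsFaceOrbitProduct m fun w => u w * v w := by
  obtain ⟨H, hH, hprod⟩ := hu
  obtain ⟨H', hH', hprod'⟩ := hv
  exact ⟨fun i w => H i w * H' i w, fun i => (hH i).mul (hH' i), fun g w => by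
    simp only [hprod, hprod', prod_mul_distrib]⟩

lemma succ {v : HKBox Y k → ℝ} (hv : IsFaceOrbitProduct m v) : IsFaceOrbitProduct (m + 1) v := by
  obtain ⟨H, hH, hprod⟩ := hv
  refine ⟨fun i => if i < m then H i else fun _ => 1, fun i => ?_, fun g w => ?_⟩
  · dsimp only
    split_ifs
    exacts [hH i, .const 1]
  · simp only [hprod, prod_range_succ, lt_self_iff_false, if_false, mul_one]
    exact prod_congr rfl fun i hi => by rw [if_pos (mem_range.1 hi)]

lemma tensor {u v : HKBox Y k → ℝ} (hu : IsFaceOrbitProduct m u)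
    (hv : IsFaceOrbitProduct (m + 1) v) :
    IsFaceOrbitProduct (k := k + 1) (m + 1) fun p => u p.1 * v p.2 := by
  obtain ⟨H, hH, hprod⟩ := hu
  obtain ⟨H', hH', hprod'⟩ := hv
  refine ⟨fun i p => Nat.casesOn (motive := fun _ => ℝ) i 1 (fun j => H j p.1) * H' i p.2,
    fun i => ?_, fun g w => ?_⟩
  · refine BddMeasurable.mul ?_ ((hH' i).comp measurable_snd)
    cases i with
    | zero => exact .const 1
    | succ j => exact (hH j).comp measurable_fst
  · have hfst : u (boxFace g (k + 1) w).1 =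
        ∏ i ∈ range m, H i ((HKBox.map g k)^[i + 1] w.1) :=
      (congrArg u (boxFace_commute_map (Function.Commute.refl g) k w.1).symm).trans (hprod g _)
    have hmap : ∀ i, (HKBox.map g (k + 1))^[i] w =
        ((HKBox.map g k)^[i] w.1, (HKBox.map g k)^[i] w.2) := fun i =>
      congrFun (Prod.map_iterate _ _ i) w
    simp only [hfst, hmap, prod_mul_distrib]
    exact congrArg₂ (· * ·) ((prod_range_succ' _ m).trans (mul_one _)).symm (hprod' g w.2)

lemma comp_fst {u : HKBox Y k → ℝ} (hu : IsFaceOrbitProduct m u) :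
    IsFaceOrbitProduct (k := k + 1) (m + 1) fun p => u p.1 := by
  simpa only [mul_one] using hu.tensor .one

lemma comp_snd {v : HKBox Y k → ℝ} (hv : IsFaceOrbitProduct (m + 1) v) :
    IsFaceOrbitProduct (k := k + 1) (m + 1) fun p => v p.2 := by
  simpa only [one_mul] using one.tensor hv

end IsFaceOrbitProduct

/-- The sets, measurable for a given σ-algebra on the cube, whose indicator functions are face orbit
products of length `m`. -/
def faceOrbitSets (𝓜 : MeasurableSpace (HKBox Y k)) (m : ℕ) : Set (Set (HKBox Y k)) :=
  {s | MeasurableSet[𝓜] s ∧ IsFaceOrbitProduct m (s.indicator fun _ => 1)}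

lemma isPiSystem_faceOrbitSets (𝓜 : MeasurableSpace (HKBox Y k)) (m : ℕ) :
    IsPiSystem (faceOrbitSets 𝓜 m) := by
  rintro s ⟨hs, hs'⟩ t ⟨ht, ht'⟩ -
  refine ⟨hs.inter ht, ?_⟩
  have hinter := hs'.mul ht'
  simpa only [← Set.inter_indicator_mul, mul_one] using hinter

lemma generateFrom_faceOrbitSets_le (𝓜 : MeasurableSpace (HKBox Y k)) (m : ℕ) :
    MeasurableSpace.generateFrom (faceOrbitSets 𝓜 m) ≤ 𝓜 :=
  MeasurableSpace.generateFrom_le fun _ hs => hs.1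

lemma generateFrom_faceOrbitSets_mono {𝓜 : MeasurableSpace (HKBox Y k)}
    (h : MeasurableSpace.generateFrom (faceOrbitSets 𝓜 m) = 𝓜) :
    MeasurableSpace.generateFrom (faceOrbitSets 𝓜 (m + 1)) = 𝓜 :=
  (generateFrom_faceOrbitSets_le _ _).antisymm <| h.ge.trans <|
    MeasurableSpace.generateFrom_mono fun _ hs => ⟨hs.1, hs.2.succ⟩

lemma generateFrom_faceOrbitSets_succ {𝓜 : MeasurableSpace (HKBox Y k)}
    (hfst : MeasurableSpace.generateFrom (faceOrbitSets 𝓜 m) = 𝓜)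
    (hsnd : MeasurableSpace.generateFrom
      (faceOrbitSets (HKBox.instMS Y k) (m + 1)) = HKBox.instMS Y k) :
    MeasurableSpace.generateFrom (faceOrbitSets (k := k + 1)
      (𝓜.prod (HKBox.instMS Y k)) (m + 1)) = 𝓜.prod (HKBox.instMS Y k) := by
  refine (generateFrom_faceOrbitSets_le _ _).antisymm (sup_le ?_ ?_)
  · have hcomap : 𝓜.comap (Prod.fst : HKBox Y k × HKBox Y k → _) =
        .generateFrom (Set.preimage Prod.fst '' faceOrbitSets 𝓜 m) := by
      rw [← MeasurableSpace.comap_generateFrom, hfst]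
    refine hcomap.le.trans (MeasurableSpace.generateFrom_mono ?_)
    rintro _ ⟨s, ⟨hs, hind⟩, rfl⟩
    refine ⟨(le_sup_left : 𝓜.comap Prod.fst ≤ _) _ ⟨s, hs, rfl⟩, ?_⟩
    exact hind.comp_fst
  · have hcomap : (HKBox.instMS Y k).comap (Prod.snd : HKBox Y k × HKBox Y k → _) =
        .generateFrom (Set.preimage Prod.snd '' faceOrbitSets (HKBox.instMS Y k) (m + 1)) := by
      rw [← MeasurableSpace.comap_generateFrom, hsnd]
    refine hcomap.le.trans (MeasurableSpace.generateFrom_mono ?_)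
    rintro _ ⟨s, ⟨hs, hind⟩, rfl⟩
    refine ⟨(le_sup_right : (HKBox.instMS Y k).comap Prod.snd ≤ _) _ ⟨s, hs, rfl⟩, ?_⟩
    exact hind.comp_snd

theorem generateFrom_faceOrbitSets_eq (k : ℕ) :
    MeasurableSpace.generateFrom
      (faceOrbitSets (HKBox.instMS Y k) (k + 1)) = HKBox.instMS Y k := by
  induction k with
  | zero =>
    refine (generateFrom_faceOrbitSets_le _ _).antisymm fun s hs =>
      MeasurableSpace.measurableSet_generateFrom ⟨hs, fun _ => s.indicator fun _ => 1,
        fun _ => (BddMeasurable.const 1).indicator hs, fun g w => ?_⟩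
    exact (prod_range_one fun i => s.indicator (fun _ => (1 : ℝ)) ((HKBox.map g 0)^[i] w)).symm
  | succ k ih => exact generateFrom_faceOrbitSets_succ ih (generateFrom_faceOrbitSets_mono ih)

theorem generateFrom_faceOrbitSets_boxStar (k : ℕ) :
    MeasurableSpace.generateFrom (faceOrbitSets (boxStar k) k) =
      (boxStar k : MeasurableSpace (HKBox Y k)) := by
  induction k with
  | zero => exact le_antisymm (generateFrom_faceOrbitSets_le _ _) bot_le
  | succ k ih => exact generateFrom_faceOrbitSets_succ ih (generateFrom_faceOrbitSets_eq k)

end FaceOrbit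

/-! ### The characteristic factor of a cube -/

section CondExp

variable {Y : Type*} {m m0 : MeasurableSpace Y} {μ : Measure Y} [IsFiniteMeasure μ] {f g : Y → ℝ}

lemma aestronglyMeasurable_of_tendsto_lpNorm (hm : m ≤ m0) {F : ℕ → Y → ℝ}
    (hF : ∀ n, BddMeasurable (F n)) (hg : BddMeasurable g)
    (hstar : ∀ n, AEStronglyMeasurable[m] (F n) μ)
    (hlim : Tendsto (fun n => lpNorm (fun y => F n y - g y) 2 μ) atTop (𝓝 0)) :
    AEStronglyMeasurable[m] g μ := by
  have htoLp : Tendsto (fun n => ((hF n).memLp 2).toLp (F n)) atTop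
      (𝓝 ((hg.memLp (μ := μ) 2).toLp g)) := by
    rw [tendsto_iff_norm_sub_tendsto_zero]
    refine hlim.congr fun n => ?_
    rw [← MemLp.toLp_sub, ← lpNorm_eq_norm_toLp]
    rfl
  have hmem := (isClosed_aestronglyMeasurable (F := ℝ) (p := 2) (μ := μ) hm).mem_of_tendsto htoLp
    (.of_forall fun n => (hstar n).congr ((hF n).memLp 2).coeFn_toLp.symm)
  exact AEStronglyMeasurable.congr hmem (hg.memLp 2).coeFn_toLp

lemma BddMeasurable.exists_condExp (hm : m ≤ m0) (hf : BddMeasurable f) :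
    ∃ K, BddMeasurable K ∧ Measurable[m] K ∧ ∀ v, BddMeasurable v → AEStronglyMeasurable[m] v μ →
      ∫ y, v y * K y ∂μ = ∫ y, v y * f y ∂μ := by
  obtain ⟨C, hC0, hC⟩ := hf.exists_nonneg_bound
  have hKm : Measurable[m] fun y => max (-C) (min C ((μ[f | m]) y)) :=
    measurable_const.max (measurable_const.min stronglyMeasurable_condExp.measurable)
  refine ⟨_, ⟨hKm.mono hm le_rfl, C, fun y => abs_le.2 ⟨le_max_left _ _,
    max_le (neg_le_self hC0) (min_le_left _ _)⟩⟩, hKm, fun v hv hvm => ?_⟩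
  have hbound : ∀ᵐ y ∂μ, |(μ[f | m]) y| ≤ C :=
    ae_bdd_abs_condExp_of_ae_bdd_abs (.of_forall hC)
  have hpull := condExp_mul_of_aestronglyMeasurable_left hvm (hv.mul hf).integrable hf.integrable
  rw [← integral_condExp hm (f := fun y => v y * f y)]
  refine integral_congr_ae ?_
  filter_upwards [hbound, hpull] with y hy hpully
  rw [min_eq_right (abs_le.1 hy).2, max_eq_right (abs_le.1 hy).1]
  exact hpully.symm

end CondExp

section Star

variable {Y : Type*} [MeasurableSpace Y] {k : ℕ}

variable [StandardBorelSpace Y] {μ : ProbabilityMeasure Y} {T : Y → Y}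

/-- The endomorphisms of the cube system that preserve the σ-algebra of the vertices other
than `0`. -/
structure IsStarEndo (μ : ProbabilityMeasure Y) (T : Y → Y) (k : ℕ) (σ : HKBox Y k → HKBox Y k) :
    Prop extends IsSystemEndo (boxMeasure μ T k) (HKBox.map T k) σ where
  measurable_star : Measurable[boxStar k, boxStar k] σ

lemma IsStarEndo.prodMap_self (hT : MeasurePreserving T μ μ) {σ : HKBox Y k → HKBox Y k}
    (hσ : IsStarEndo μ T k σ) : IsStarEndo μ T (k + 1) (Prod.map σ σ) where
  toIsSystemEndo := hσ.toIsSystemEndo.prodMap_self (measurePreserving_boxMap hT k)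
  measurable_star := Measurable.prodMap (m := boxStar k) (mβ := boxStar k)
    hσ.measurable_star hσ.measurable

lemma isStarEndo_id_prodMap (hT : MeasurePreserving T μ μ) (k : ℕ) :
    IsStarEndo μ T (k + 1) (Prod.map id (HKBox.map T k)) where
  measurePreserving := measurePreserving_id_prodMap (measurePreserving_boxMap hT k)
  comm _ := rfl
  measurable_star := Measurable.prodMap (m := boxStar k) (mβ := boxStar k)
    (@measurable_id _ (boxStar k)) (measurePreserving_boxMap hT k).measurable

lemma IsStarEndo.iterate {σ : HKBox Y k → HKBox Y k} (hσ : IsStarEndo μ T k σ) (n : ℕ) :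
    IsStarEndo μ T k σ^[n] where
  toIsSystemEndo := hσ.toIsSystemEndo.iterate n
  measurable_star := @Measurable.iterate _ (boxStar k) _ hσ.measurable_star n

/-- The closure properties through which a property of functions on a cube descends to their
projections onto the vertex `0`. -/
structure IsStarClosed (μ : ProbabilityMeasure Y) (T : Y → Y) (k : ℕ)
    (V : (HKBox Y k → ℝ) → Prop) : Prop where
  expect {F : ℕ → HKBox Y k → ℝ} (N : ℕ) : (∀ n, V (F n)) → V fun w => 𝔼 n ∈ range N, F n w
  lim {F : ℕ → HKBox Y k → ℝ} {G : HKBox Y k → ℝ} : (∀ n, BddMeasurable (F n)) →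
    BddMeasurable G → (∀ n, V (F n)) →
    Tendsto (fun n => lpNorm (fun w => F n w - G w) 2 (boxMeasure μ T k)) atTop (𝓝 0) → V G
  comp {F : HKBox Y k → ℝ} {σ : HKBox Y k → HKBox Y k} : V F → IsStarEndo μ T k σ →
    V fun w => F (σ w)

lemma isStarClosed_aestronglyMeasurable (μ : ProbabilityMeasure Y) (T : Y → Y) (k : ℕ) :
    IsStarClosed μ T k fun F => AEStronglyMeasurable[boxStar k] F (boxMeasure μ T k) where
  expect {F} N hF := by
    have hsum : AEStronglyMeasurable[boxStar k] (fun w => ∑ n ∈ range N, F n w)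
        (boxMeasure μ T k) := by
      induction N with
      | zero => exact aestronglyMeasurable_const
      | succ N ih =>
        simp only [sum_range_succ]
        exact ih.add (hF N)
    simpa only [expect_eq_sum_div_card, div_eq_mul_inv] using hsum.mul_const _
  lim hF hG hstar hlim := aestronglyMeasurable_of_tendsto_lpNorm (boxStar_le k) hF hG hstar hlim
  comp hF hσ := ⟨fun w => hF.mk _ _, hF.stronglyMeasurable_mk.comp_measurable hσ.measurable_star,
    hσ.measurePreserving.quasiMeasurePreserving.ae_eq_comp hF.ae_eq_mk⟩

lemma IsStarClosed.comp_fst (hT : MeasurePreserving T μ μ) {V : (HKBox Y (k + 1) → ℝ) → Prop}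
    (hV : IsStarClosed μ T (k + 1) V) : IsStarClosed μ T k fun G => V fun p => G p.1 where
  expect N hF := hV.expect N hF
  lim hF hG hVF hlim := by
    refine hV.lim (fun n => (hF n).comp measurable_fst) (hG.comp measurable_fst) hVF
      (hlim.congr fun n => ?_)
    exact (lpNorm_comp_measurePreserving measurePreserving_fst
      ((hF n).sub hG).measurable.aestronglyMeasurable).symm
  comp hF hσ := hV.comp hF (hσ.prodMap_self hT)

lemma IsStarClosed.fstExp (hT : MeasurePreserving T μ μ) {V : (HKBox Y (k + 1) → ℝ) → Prop}
    (hV : IsStarClosed μ T (k + 1) V) {F : HKBox Y (k + 1) → ℝ} (hF : BddMeasurable F) (hVF : V F) :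
    V fun p => HostKra.fstExp (boxMeasure μ T k) (HKBox.map T k) F p.1 := by
  have hmap := measurePreserving_boxMap hT k
  refine hV.lim (F := fun N p => 𝔼 n ∈ range N, F ((Prod.map id (HKBox.map T k))^[n] p))
    (fun N => .expect _ fun n _ => hF.comp
      ((measurePreserving_id_prodMap hmap).iterate n).measurable)
    (hF.fstExp.comp measurable_fst)
    (fun N => hV.expect N fun n => hV.comp hVF ((isStarEndo_id_prodMap hT k).iterate n)) ?_
  refine (tendsto_lpNorm_expect_iterate_sub_invExp
    (measurePreserving_id_prodMap hmap) hF).congr fun N => lpNorm_congr_ae ?_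
  filter_upwards [invExp_id_prodMap_ae_eq hmap hF] with p hp
  rw [hp]

theorem exists_boxBase_projection (hT : MeasurePreserving T μ μ) {F : HKBox Y k → ℝ}
    (hF : BddMeasurable F) :
    ∃ F₀, BddMeasurable F₀ ∧
      (∀ f, BddMeasurable f → ∫ w, f (boxBase k w) * F w ∂(boxMeasure μ T k) =
        ∫ y, f y * F₀ y ∂μ) ∧
      ∀ V, IsStarClosed μ T k V → V F → V fun w => F₀ (boxBase k w) := by
  induction k with
  | zero => exact ⟨F, hF, fun _ _ => rfl, fun _ _ h => h⟩
  | succ k ih =>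
    obtain ⟨F₀, hF₀, hint, hclosed⟩ :=
      ih (hF.fstExp (μ := (boxMeasure μ T k : Measure (HKBox Y k))) (T := HKBox.map T k))
    refine ⟨F₀, hF₀, fun f hf => ?_, fun V hV hVF =>
      hclosed _ (hV.comp_fst hT) (hV.fstExp hT hF hVF)⟩
    rw [← hint f hf]
    exact integral_relSquare_fst_mul (hf.comp (measurable_boxBase k)) hF

theorem exists_ae_eq_boxBase_condExp (hT : MeasurePreserving T μ μ) {f : Y → ℝ}
    (hf : BddMeasurable f) (k : ℕ) :
    ∃ d K, BddMeasurable d ∧ @BddMeasurable _ (boxStar k) K ∧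
      (fun w => d (boxBase k w)) =ᵐ[(boxMeasure μ T k : Measure (HKBox Y k))] K ∧
      ∀ G, BddMeasurable G → Measurable[boxStar k] G →
        ∫ w, G w * d (boxBase k w) ∂(boxMeasure μ T k) =
          ∫ w, G w * f (boxBase k w) ∂(boxMeasure μ T k) := by
  have hbase := measurePreserving_boxBase (μ := μ) (T := T) k
  obtain ⟨K, hK, hKstar, hKint⟩ :=
    (hf.comp hbase.measurable).exists_condExp (μ := boxMeasure μ T k) (boxStar_le k)
  obtain ⟨d, hd, hdint, hdclosed⟩ := exists_boxBase_projection hT hK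
  have hdb := hd.comp hbase.measurable
  have hKae : AEStronglyMeasurable[boxStar k] K (boxMeasure μ T k) :=
    hKstar.stronglyMeasurable.aestronglyMeasurable
  have hdstar : AEStronglyMeasurable[boxStar k] (fun w => d (boxBase k w)) (boxMeasure μ T k) :=
    hdclosed _ (isStarClosed_aestronglyMeasurable μ T k) hKae
  have hcomp {u v : Y → ℝ} (hu : BddMeasurable u) (hv : BddMeasurable v) :
      ∫ w, u (boxBase k w) * v (boxBase k w) ∂(boxMeasure μ T k) = ∫ y, u y * v y ∂μ :=
    integral_comp_measurePreserving hbase (hu.mul hv).measurable.aestronglyMeasurable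
  have hinner : ∫ w, K w * d (boxBase k w) ∂(boxMeasure μ T k) = ∫ y, d y * d y ∂μ := by
    simp only [mul_comm (K _)]
    exact hdint d hd
  have hKd : K =ᵐ[(boxMeasure μ T k : Measure (HKBox Y k))] fun w => d (boxBase k w) := by
    refine hK.ae_eq_of_integral_mul hdb ?_ ((hcomp hd hd).trans hinner.symm)
    calc ∫ w, K w * K w ∂(boxMeasure μ T k)
        = ∫ w, K w * f (boxBase k w) ∂(boxMeasure μ T k) := hKint K hK hKae
      _ = ∫ y, d y * f y ∂μ := by simpa only [mul_comm] using hdint f hf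
      _ = ∫ w, d (boxBase k w) * f (boxBase k w) ∂(boxMeasure μ T k) := (hcomp hd hf).symm
      _ = ∫ w, d (boxBase k w) * K w ∂(boxMeasure μ T k) := (hKint _ hdb hdstar).symm
      _ = ∫ w, K w * d (boxBase k w) ∂(boxMeasure μ T k) := by simp only [mul_comm]
  refine ⟨d, K, hd, @BddMeasurable.mk _ (boxStar k) K hKstar hK.bdd, hKd.symm,
    fun G hG hGstar => ?_⟩
  rw [← hKint G hG hGstar.stronglyMeasurable.aestronglyMeasurable]
  exact integral_congr_ae (hKd.mono fun w hw => congrArg (G w * ·) hw.symm)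

theorem exists_star_approximation (hT : MeasurePreserving T μ μ) {f : Y → ℝ}
    (hf : BddMeasurable f) (k : ℕ) :
    ∃ d K, BddMeasurable d ∧ @BddMeasurable _ (boxStar k) K ∧
      (fun w => d (boxBase k w)) =ᵐ[(boxMeasure μ T k : Measure (HKBox Y k))] K ∧
      ∫ w, HKBox.prodFun (fun y => f y - d y) k w ∂(boxMeasure μ T k) = 0 := by
  obtain ⟨d, K, hd, hK, hdK, hint⟩ := exists_ae_eq_boxBase_condExp (μ := μ) hT hf k
  refine ⟨d, K, hd, hK, hdK, ?_⟩
  obtain ⟨G, hG, hGstar, hsplit⟩ := exists_prodFun_eq_base_mul (hf.sub hd) k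
  have hbase {u : Y → ℝ} (hu : BddMeasurable u) :
      Integrable (fun w => G w * u (boxBase k w)) (boxMeasure μ T k : Measure (HKBox Y k)) :=
    (hG.mul (hu.comp (measurable_boxBase k))).integrable
  calc ∫ w, HKBox.prodFun (fun y => f y - d y) k w ∂(boxMeasure μ T k)
      = ∫ w, (G w * f (boxBase k w) - G w * d (boxBase k w)) ∂(boxMeasure μ T k) := by
        refine congrArg (integral _) (funext fun w => ?_)
        rw [hsplit w]
        ring
    _ = 0 := by rw [integral_sub (hbase hf) (hbase hd), hint G hG hGstar, sub_self]

end Star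

/-! ### Van der Corput's inequality -/

section Averages

variable {b u : ℕ → ℝ}

lemma sum_comp_le_sum_range (hb : ∀ k, 0 ≤ b k) {s : Finset ℕ} {H : ℕ} {e : ℕ → ℕ}
    (he : Set.InjOn e s) (hlt : ∀ i ∈ s, e i < H) : ∑ i ∈ s, b (e i) ≤ ∑ k ∈ range H, b k := by
  rw [← sum_image he]
  refine sum_le_sum_of_subset_of_nonneg (image_subset_iff.2 fun i hi => ?_) fun k _ _ => hb k
  exact mem_range.2 (hlt i hi)

lemma sum_dist_le (hb : ∀ k, 0 ≤ b k) {H h : ℕ} (hh : h < H) :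
    ∑ h' ∈ range H, b (h.dist h') ≤ 2 * ∑ k ∈ range H, b k := by
  rw [← sum_filter_add_sum_filter_not (range H) (· ≤ h), two_mul]
  -- On either side of `h` the distance to `h` is injective.
  refine add_le_add (sum_comp_le_sum_range hb ?_ ?_) (sum_comp_le_sum_range hb ?_ ?_) <;>
    simp only [Set.InjOn, coe_filter, Set.mem_ofPred_eq, mem_filter, mem_range, Nat.dist] <;> omega

lemma expect_expect_dist_le (hb : ∀ k, 0 ≤ b k) (H : ℕ) :
    𝔼 h ∈ range H, 𝔼 h' ∈ range H, b (h.dist h') ≤ 2 * 𝔼 k ∈ range H, b k := by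
  refine expect_le_of_nonneg (mul_nonneg zero_le_two (expect_nonneg fun k _ => hb k))
    fun h hh => ?_
  rw [expect_eq_sum_div_card, expect_eq_sum_div_card, ← mul_div_assoc]
  gcongr
  exact sum_dist_le hb (mem_range.1 hh)

lemma expect_range_mul_le (hb : ∀ k, 0 ≤ b k) (H : ℕ) {m : ℕ} (hm : 0 < m) :
    𝔼 k ∈ range H, b (k * m) ≤ m * 𝔼 k ∈ range (H * m), b k := by
  have hm' : (m : ℝ) ≠ 0 := by positivity
  simp only [expect_eq_sum_div_card, card_range, Nat.cast_mul]
  rw [mul_comm (H : ℝ), mul_div, mul_div_mul_left _ _ hm']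
  gcongr
  exact sum_comp_le_sum_range hb (fun _ _ _ _ h => Nat.eq_of_mul_eq_mul_right hm h)
    fun k hk => Nat.mul_lt_mul_of_pos_right (mem_range.1 hk) hm

lemma abs_expect_range_sub_expect_range_add_le {B : ℝ} (hB : ∀ n, |u n| ≤ B) (N h : ℕ) :
    |(𝔼 n ∈ range N, u n) - 𝔼 n ∈ range N, u (n + h)| ≤ 2 * h * B / N := by
  have hblock (v : ℕ → ℝ) (hv : ∀ n, |v n| ≤ B) : |∑ n ∈ range h, v n| ≤ h * B :=
    (abs_sum_le_sum_abs _ _).trans <| by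
      simpa using sum_le_card_nsmul (range h) _ B fun n _ => hv n
  have hshift : ∑ n ∈ range N, u n - ∑ n ∈ range N, u (n + h) =
      ∑ n ∈ range h, u n - ∑ n ∈ range h, u (N + n) := by
    have hsplit := (sum_range_add u N h).symm.trans
      ((congrArg (fun M => ∑ n ∈ range M, u n) (add_comm N h)).trans (sum_range_add u h N))
    simp only [add_comm h] at hsplit
    linarith
  simp only [expect_eq_sum_div_card, card_range]
  rw [← sub_div, hshift, abs_div, Nat.abs_cast]
  gcongr
  linarith [abs_sub (∑ n ∈ range h, u n) (∑ n ∈ range h, u (N + n)), hblock u hB,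
    hblock _ fun n => hB (N + n)]

end Averages

section VanDerCorput

variable {Y : Type*} [MeasurableSpace Y] {μ : Measure Y} [IsProbabilityMeasure μ]
  {v : ℕ → Y → ℝ}

lemma lpNorm_expect_sub_expect_expect_le {B : ℝ} (hB : ∀ n y, |v n y| ≤ B) {N H : ℕ}
    (hH : 0 < H) :
    lpNorm (fun y => (𝔼 n ∈ range N, v n y) - 𝔼 n ∈ range N, 𝔼 h ∈ range H, v (n + h) y) 2 μ ≤
      2 * H * B / N := by
  refine lpNorm_le_of_bound two_ne_zero fun y => ?_
  have hB0 : 0 ≤ B := (abs_nonneg _).trans (hB 0 y)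
  rw [expect_comm, ← expect_range_const hH (𝔼 n ∈ range N, v n y), ← expect_sub_distrib]
  refine abs_expect_le_of_nonneg (by positivity) fun h hh =>
    (abs_expect_range_sub_expect_range_add_le (hB · y) N h).trans ?_
  gcongr
  exact (mem_range.1 hh).le

lemma lpNorm_expect_expect_sq_le (hv : ∀ n, BddMeasurable (v n)) (N H : ℕ) :
    lpNorm (fun y => 𝔼 n ∈ range N, 𝔼 h ∈ range H, v (n + h) y) 2 μ ^ 2 ≤
      𝔼 h ∈ range H, 𝔼 h' ∈ range H, 𝔼 n ∈ range N, ∫ y, v (n + h) y * v (n + h') y ∂μ := by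
  have hinner (n : ℕ) : BddMeasurable fun y => 𝔼 h ∈ range H, v (n + h) y :=
    .expect _ fun h _ => hv _
  have hdouble : BddMeasurable fun y => 𝔼 n ∈ range N, 𝔼 h ∈ range H, v (n + h) y :=
    .expect _ fun n _ => hinner n
  have hsquare (y : Y) : (𝔼 n ∈ range N, 𝔼 h ∈ range H, v (n + h) y) *
      (𝔼 n ∈ range N, 𝔼 h ∈ range H, v (n + h) y) ≤
      𝔼 n ∈ range N, (𝔼 h ∈ range H, v (n + h) y) * 𝔼 h ∈ range H, v (n + h) y := by
    simpa only [expect_eq_sum_div_card, sq] using sum_div_card_sq_le_sum_sq_div_card (s := range N)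
      (f := fun n => 𝔼 h ∈ range H, v (n + h) y)
  rw [lpNorm_two_sq (hdouble.memLp 2)]
  calc _ ≤ ∫ y, 𝔼 n ∈ range N, (𝔼 h ∈ range H, v (n + h) y) * 𝔼 h ∈ range H, v (n + h) y ∂μ :=
        integral_mono (hdouble.mul hdouble).integrable
          (BddMeasurable.expect _ fun n _ => (hinner n).mul (hinner n)).integrable hsquare
    _ = 𝔼 n ∈ range N, 𝔼 h ∈ range H, 𝔼 h' ∈ range H, ∫ y, v (n + h) y * v (n + h') y ∂μ := by
        rw [integral_expect fun n _ => (hinner n).mul (hinner n)]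
        refine expect_congr rfl fun n _ => ?_
        simp only [expect_mul_expect]
        rw [integral_expect fun h _ => .expect _ fun h' _ => (hv _).mul (hv _)]
        exact expect_congr rfl fun h _ => integral_expect fun h' _ => (hv _).mul (hv _)
    _ = _ := by
        rw [expect_comm]
        exact expect_congr rfl fun h _ => expect_comm _ _ _

theorem lpNorm_expect_le_of_correlation (hv : ∀ n, BddMeasurable (v n)) {B : ℝ}
    (hB : ∀ n y, |v n y| ≤ B) {N H : ℕ} (hH : 0 < H) {b : ℕ → ℝ} (hb : ∀ k, 0 ≤ b k)
    (hcorr : ∀ h k, h + k < H → 𝔼 n ∈ range N, ∫ y, v (n + h) y * v (n + (h + k)) y ∂μ ≤ b k) :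
    lpNorm (fun y => 𝔼 n ∈ range N, v n y) 2 μ ≤
      2 * H * B / N + √(2 * 𝔼 k ∈ range H, b k) := by
  have hpair (h h' : ℕ) (hh : h < H) (hh' : h' < H) :
      𝔼 n ∈ range N, ∫ y, v (n + h) y * v (n + h') y ∂μ ≤ b (h.dist h') := by
    obtain ⟨k, rfl⟩ | ⟨k, rfl⟩ := (le_total h h').imp Nat.exists_eq_add_of_le
      Nat.exists_eq_add_of_le
    · simpa [Nat.dist] using hcorr h k hh'
    · simpa [Nat.dist, mul_comm (v (_ + (h' + k)) _)] using hcorr h' k hh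
  have hsmooth : lpNorm (fun y => 𝔼 n ∈ range N, 𝔼 h ∈ range H, v (n + h) y) 2 μ ≤
      √(2 * 𝔼 k ∈ range H, b k) := by
    refine Real.le_sqrt_of_sq_le ((lpNorm_expect_expect_sq_le hv N H).trans
      (le_trans ?_ (expect_expect_dist_le hb H)))
    exact expect_le_expect fun h hh => expect_le_expect fun h' hh' =>
      hpair h h' (mem_range.1 hh) (mem_range.1 hh')
  have havg : BddMeasurable fun y => 𝔼 n ∈ range N, v n y := .expect _ fun n _ => hv n
  have hdouble : BddMeasurable fun y => 𝔼 n ∈ range N, 𝔼 h ∈ range H, v (n + h) y :=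
    .expect _ fun n _ => .expect _ fun h _ => hv _
  have htriangle := (havg.sub hdouble).lpNorm_add_le (μ := μ)
    fun y => 𝔼 n ∈ range N, 𝔼 h ∈ range H, v (n + h) y
  simp only [sub_add_cancel] at htriangle
  linarith [lpNorm_expect_sub_expect_expect_le (μ := μ) hB (N := N) hH]

end VanDerCorput

/-! ### Host–Kra seminorms control multiple averages -/

section Seminorm

variable {Y : Type*} [MeasurableSpace Y] [StandardBorelSpace Y] {μ : ProbabilityMeasure Y}
  {T : Y → Y} {f : Y → ℝ}

/-- The power `⦀f⦀_k ^ 2 ^ k` of the Host–Kra seminorm, for which no root has to be taken. -/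
noncomputable def hkSeminormPow (μ : ProbabilityMeasure Y) (T : Y → Y) (k : ℕ) (f : Y → ℝ) : ℝ :=
  ∫ w, HKBox.prodFun f k w ∂(boxMeasure μ T k)

lemma hkSeminormPow_succ_eq_lpNorm_sq (hf : BddMeasurable f) (k : ℕ) :
    hkSeminormPow μ T (k + 1) f =
      lpNorm (invExp (boxMeasure μ T k) (HKBox.map T k) (HKBox.prodFun f k)) 2
        (boxMeasure μ T k) ^ 2 := by
  have hprod := hf.prodFun k
  rw [lpNorm_two_sq (hprod.invExp.memLp 2)]
  exact integral_relSquare_tensor_eq_invExp_mul hprod hprod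

lemma hkSeminormPow_succ_nonneg (hf : BddMeasurable f) (k : ℕ) :
    0 ≤ hkSeminormPow μ T (k + 1) f :=
  hkSeminormPow_succ_eq_lpNorm_sq hf k ▸ sq_nonneg _

theorem tendsto_expect_hkSeminormPow (hT : MeasurePreserving T μ μ) (hf : BddMeasurable f)
    (k : ℕ) :
    Tendsto (fun H => 𝔼 h ∈ range H, hkSeminormPow μ T k fun y => f y * f (T^[h] y)) atTop
      (𝓝 (hkSeminormPow μ T (k + 1) f)) := by
  have hprod := hf.prodFun k
  have hlim := tendsto_expect_integral_mul_iterate (measurePreserving_boxMap hT k) hprod hprod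
  rw [← integral_relSquare_tensor hprod hprod] at hlim
  simp only [hkSeminormPow, prodFun_mul, prodFun_comp, boxMap_iterate]
  exact hlim

end Seminorm

section MultAvg

variable {Y : Type*} {T g : Y → Y} {f : ℕ → Y → ℝ} {C : ℝ}

/-- The product `f₀(g y) f₁(g² y) ⋯ f_{l-1}(gˡ y)` along the orbit of `y`. -/
def orbitProd (g : Y → Y) (l : ℕ) (f : ℕ → Y → ℝ) (y : Y) : ℝ :=
  ∏ i ∈ range l, f i (g^[i + 1] y)

/-- The multiple averages of the transformations `Tⁿ g`, `n < N`; the classical ones have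
`g = id`. -/
noncomputable def multAvg (T : Y → Y) (N : ℕ) (g : Y → Y) (l : ℕ) (f : ℕ → Y → ℝ) (y : Y) : ℝ :=
  𝔼 n ∈ range N, orbitProd (T^[n] ∘ g) l f y

/-- The functions `f_i · f_i ∘ T^{k(i+1)}` produced by van der Corput's inequality. -/
def multDerivative (T : Y → Y) (k : ℕ) (f : ℕ → Y → ℝ) (i : ℕ) (y : Y) : ℝ :=
  f i y * f i (T^[k * (i + 1)] y)

lemma abs_orbitProd_le (hC : ∀ i y, |f i y| ≤ C) (g : Y → Y) (l : ℕ) (y : Y) :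
    |orbitProd g l f y| ≤ C ^ l := by
  rw [orbitProd, abs_prod]
  simpa using prod_le_prod (s := range l) (fun _ _ => abs_nonneg _)
    fun i _ => hC i (g^[i + 1] y)

lemma abs_multDerivative_le (hC : ∀ i y, |f i y| ≤ C) (k i : ℕ) (y : Y) :
    |multDerivative T k f i y| ≤ C ^ 2 := by
  rw [multDerivative, abs_mul, sq]
  exact mul_le_mul (hC i _) (hC i _) (abs_nonneg _) ((abs_nonneg _).trans (hC i y))

lemma orbitProd_succ_eq (g : Y → Y) (l : ℕ) (f : ℕ → Y → ℝ) (y : Y) :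
    orbitProd g (l + 1) f y = f 0 (g y) * orbitProd g l (fun i => f (i + 1)) (g y) := by
  rw [orbitProd, prod_range_succ', mul_comm]
  rfl

lemma orbitProd_mul_orbitProd_iterate_comp (hg : Function.Commute g T) (k l : ℕ)
    (f : ℕ → Y → ℝ) (y : Y) :
    orbitProd g l f y * orbitProd (T^[k] ∘ g) l f y = orbitProd g l (multDerivative T k f) y := by
  simp only [orbitProd, multDerivative, ← prod_mul_distrib]
  refine prod_congr rfl fun i _ => ?_
  rw [(hg.iterate_right k).symm.comp_iterate, Function.comp_apply, ← Function.iterate_mul]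

variable [MeasurableSpace Y]

protected lemma BddMeasurable.orbitProd (hf : ∀ i, BddMeasurable (f i)) (hg : Measurable g)
    (l : ℕ) : BddMeasurable (orbitProd g l f) :=
  .prod _ fun i _ => (hf i).comp (hg.iterate _)

protected lemma BddMeasurable.multAvg (hf : ∀ i, BddMeasurable (f i)) (hT : Measurable T)
    (hg : Measurable g) (N l : ℕ) : BddMeasurable (multAvg T N g l f) :=
  .expect _ fun n _ => .orbitProd hf ((hT.iterate n).comp hg) l

protected lemma BddMeasurable.multDerivative (hf : ∀ i, BddMeasurable (f i)) (hT : Measurable T)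
    (k i : ℕ) : BddMeasurable (multDerivative T k f i) :=
  (hf i).mul ((hf i).comp (hT.iterate _))

lemma IsSystemEndo.iterate_comp {μ : Measure Y} (hT : MeasurePreserving T μ μ)
    (hg : IsSystemEndo μ T g) (n : ℕ) : IsSystemEndo μ T (T^[n] ∘ g) :=
  ((IsSystemEndo.self hT).iterate n).comp hg

variable {μ : Measure Y} [IsProbabilityMeasure μ]

lemma expect_integral_orbitProd_mul_eq (hT : MeasurePreserving T μ μ) (hg : IsSystemEndo μ T g)
    (hf : ∀ i, BddMeasurable (f i)) (N l h k : ℕ) :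
    𝔼 n ∈ range N, ∫ y, orbitProd (T^[n + h] ∘ g) (l + 1) f y *
        orbitProd (T^[n + (h + k)] ∘ g) (l + 1) f y ∂μ =
      ∫ y, multDerivative T k f 0 y *
        multAvg T N (T^[h] ∘ g) l (fun i => multDerivative T k f (i + 1)) y ∂μ := by
  have hD (i : ℕ) : BddMeasurable (multDerivative T k f i) := .multDerivative hf hT.measurable k i
  have hendo (n : ℕ) : IsSystemEndo μ T (T^[n] ∘ (T^[h] ∘ g)) :=
    (hg.iterate_comp hT h).iterate_comp hT n
  have hterm (n : ℕ) : BddMeasurable fun y => multDerivative T k f 0 y *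
      orbitProd (T^[n] ∘ (T^[h] ∘ g)) l (fun i => multDerivative T k f (i + 1)) y :=
    (hD 0).mul (.orbitProd (fun i => hD (i + 1)) (hendo n).measurable l)
  simp only [multAvg, mul_expect]
  rw [integral_expect fun n _ => hterm n]
  refine expect_congr rfl fun n _ => ?_
  rw [← integral_comp_measurePreserving (hendo n).measurePreserving
    (hterm n).measurable.aestronglyMeasurable]
  refine congrArg (integral μ) (funext fun y => ?_)
  have hmap : T^[n + (h + k)] ∘ g = T^[k] ∘ (T^[n] ∘ (T^[h] ∘ g)) := by
    rw [← add_assoc, add_comm, Function.iterate_add, Function.iterate_add]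
    rfl
  rw [← orbitProd_succ_eq, hmap, Function.iterate_add T n h,
    ← orbitProd_mul_orbitProd_iterate_comp (hendo n).comm]
  rfl

lemma expect_integral_orbitProd_mul_le (hT : MeasurePreserving T μ μ) (hg : IsSystemEndo μ T g)
    (hf : ∀ i, BddMeasurable (f i)) (hC : ∀ i y, |f i y| ≤ C) (N l h k : ℕ) :
    𝔼 n ∈ range N, ∫ y, orbitProd (T^[n + h] ∘ g) (l + 1) f y *
        orbitProd (T^[n + (h + k)] ∘ g) (l + 1) f y ∂μ ≤
      C ^ 2 * lpNorm (multAvg T N (T^[h] ∘ g) l fun i => multDerivative T k f (i + 1)) 2 μ := by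
  have hD (i : ℕ) : BddMeasurable (multDerivative T k f i) := .multDerivative hf hT.measurable k i
  have havg : BddMeasurable (multAvg T N (T^[h] ∘ g) l fun i => multDerivative T k f (i + 1)) :=
    .multAvg (fun i => hD (i + 1)) hT.measurable (hg.iterate_comp hT h).measurable N l
  rw [expect_integral_orbitProd_mul_eq hT hg hf]
  refine (le_abs_self _).trans ((abs_integral_mul_le ((hD 0).memLp 2) (havg.memLp 2)).trans ?_)
  exact mul_le_mul_of_nonneg_right (lpNorm_le_of_bound two_ne_zero (abs_multDerivative_le hC k 0))
    lpNorm_nonneg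

end MultAvg

section Control

lemma sqrt_le_div_add {x ε : ℝ} (hx : 0 ≤ x) (hε : 0 < ε) : √x ≤ x / ε + ε / 4 := by
  have hsq : 0 ≤ (√x - ε / 2) ^ 2 / ε := by positivity
  have hexpand : (√x - ε / 2) ^ 2 / ε = x / ε + ε / 4 - √x := by
    rw [sub_sq, Real.sq_sqrt hx]
    field_simp
    ring
  linarith

variable {Y : Type*} [MeasurableSpace Y] [StandardBorelSpace Y] {μ : ProbabilityMeasure Y}
  {T : Y → Y} {C ε : ℝ}

lemma eventually_lpNorm_multAvg_one_le (hT : MeasurePreserving T μ μ) (hε : 0 < ε)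
    {f : ℕ → Y → ℝ} (hf : BddMeasurable (f 0)) :
    ∀ᶠ N in atTop, ∀ g, IsSystemEndo μ T g →
      lpNorm (multAvg T N g 1 f) 2 μ ≤ ε + 1 / ε * hkSeminormPow μ T 1 (f 0) := by
  have hlim := tendsto_lpNorm_expect_iterate_sub_invExp hT hf
  filter_upwards [(tendsto_order.1 hlim).2 (ε / 2) (half_pos hε)] with N hN g hg
  have havg : BddMeasurable fun y => 𝔼 n ∈ range N, f 0 (T^[n] y) :=
    .expect _ fun n _ => hf.comp (hT.iterate n).measurable
  have hmult : lpNorm (multAvg T N g 1 f) 2 μ = lpNorm (fun y => 𝔼 n ∈ range N, f 0 (T^[n] y)) 2 μ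
      := by
    rw [← lpNorm_comp_measurePreserving hg.measurePreserving havg.measurable.aestronglyMeasurable]
    exact congrArg (lpNorm · 2 _) (funext fun y => by simp [multAvg, orbitProd])
  have htriangle := (havg.sub (hf.invExp (μ := μ) (T := T))).lpNorm_add_le (μ := μ)
    (invExp μ T (f 0))
  simp only [sub_add_cancel] at htriangle
  have hsqrt := sqrt_le_div_add (sq_nonneg (lpNorm (invExp μ T (f 0)) 2 μ)) hε
  rw [Real.sqrt_sq lpNorm_nonneg] at hsqrt
  rw [hmult, one_div_mul_eq_div]
  rw [show hkSeminormPow μ T 1 (f 0) = lpNorm (invExp μ T (f 0)) 2 μ ^ 2 from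
    hkSeminormPow_succ_eq_lpNorm_sq hf 0]
  linarith

lemma lpNorm_multAvg_succ_le (hT : MeasurePreserving T μ μ) {l : ℕ} {f : ℕ → Y → ℝ}
    (hf : ∀ i, BddMeasurable (f i)) (hC : ∀ i y, |f i y| ≤ C) {δ M : ℝ} (hδ : 0 ≤ δ) (hM : 0 ≤ M)
    {g : Y → Y} (hg : IsSystemEndo μ T g) {N H : ℕ} (hH : 0 < H)
    (hderiv : ∀ k < H, ∀ g, IsSystemEndo μ T g →
      lpNorm (multAvg T N g (l + 1) fun i => multDerivative T k f (i + 1)) 2 μ ≤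
        δ + M * hkSeminormPow μ T (l + 1) (multDerivative T k f (l + 1))) :
    lpNorm (multAvg T N g (l + 2) f) 2 μ ≤ 2 * H * C ^ (l + 2) / N +
      √(2 * (C ^ 2 * (δ + M * ((l + 2) * 𝔼 j ∈ range (H * (l + 2)),
        hkSeminormPow μ T (l + 1) fun y => f (l + 1) y * f (l + 1) (T^[j] y))))) := by
  set σ : ℕ → ℝ := fun j => hkSeminormPow μ T (l + 1) fun y => f (l + 1) y * f (l + 1) (T^[j] y)
  have hσ (j : ℕ) : 0 ≤ σ j :=
    hkSeminormPow_succ_nonneg ((hf _).mul ((hf _).comp (hT.iterate j).measurable)) l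
  have hvdC := lpNorm_expect_le_of_correlation (μ := (μ : Measure Y)) (N := N)
    (v := fun n => orbitProd (T^[n] ∘ g) (l + 2) f)
    (b := fun k => C ^ 2 * (δ + M * σ (k * (l + 2))))
    (fun n => .orbitProd hf (hg.iterate_comp hT n).measurable _)
    (fun n => abs_orbitProd_le hC _ _) hH
    (fun k => by have := hσ (k * (l + 2)); positivity)
    fun h k hhk => (expect_integral_orbitProd_mul_le hT hg hf hC N (l + 1) h k).trans <|
      mul_le_mul_of_nonneg_left (hderiv k (by omega) _ (hg.iterate_comp hT h)) (sq_nonneg C)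
  refine hvdC.trans ?_
  gcongr
  rw [← mul_expect, expect_add_distrib, expect_range_const hH, ← mul_expect]
  gcongr
  exact_mod_cast expect_range_mul_le hσ H (Nat.succ_pos (l + 1))

theorem exists_eventually_lpNorm_multAvg_le (hT : MeasurePreserving T μ μ) (l : ℕ) (hC : 0 < C)
    (hε : 0 < ε) :
    ∃ M, 0 ≤ M ∧ ∀ f : ℕ → Y → ℝ, (∀ i, BddMeasurable (f i)) → (∀ i y, |f i y| ≤ C) →
      ∀ᶠ N in atTop, ∀ g, IsSystemEndo μ T g →
        lpNorm (multAvg T N g (l + 1) f) 2 μ ≤ ε + M * hkSeminormPow μ T (l + 1) (f l) := by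
  induction l generalizing C ε with
  | zero =>
    exact ⟨1 / ε, by positivity, fun f hf _ => eventually_lpNorm_multAvg_one_le hT hε (hf 0)⟩
  | succ l ih =>
    obtain ⟨M, hM, hcontrol⟩ := ih (C := C ^ 2) (ε := ε ^ 2 / (8 * C ^ 2)) (by positivity)
      (by positivity)
    set M' := 2 * C ^ 2 * M * (l + 2) / ε with hM'
    refine ⟨M', by positivity, fun f hf hfC => ?_⟩
    set σ : ℕ → ℝ := fun j => hkSeminormPow μ T (l + 1) fun y => f (l + 1) y * f (l + 1) (T^[j] y)
    have hσ (j : ℕ) : 0 ≤ σ j :=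
      hkSeminormPow_succ_nonneg ((hf _).mul ((hf _).comp (hT.iterate j).measurable)) l
    have hlim := ((tendsto_expect_hkSeminormPow hT (hf (l + 1)) (l + 1)).comp
      (tendsto_id.atTop_mul_const' (Nat.succ_pos (l + 1)))).const_mul M'
    obtain ⟨H, hH, hHlim⟩ := ((eventually_gt_atTop 0).and
      ((tendsto_order.1 hlim).2 _ (lt_add_of_pos_right _ (by positivity : 0 < ε / 4)))).exists
    have hderiv : ∀ᶠ N in atTop, ∀ k ∈ range H, ∀ g, IsSystemEndo μ T g →
        lpNorm (multAvg T N g (l + 1) fun i => multDerivative T k f (i + 1)) 2 μ ≤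
          ε ^ 2 / (8 * C ^ 2) + M * hkSeminormPow μ T (l + 1) (multDerivative T k f (l + 1)) :=
      (eventually_all_finset _).2 fun k _ =>
        hcontrol _ (fun i => .multDerivative hf hT.measurable k _)
          fun i => abs_multDerivative_le hfC k _
    have hboundary : ∀ᶠ N : ℕ in atTop, 2 * H * C ^ (l + 2) / N < ε / 4 :=
      (tendsto_order.1 (tendsto_const_div_atTop_nhds_zero_nat _)).2 _ (by positivity)
    filter_upwards [hderiv, hboundary] with N hN hNbound g hg
    have hvdC := lpNorm_multAvg_succ_le hT hf hfC (by positivity) hM hg hH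
      fun k hk => hN k (mem_range.2 hk)
    set a := 𝔼 j ∈ range (H * (l + 2)), σ j
    have ha : 0 ≤ a := expect_nonneg fun j _ => hσ j
    have hsqrt := sqrt_le_div_add (x := 2 * (C ^ 2 * (ε ^ 2 / (8 * C ^ 2) + M * ((l + 2) * a))))
      (by positivity) hε
    have hsimp : 2 * (C ^ 2 * (ε ^ 2 / (8 * C ^ 2) + M * ((l + 2) * a))) / ε = ε / 4 + M' * a := by
      rw [hM']
      field_simp
      ring
    have hHa : M' * a < M' * hkSeminormPow μ T (l + 2) (f (l + 1)) + ε / 4 := hHlim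
    linarith

end Control

/-! ### Uniform convergence of multiple averages -/

section UniformlyCauchy

variable {Y Z W : Type*} [MeasurableSpace Y] [MeasurableSpace Z] [MeasurableSpace W]
  {μ : Measure Y} {T : Y → Y} {ν : Measure Z} {κ : Measure W} {A B : ℕ → (Y → Y) → Z → ℝ}

/-- The bounded functions `A N g` are Cauchy in `L²(ν)` as `N → ∞`, uniformly over all
endomorphisms `g` fixing the invariant functions; in particular their limit does not depend on
`g`. -/
structure IsUniformlyCauchy (μ : Measure Y) (T : Y → Y) (ν : Measure Z)
    (A : ℕ → (Y → Y) → Z → ℝ) : Prop where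
  bddMeasurable : ∀ N g, FixesInvariants μ T g → BddMeasurable (A N g)
  eventually_lt : ∀ ε > 0, ∀ᶠ p : ℕ × ℕ in atTop ×ˢ atTop, ∀ g g', FixesInvariants μ T g →
    FixesInvariants μ T g' → lpNorm (fun z => A p.1 g z - A p.2 g' z) 2 ν < ε

namespace IsUniformlyCauchy

lemma add [IsFiniteMeasure ν] (hA : IsUniformlyCauchy μ T ν A) (hB : IsUniformlyCauchy μ T ν B) :
    IsUniformlyCauchy μ T ν fun N g z => A N g z + B N g z where
  bddMeasurable N g hg := (hA.bddMeasurable N g hg).add (hB.bddMeasurable N g hg)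
  eventually_lt ε hε := by
    filter_upwards [hA.eventually_lt _ (half_pos hε), hB.eventually_lt _ (half_pos hε)]
      with p hAp hBp g g' hg hg'
    have hsum := ((hA.bddMeasurable p.1 g hg).sub (hA.bddMeasurable p.2 g' hg')).lpNorm_add_le
      (μ := ν) fun z => B p.1 g z - B p.2 g' z
    simp only [add_sub_add_comm]
    linarith [hAp g g' hg hg', hBp g g' hg hg']

lemma mul_left [IsFiniteMeasure ν] (hA : IsUniformlyCauchy μ T ν A) {h : Z → ℝ}
    (hh : BddMeasurable h) : IsUniformlyCauchy μ T ν fun N g z => h z * A N g z where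
  bddMeasurable N g hg := hh.mul (hA.bddMeasurable N g hg)
  eventually_lt ε hε := by
    obtain ⟨C, hC0, hC⟩ := hh.exists_nonneg_bound
    filter_upwards [hA.eventually_lt (ε / (C + 1)) (by positivity)] with p hp g g' hg hg'
    have hdiff := (hA.bddMeasurable p.1 g hg).sub (hA.bddMeasurable p.2 g' hg')
    have hbound := lpNorm_mul_le_of_bound hC0 (hdiff.memLp (μ := ν) 2) hC
    have hsmall := (lt_div_iff₀ (by positivity)).1 (hp g g' hg hg')
    have hnonneg := lpNorm_nonneg (f := fun z => A p.1 g z - A p.2 g' z) (p := 2) (μ := ν)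
    simp only [← mul_sub]
    linarith

lemma of_approx [IsFiniteMeasure ν] (hA : ∀ N g, FixesInvariants μ T g → BddMeasurable (A N g))
    (h : ∀ ε > 0, ∃ B, IsUniformlyCauchy μ T ν B ∧ ∀ᶠ N in atTop, ∀ g, FixesInvariants μ T g →
      lpNorm (fun z => A N g z - B N g z) 2 ν < ε) :
    IsUniformlyCauchy μ T ν A where
  bddMeasurable := hA
  eventually_lt ε hε := by
    have hε3 : 0 < ε / 3 := by positivity
    obtain ⟨B, hB, hAB⟩ := h _ hε3
    filter_upwards [hB.eventually_lt _ hε3, hAB.prod_inl atTop, hAB.prod_inr atTop]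
      with p hp hfst hsnd g g' hg hg'
    have hsnd := hsnd g' hg'
    rw [lpNorm_fun_sub_comm] at hsnd
    have htriangle := (hA p.1 g hg).lpNorm_sub_triangle (μ := ν) (hB.bddMeasurable p.1 g hg)
      (A p.2 g')
    have htriangle' := (hB.bddMeasurable p.1 g hg).lpNorm_sub_triangle (μ := ν)
      (hB.bddMeasurable p.2 g' hg') (A p.2 g')
    linarith [hfst g hg, hp g g' hg hg']

lemma of_comp (hA : ∀ N g, FixesInvariants μ T g → BddMeasurable (A N g)) {φ : W → Z}
    (hφ : MeasurePreserving φ κ ν)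
    (h : IsUniformlyCauchy μ T κ fun N g w => A N g (φ w)) : IsUniformlyCauchy μ T ν A where
  bddMeasurable := hA
  eventually_lt ε hε := by
    filter_upwards [h.eventually_lt ε hε] with p hp g g' hg hg'
    rw [← lpNorm_comp_measurePreserving hφ
      ((hA p.1 g hg).sub (hA p.2 g' hg')).measurable.aestronglyMeasurable]
    exact hp g g' hg hg'

end IsUniformlyCauchy

/-- The multiple averages of any `l` bounded functions are Cauchy, uniformly over all endomorphisms
fixing the invariant functions. -/
def HasUniformAverages (μ : Measure Y) (T : Y → Y) (l : ℕ) : Prop :=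
  ∀ f : ℕ → Y → ℝ, (∀ i, BddMeasurable (f i)) →
    IsUniformlyCauchy μ T μ fun N g => multAvg T N g l f

end UniformlyCauchy

section LiftedAvg

variable {Y : Type*} {T g : Y → Y} {k l : ℕ} {F : ℕ → Y → ℝ}

/-- The lift of the multiple averages to the cube in which a function on `Y` composed with the last
iterate is replaced by a function `v` on the cube composed with the face transformation. -/
noncomputable def liftedAvg (T : Y → Y) (N : ℕ) (g : Y → Y) (l : ℕ) (F : ℕ → Y → ℝ)
    (v : HKBox Y k → ℝ) (w : HKBox Y k) : ℝ :=
  𝔼 n ∈ range N, orbitProd (T^[n] ∘ g) l F (boxBase k w) * v (boxFace (T^[n] ∘ g) k w)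

lemma orbitProd_succ_update (g : Y → Y) (l : ℕ) (f : ℕ → Y → ℝ) (e : Y → ℝ) (y : Y) :
    orbitProd g (l + 1) (Function.update f l e) y = orbitProd g l f y * e (g^[l + 1] y) := by
  rw [orbitProd, prod_range_succ, Function.update_self]
  refine congrArg (· * _) (prod_congr rfl fun i hi => ?_)
  rw [Function.update_of_ne (mem_range.1 hi).ne]

lemma multAvg_update_add (T : Y → Y) (N : ℕ) (g : Y → Y) (l : ℕ) (f : ℕ → Y → ℝ) (a b : Y → ℝ)
    (y : Y) :
    multAvg T N g (l + 1) (Function.update f l fun y => a y + b y) y =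
      multAvg T N g (l + 1) (Function.update f l a) y +
        multAvg T N g (l + 1) (Function.update f l b) y := by
  simp only [multAvg, orbitProd_succ_update, mul_add, expect_add_distrib]

lemma multAvg_boxBase_eq_liftedAvg (T : Y → Y) (N : ℕ) (g : Y → Y) (l : ℕ) (f : ℕ → Y → ℝ)
    (d : Y → ℝ) (w : HKBox Y (l + 1)) :
    multAvg T N g (l + 1) (Function.update f l d) (boxBase (l + 1) w) =
      liftedAvg T N g l f (fun w => d (boxBase (l + 1) w)) w := by
  simp only [multAvg, liftedAvg, orbitProd_succ_update, (boxBase_face _ (l + 1)).eq]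

lemma liftedAvg_add (T : Y → Y) (N : ℕ) (g : Y → Y) (l : ℕ) (F : ℕ → Y → ℝ)
    (v v' : HKBox Y k → ℝ) :
    liftedAvg T N g l F (fun w => v w + v' w) =
      fun w => liftedAvg T N g l F v w + liftedAvg T N g l F v' w := by
  funext w
  simp only [liftedAvg, mul_add, expect_add_distrib]

lemma liftedAvg_const_mul (T : Y → Y) (N : ℕ) (g : Y → Y) (l : ℕ) (F : ℕ → Y → ℝ) (c : ℝ)
    (v : HKBox Y k → ℝ) :
    liftedAvg T N g l F (fun w => c * v w) = fun w => c * liftedAvg T N g l F v w := by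
  funext w
  simp only [liftedAvg, mul_left_comm _ c, mul_expect]

lemma liftedAvg_eq_mul_multAvg {v : HKBox Y k → ℝ} {H : ℕ → HKBox Y k → ℝ}
    (hH : ∀ (g : Y → Y) w, v (boxFace g k w) = ∏ i ∈ range (l + 1), H i ((HKBox.map g k)^[i] w))
    (T : Y → Y) (N : ℕ) (g : Y → Y) (F : ℕ → Y → ℝ) :
    liftedAvg T N g l F v = fun w => H 0 w * multAvg (HKBox.map T k) N (HKBox.map g k) l
      (fun i w => F i (boxBase k w) * H (i + 1) w) w := by
  funext w
  rw [liftedAvg, multAvg, mul_expect]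
  refine expect_congr rfl fun n _ => ?_
  have hmap : (HKBox.map T k)^[n] ∘ HKBox.map g k = HKBox.map (T^[n] ∘ g) k := by
    rw [boxMap_comp, boxMap_iterate]
  have hbase (i : ℕ) :
      boxBase k ((HKBox.map (T^[n] ∘ g) k)^[i] w) = (T^[n] ∘ g)^[i] (boxBase k w) :=
    ((boxBase_map _ k).iterate_right i).eq w
  rw [hH, prod_range_succ', hmap]
  simp only [orbitProd, prod_mul_distrib, hbase, Function.iterate_zero, id]
  ring

variable [MeasurableSpace Y]

lemma FixesInvariants.iterate_comp {μ : Measure Y} (hT : MeasurePreserving T μ μ)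
    (hg : FixesInvariants μ T g) (n : ℕ) : FixesInvariants μ T (T^[n] ∘ g) :=
  ((FixesInvariants.self hT).iterate n).comp hg

variable [StandardBorelSpace Y] {μ : ProbabilityMeasure Y} {v v' : HKBox Y k → ℝ}

lemma BddMeasurable.liftedAvg_term (hT : MeasurePreserving T μ μ) (hg : FixesInvariants μ T g)
    (hF : ∀ i, BddMeasurable (F i)) (hv : BddMeasurable v) (l n : ℕ) :
    BddMeasurable fun w =>
      orbitProd (T^[n] ∘ g) l F (boxBase k w) * v (boxFace (T^[n] ∘ g) k w) :=
  have hgn := hg.iterate_comp hT n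
  ((BddMeasurable.orbitProd hF hgn.measurable l).comp (measurable_boxBase k)).mul
    (hv.comp (hgn.isSystemEndo_boxFace hT k).measurable)

protected lemma BddMeasurable.liftedAvg (hT : MeasurePreserving T μ μ) (hg : FixesInvariants μ T g)
    (hF : ∀ i, BddMeasurable (F i)) (hv : BddMeasurable v) (N l : ℕ) :
    BddMeasurable (liftedAvg T N g l F v) :=
  .expect _ fun n _ => .liftedAvg_term hT hg hF hv l n

lemma lpNorm_liftedAvg_sub_le (hT : MeasurePreserving T μ μ) (hg : FixesInvariants μ T g)
    (hF : ∀ i, BddMeasurable (F i)) {C : ℝ} (hC0 : 0 ≤ C) (hC : ∀ i y, |F i y| ≤ C)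
    (hv : BddMeasurable v) (hv' : BddMeasurable v') (N l : ℕ) :
    lpNorm (fun w => liftedAvg T N g l F v w - liftedAvg T N g l F v' w) 2 (boxMeasure μ T k) ≤
      C ^ l * lpNorm (fun w => v w - v' w) 2 (boxMeasure μ T k) := by
  simp only [liftedAvg, ← expect_sub_distrib, ← mul_sub]
  refine (lpNorm_fun_expect_le fun n _ => .liftedAvg_term hT hg hF (hv.sub hv') l n).trans <|
    expect_le_of_nonneg (mul_nonneg (pow_nonneg hC0 l) lpNorm_nonneg) fun n _ => ?_
  have hface := ((hg.iterate_comp hT n).isSystemEndo_boxFace hT k).measurePreserving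
  rw [← lpNorm_comp_measurePreserving hface (hv.sub hv').measurable.aestronglyMeasurable]
  exact lpNorm_mul_le_of_bound (pow_nonneg hC0 l)
    (((hv.sub hv').comp hface.measurable).memLp 2) fun w => abs_orbitProd_le hC _ l _

namespace IsUniformlyCauchy

lemma liftedAvg_of_approx (hT : MeasurePreserving T μ μ) (hF : ∀ i, BddMeasurable (F i))
    {C : ℝ} (hC0 : 0 < C) (hC : ∀ i y, |F i y| ≤ C) (hv : BddMeasurable v)
    (h : ∀ ε > 0, ∃ v', BddMeasurable v' ∧
      IsUniformlyCauchy μ T (boxMeasure μ T k) (fun N g => liftedAvg T N g l F v') ∧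
      lpNorm (fun w => v w - v' w) 2 (boxMeasure μ T k) < ε) :
    IsUniformlyCauchy μ T (boxMeasure μ T k) fun N g => liftedAvg T N g l F v := by
  refine of_approx (fun N g hg => .liftedAvg hT hg hF hv N l) fun ε hε => ?_
  obtain ⟨v', hv', hcauchy, hlt⟩ := h (ε / C ^ l) (by positivity)
  refine ⟨_, hcauchy, .of_forall fun N g hg => ?_⟩
  have hlip := lpNorm_liftedAvg_sub_le hT hg hF hC0.le hC hv hv' N l
  exact hlip.trans_lt ((lt_div_iff₀' (by positivity)).1 hlt)

lemma isMonotoneClass_liftedAvg (hT : MeasurePreserving T μ μ) (hF : ∀ i, BddMeasurable (F i))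
    {C : ℝ} (hC0 : 0 < C) (hC : ∀ i y, |F i y| ≤ C) (k l : ℕ) :
    IsMonotoneClass fun v : HKBox Y k → ℝ =>
      IsUniformlyCauchy μ T (boxMeasure μ T k) fun N g => liftedAvg T N g l F v := by
  refine .of_lpNorm_closed (boxMeasure μ T k) (fun _ _ hv hv' => ?_) (fun c v _ hv => ?_)
    fun hv h => liftedAvg_of_approx hT hF hC0 hC hv h
  · simpa only [liftedAvg_add] using hv.add hv'
  · simpa only [liftedAvg_const_mul] using hv.mul_left (.const c)

lemma liftedAvg_of_isFaceOrbitProduct (hT : MeasurePreserving T μ μ)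
    (hF : ∀ i, BddMeasurable (F i))
    (hcube : HasUniformAverages (boxMeasure μ T k : Measure (HKBox Y k)) (HKBox.map T k) l)
    (hv : IsFaceOrbitProduct (l + 1) v) :
    IsUniformlyCauchy μ T (boxMeasure μ T k) fun N g => liftedAvg T N g l F v := by
  obtain ⟨H, hH, hprod⟩ := hv
  have hcauchy := hcube (fun i w => F i (boxBase k w) * H (i + 1) w) fun i =>
    ((hF i).comp (measurable_boxBase k)).mul (hH _)
  have hpull : IsUniformlyCauchy μ T (boxMeasure μ T k) fun N g =>
      multAvg (HKBox.map T k) N (HKBox.map g k) l fun i w => F i (boxBase k w) * H (i + 1) w :=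
    ⟨fun N g hg => hcauchy.bddMeasurable N _ (hg.boxMap hT k), fun ε hε =>
      (hcauchy.eventually_lt ε hε).mono fun p hp g g' hg hg' =>
        hp _ _ (hg.boxMap hT k) (hg'.boxMap hT k)⟩
  simpa only [liftedAvg_eq_mul_multAvg hprod] using hpull.mul_left (hH 0)

end IsUniformlyCauchy

end LiftedAvg

section Step

variable {Y : Type*} [MeasurableSpace Y] [StandardBorelSpace Y] {μ : ProbabilityMeasure Y}
  {T : Y → Y} {l : ℕ} {F f : ℕ → Y → ℝ} {C : ℝ}

namespace IsUniformlyCauchy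

lemma liftedAvg_of_measurable_boxStar (hT : MeasurePreserving T μ μ)
    (hF : ∀ i, BddMeasurable (F i)) (hC0 : 0 < C) (hC : ∀ i y, |F i y| ≤ C)
    (hcube : HasUniformAverages (boxMeasure μ T (l + 1) : Measure (HKBox Y (l + 1)))
      (HKBox.map T (l + 1)) l)
    {v : HKBox Y (l + 1) → ℝ} (hv : @BddMeasurable _ (boxStar (l + 1)) v) :
    IsUniformlyCauchy μ T (boxMeasure μ T (l + 1)) fun N g => liftedAvg T N g l F v :=
  ((isMonotoneClass_liftedAvg hT hF hC0 hC (l + 1) l).mono (boxStar_le _)).of_isPiSystem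
    (generateFrom_faceOrbitSets_boxStar _).symm (isPiSystem_faceOrbitSets _ _)
    (liftedAvg_of_isFaceOrbitProduct hT hF hcube .one)
    (fun _ hs => liftedAvg_of_isFaceOrbitProduct hT hF hcube hs.2) hv

lemma multAvg_update (hT : MeasurePreserving T μ μ)
    (hF : ∀ i, BddMeasurable (F i)) (hC0 : 0 < C) (hC : ∀ i y, |F i y| ≤ C)
    (hcube : HasUniformAverages (boxMeasure μ T (l + 1) : Measure (HKBox Y (l + 1)))
      (HKBox.map T (l + 1)) l)
    {d : Y → ℝ} (hd : BddMeasurable d) {K : HKBox Y (l + 1) → ℝ}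
    (hK : @BddMeasurable _ (boxStar (l + 1)) K)
    (hdK : (fun w => d (boxBase (l + 1) w)) =ᵐ[(boxMeasure μ T (l + 1) :
      Measure (HKBox Y (l + 1)))] K) :
    IsUniformlyCauchy μ T μ fun N g => multAvg T N g (l + 1) (Function.update F l d) := by
  have hupdate (i : ℕ) : BddMeasurable (Function.update F l d i) := by
    rcases eq_or_ne i l with rfl | hi
    · rwa [Function.update_self]
    · rw [Function.update_of_ne hi]
      exact hF i
  have hdbase := hd.comp (measurable_boxBase (l + 1))
  refine of_comp (fun N g hg => .multAvg hupdate hT.measurable hg.measurable N _)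
    (measurePreserving_boxBase (T := T) (l + 1)) ?_
  simp only [multAvg_boxBase_eq_liftedAvg]
  refine liftedAvg_of_approx hT hF hC0 hC hdbase fun ε hε =>
    ⟨K, .of_le (boxStar_le _) hK, liftedAvg_of_measurable_boxStar hT hF hC0 hC hcube hK, ?_⟩
  have hzero : (fun w => d (boxBase (l + 1) w) - K w) =ᵐ[(boxMeasure μ T (l + 1) :
      Measure (HKBox Y (l + 1)))] fun _ => 0 := by
    filter_upwards [hdK] with w hw
    rw [hw, sub_self]
  rw [lpNorm_congr_ae hzero]
  simpa using hε

lemma multAvg_succ (hT : MeasurePreserving T μ μ)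
    (hf : ∀ i, BddMeasurable (f i)) (hC0 : 0 < C) (hC : ∀ i y, |f i y| ≤ C)
    (hcube : HasUniformAverages (boxMeasure μ T (l + 1) : Measure (HKBox Y (l + 1)))
      (HKBox.map T (l + 1)) l) :
    IsUniformlyCauchy μ T μ fun N g => multAvg T N g (l + 1) f := by
  obtain ⟨d, K, hd, hK, hdK, hseminorm⟩ := exists_star_approximation hT (hf l) (l + 1)
  have hdC := multAvg_update hT hf hC0 hC hcube hd hK hdK
  obtain ⟨D, hD⟩ := (hf l).sub hd |>.bdd
  set r : ℕ → Y → ℝ := Function.update f l fun y => f l y - d y with hr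
  have hrl : r l = fun y => f l y - d y := Function.update_self ..
  have hrne {i : ℕ} (hi : i ≠ l) : r i = f i := Function.update_of_ne hi ..
  have hrbdd (i : ℕ) : BddMeasurable (r i) := by
    rcases eq_or_ne i l with rfl | hi
    · exact hrl ▸ (hf i).sub hd
    · exact hrne hi ▸ hf i
  have hrC (i : ℕ) (y : Y) : |r i y| ≤ max C D := by
    rcases eq_or_ne i l with rfl | hi
    · exact hrl ▸ (hD y).trans (le_max_right _ _)
    · exact hrne hi ▸ (hC i y).trans (le_max_left _ _)
  have hsplit (N : ℕ) (g : Y → Y) (y : Y) : multAvg T N g (l + 1) f y -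
      multAvg T N g (l + 1) (Function.update f l d) y = multAvg T N g (l + 1) r y := by
    have hadd := multAvg_update_add T N g l f (fun y => f l y - d y) d y
    simp only [sub_add_cancel, Function.update_eq_self] at hadd
    rw [hadd, add_sub_cancel_right]
  refine of_approx (fun N g hg => .multAvg hf hT.measurable hg.measurable N _) fun ε hε =>
    ⟨_, hdC, ?_⟩
  obtain ⟨M, -, hM⟩ := exists_eventually_lpNorm_multAvg_le (μ := μ) hT l
    (C := max C D) (hC0.trans_le (le_max_left _ _)) (half_pos hε)
  filter_upwards [hM r hrbdd hrC] with N hN g hg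
  have hsmall := hN g hg.toIsSystemEndo
  rw [hrl, hkSeminormPow, hseminorm, mul_zero, add_zero] at hsmall
  simp only [hsplit]
  exact hsmall.trans_lt (half_lt_self hε)

end IsUniformlyCauchy

end Step

section Uniform

lemma multAvg_congr {Y : Type*} {f f' : ℕ → Y → ℝ} {l : ℕ} (h : ∀ i < l, f i = f' i)
    (T : Y → Y) (N : ℕ) (g : Y → Y) : multAvg T N g l f = multAvg T N g l f' := by
  funext y
  refine expect_congr rfl fun n _ => prod_congr rfl fun i hi => ?_
  rw [h i (mem_range.1 hi)]

lemma BddMeasurable.exists_bound_of_lt {Y : Type*} [MeasurableSpace Y] {f : ℕ → Y → ℝ}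
    (hf : ∀ i, BddMeasurable (f i)) (n : ℕ) :
    ∃ f' : ℕ → Y → ℝ, ∃ C > 0, (∀ i, BddMeasurable (f' i)) ∧ (∀ i y, |f' i y| ≤ C) ∧
      ∀ i < n, f i = f' i := by
  choose C hC0 hC using fun i => (hf i).exists_nonneg_bound
  have hsum : 0 ≤ ∑ i ∈ range n, C i := sum_nonneg fun i _ => hC0 i
  refine ⟨fun i => if i < n then f i else fun _ => 0, ∑ i ∈ range n, C i + 1, by positivity,
    fun i => ?_, fun i y => ?_, fun i hi => (if_pos hi).symm⟩
  · dsimp only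
    split_ifs
    exacts [hf i, .const 0]
  · dsimp only
    split_ifs with hi
    · linarith [hC i y, single_le_sum (fun j _ => hC0 j) (mem_range.2 hi)]
    · rw [abs_zero]
      positivity

lemma hasUniformAverages_zero {Y : Type*} [MeasurableSpace Y] {μ : Measure Y} {T : Y → Y}
    (hT : Measurable T) : HasUniformAverages μ T 0 := fun f hf => by
  refine ⟨fun N g hg => .multAvg hf hT hg.measurable N 0, fun ε hε => ?_⟩
  filter_upwards [tendsto_fst.eventually (eventually_gt_atTop 0),
    tendsto_snd.eventually (eventually_gt_atTop 0)] with p hp hp' g g' _ _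
  simp only [multAvg, orbitProd, range_zero, prod_empty, expect_range_const hp,
    expect_range_const hp', sub_self]
  simpa using hε

theorem hasUniformAverages {Y : Type*} [MeasurableSpace Y] [StandardBorelSpace Y]
    {μ : ProbabilityMeasure Y} {T : Y → Y} (hT : MeasurePreserving T μ μ) (l : ℕ) :
    HasUniformAverages (μ : Measure Y) T l := by
  induction l generalizing Y with
  | zero => exact hasUniformAverages_zero hT.measurable
  | succ l ih =>
    intro f hf
    obtain ⟨f', C, hC0, hf', hC, hff'⟩ := BddMeasurable.exists_bound_of_lt hf (l + 1)
    simp only [multAvg_congr hff']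
    exact .multAvg_succ hT hf' hC0 hC (ih (measurePreserving_boxMap hT (l + 1)))

end Uniform

/-! ### Comparison of two commuting transformations -/

section Compare

variable {Y Ω : Type*} {T S : Y → Y} {f : ℕ → Y → ℝ}

lemma expect_multAvg_iterate_comm (hTS : Function.Commute T S) (N M l : ℕ) (f : ℕ → Y → ℝ)
    (y : Y) : 𝔼 m ∈ range M, multAvg T N (S^[m]) l f y =
      𝔼 n ∈ range N, multAvg S M (T^[n]) l f y := by
  simp only [multAvg, (hTS.iterate_iterate _ _).comp_eq]
  exact expect_comm ..

lemma multAvg_comp_semiconj {R : Ω → Ω} {π : Y → Ω} (hπ : Function.Semiconj π T R) (N l : ℕ)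
    (F : ℕ → Ω → ℝ) (y : Y) :
    multAvg T N id l (fun i y => F i (π y)) y = multAvg R N id l F (π y) := by
  simp only [multAvg, orbitProd, Function.comp_id, ((hπ.iterate_right _).iterate_right _).eq]

variable [MeasurableSpace Y]

lemma IsUniformlyCauchy.eventually_lpNorm_sub_expect_le {Z : Type*} [MeasurableSpace Z]
    {μ : Measure Y} {ν : Measure Z} [IsFiniteMeasure ν] {A : ℕ → (Y → Y) → Z → ℝ}
    (hA : IsUniformlyCauchy μ T ν A) {g₀ : Y → Y} (hg₀ : FixesInvariants μ T g₀)
    {g : ℕ → Y → Y} (hg : ∀ m, FixesInvariants μ T (g m)) {ε : ℝ} (hε : 0 < ε) :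
    ∀ᶠ p : ℕ × ℕ in atTop ×ˢ atTop,
      lpNorm (fun z => A p.1 g₀ z - 𝔼 m ∈ range p.2, A p.1 (g m) z) 2 ν ≤ ε := by
  have hdiag := (tendsto_id.prodMk tendsto_id).eventually (hA.eventually_lt ε hε)
  filter_upwards [hdiag.prod_inl atTop, tendsto_snd.eventually (eventually_gt_atTop 0)]
    with p hp hpos
  have hexpect (z : Z) : A p.1 g₀ z - 𝔼 m ∈ range p.2, A p.1 (g m) z =
      𝔼 m ∈ range p.2, (A p.1 g₀ z - A p.1 (g m) z) := by
    rw [expect_sub_distrib, expect_range_const hpos]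
  simp only [hexpect]
  have hbdd (m : ℕ) := (hA.bddMeasurable p.1 g₀ hg₀).sub (hA.bddMeasurable p.1 (g m) (hg m))
  exact (lpNorm_fun_expect_le fun m _ => hbdd m).trans <|
    expect_le_of_nonneg hε.le fun m _ => (hp g₀ (g m) hg₀ (hg m)).le

lemma tendsto_lpNorm_multAvg_sub_of_standardBorelSpace [StandardBorelSpace Y]
    {μ : ProbabilityMeasure Y} (hT : Ergodic T μ) (hS : Ergodic S μ)
    (hTS : Function.Commute T S) (hf : ∀ i, BddMeasurable (f i)) (l : ℕ) :
    Tendsto (fun p : ℕ × ℕ => lpNorm (fun y => multAvg T p.1 id l f y - multAvg S p.2 id l f y) 2 μ)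
      (atTop ×ˢ atTop) (𝓝 0) := by
  have hSfix (m : ℕ) : FixesInvariants μ T (S^[m]) :=
    .of_ergodic hT ⟨hS.toMeasurePreserving.iterate m, hTS.symm.iterate_left m⟩
  have hTfix (n : ℕ) : FixesInvariants μ S (T^[n]) :=
    .of_ergodic hS ⟨hT.toMeasurePreserving.iterate n, hTS.iterate_left n⟩
  have hTid : FixesInvariants μ T id := hSfix 0
  have hSid : FixesInvariants μ S id := hTfix 0
  have hTuc := hasUniformAverages hT.toMeasurePreserving l f hf
  have hSuc := hasUniformAverages hS.toMeasurePreserving l f hf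
  refine tendsto_order.2 ⟨fun a ha => .of_forall fun _ => ha.trans_le lpNorm_nonneg,
    fun ε hε => ?_⟩
  have hε3 : 0 < ε / 3 := by positivity
  have hSswap := eventually_swap_iff.1 (hSuc.eventually_lpNorm_sub_expect_le hSid hTfix hε3)
  filter_upwards [hTuc.eventually_lpNorm_sub_expect_le hTid hSfix hε3, hSswap] with p hpT hpS
  simp only [Prod.fst_swap, Prod.snd_swap] at hpS
  simp only [expect_multAvg_iterate_comm hTS] at hpT
  rw [lpNorm_fun_sub_comm] at hpS
  have htriangle := (hTuc.bddMeasurable p.1 _ hTid).lpNorm_sub_triangle (μ := μ)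
    (.expect (range p.1) fun n _ => hSuc.bddMeasurable p.2 _ (hTfix n))
    (multAvg S p.2 id l f)
  exact htriangle.trans_lt (by linarith)

end Compare

section OrbitFactor

variable {X : Type*} {T S : X → X} {f : ℕ → X → ℝ}

/-- The factor map recording the values of all `f i` along the joint orbit of a point under `T` and
`S`. It reduces questions about `T`, `S` and `f` to the standard Borel space of real arrays. -/
def orbitFactor (T S : X → X) (f : ℕ → X → ℝ) (x : X) (p : ℕ × ℕ × ℕ) : ℝ :=
  f p.1 (T^[p.2.1] (S^[p.2.2] x))

/-- The shift of real arrays in the direction corresponding to `T` under `orbitFactor T S f`. -/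
def fstShift (w : ℕ × ℕ × ℕ → ℝ) (p : ℕ × ℕ × ℕ) : ℝ := w (p.1, p.2.1 + 1, p.2.2)

/-- The shift of real arrays in the direction corresponding to `S` under `orbitFactor T S f`. -/
def sndShift (w : ℕ × ℕ × ℕ → ℝ) (p : ℕ × ℕ × ℕ) : ℝ := w (p.1, p.2.1, p.2.2 + 1)

/-- The `i`-th function read off from an array, truncated to stay bounded by `C i`. -/
def arrayCoord (C : ℕ → ℝ) (i : ℕ) (w : ℕ × ℕ × ℕ → ℝ) : ℝ := max (-C i) (min (C i) (w (i, 0, 0)))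

lemma orbitFactor_semiconj_fst (hTS : Function.Commute T S) (f : ℕ → X → ℝ) :
    Function.Semiconj (orbitFactor T S f) T fstShift := fun x => funext fun p => by
  simp only [orbitFactor, fstShift, Function.iterate_succ_apply, (hTS.iterate_right _).eq]

lemma orbitFactor_semiconj_snd (T S : X → X) (f : ℕ → X → ℝ) :
    Function.Semiconj (orbitFactor T S f) S sndShift := fun x => funext fun p => by
  simp only [orbitFactor, sndShift, Function.iterate_succ_apply]

lemma arrayCoord_orbitFactor {C : ℕ → ℝ} (hC : ∀ i x, |f i x| ≤ C i) (T S : X → X) (i : ℕ) (x : X) :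
    arrayCoord C i (orbitFactor T S f x) = f i x := by
  simp only [arrayCoord, orbitFactor, Function.iterate_zero, id]
  rw [min_eq_right (abs_le.1 (hC i x)).2, max_eq_right (abs_le.1 (hC i x)).1]

lemma bddMeasurable_arrayCoord {C : ℕ → ℝ} (hC : ∀ i, 0 ≤ C i) (i : ℕ) :
    BddMeasurable (arrayCoord C i) where
  measurable := by
    unfold arrayCoord
    fun_prop
  bdd := ⟨C i, fun w => abs_le.2
    ⟨le_max_left _ _, max_le (by linarith [hC i]) (min_le_left _ _)⟩⟩

lemma commute_fstShift_sndShift : Function.Commute fstShift sndShift := fun _ => rfl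

lemma measurable_fstShift : Measurable fstShift :=
  measurable_pi_lambda _ fun _ => measurable_pi_apply _

lemma measurable_sndShift : Measurable sndShift :=
  measurable_pi_lambda _ fun _ => measurable_pi_apply _

variable [MeasurableSpace X] {μ : Measure X}

theorem tendsto_lpNorm_multAvg_sub [IsProbabilityMeasure μ] (hT : Ergodic T μ) (hS : Ergodic S μ)
    (hTS : Function.Commute T S) (hf : ∀ i, BddMeasurable (f i)) (l : ℕ) :
    Tendsto (fun p : ℕ × ℕ => lpNorm (fun x => multAvg T p.1 id l f x - multAvg S p.2 id l f x) 2 μ)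
      (atTop ×ˢ atTop) (𝓝 0) := by
  choose C hC0 hC using fun i => (hf i).exists_nonneg_bound
  have hπm : Measurable (orbitFactor T S f) := measurable_pi_lambda _ fun p =>
    (hf p.1).measurable.comp ((hT.measurable.iterate _).comp (hS.measurable.iterate _))
  have hπ : MeasurePreserving (orbitFactor T S f) μ (μ.map (orbitFactor T S f)) :=
    hπm.measurePreserving μ
  have hprob := Measure.isProbabilityMeasure_map (μ := μ) hπm.aemeasurable
  have hfst := orbitFactor_semiconj_fst hTS f
  have hsnd := orbitFactor_semiconj_snd T S f
  have hT' := hπ.ergodic_of_ergodic_semiconj hT measurable_fstShift hfst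
  have hS' := hπ.ergodic_of_ergodic_semiconj hS measurable_sndShift hsnd
  have hcoord := bddMeasurable_arrayCoord hC0
  have hfcoord : f = fun i x => arrayCoord C i (orbitFactor T S f x) :=
    funext₂ fun i x => (arrayCoord_orbitFactor hC T S i x).symm
  refine (tendsto_lpNorm_multAvg_sub_of_standardBorelSpace (μ := ⟨_, hprob⟩) hT' hS'
    commute_fstShift_sndShift hcoord l).congr fun p => ?_
  have hdiff : BddMeasurable fun w => multAvg fstShift p.1 id l (arrayCoord C) w -
      multAvg sndShift p.2 id l (arrayCoord C) w :=
    (BddMeasurable.multAvg hcoord measurable_fstShift measurable_id p.1 l).sub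
      (.multAvg hcoord measurable_sndShift measurable_id p.2 l)
  have hfactor := lpNorm_comp_measurePreserving (p := 2) hπ hdiff.measurable.aestronglyMeasurable
  simp only [← multAvg_comp_semiconj hfst, ← multAvg_comp_semiconj hsnd, ← hfcoord] at hfactor
  exact hfactor.symm

end OrbitFactor

section Limit

lemma exists_tendsto_of_tendsto_dist {E : Type*} [PseudoMetricSpace E] [CompleteSpace E]
    {u v : ℕ → E}
    (h : Tendsto (fun p : ℕ × ℕ => dist (u p.1) (v p.2)) (atTop ×ˢ atTop) (𝓝 0)) :
    ∃ x, Tendsto u atTop (𝓝 x) ∧ Tendsto v atTop (𝓝 x) := by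
  have hu : CauchySeq u := Metric.cauchySeq_iff.2 fun ε hε => by
    have hsmall := h.eventually_lt_const (half_pos hε)
    rw [prod_atTop_atTop_eq] at hsmall
    obtain ⟨N, hN⟩ := eventually_atTop_prod_self.1 hsmall
    refine ⟨N, fun m hm n hn => ?_⟩
    linarith [dist_triangle_right (u m) (u n) (v N), hN m N hm le_rfl, hN n N hn le_rfl]
  obtain ⟨x, hx⟩ := cauchySeq_tendsto_of_complete hu
  exact ⟨x, hx, hx.congr_dist (h.comp (tendsto_id.prodMk tendsto_id))⟩

lemma multAvg_extend {X : Type*} (T : X → X) (N : ℕ) {l : ℕ} (f : Fin l → X → ℝ) (x : X) :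
    multAvg T N id l (Function.extend Fin.val f 0) x =
      (N : ℝ)⁻¹ * ∑ n ∈ range N, ∏ i : Fin l, f i (T^[(i.1 + 1) * n] x) := by
  simp only [multAvg, orbitProd, Function.comp_id, ← Function.iterate_mul,
    expect_eq_sum_div_card, card_range, ← Fin.prod_univ_eq_prod_range
    (fun i => Function.extend Fin.val f 0 i _), Fin.val_injective.extend_apply]
  simp only [div_eq_inv_mul, mul_comm _ (_ + 1)]

variable {X : Type*} [MeasurableSpace X] {μ : Measure X}

lemma exists_tendsto_eLpNorm_sub {p : ENNReal} [Fact (1 ≤ p)] {a b : ℕ → X → ℝ}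
    (ha : ∀ N, MemLp (a N) p μ) (hb : ∀ N, MemLp (b N) p μ)
    (h : Tendsto (fun q : ℕ × ℕ => lpNorm (fun x => a q.1 x - b q.2 x) p μ) (atTop ×ˢ atTop)
      (𝓝 0)) :
    ∃ F : X → ℝ, Measurable F ∧
      Tendsto (fun N => eLpNorm (fun x => a N x - F x) p μ) atTop (𝓝 0) ∧
      Tendsto (fun N => eLpNorm (fun x => b N x - F x) p μ) atTop (𝓝 0) := by
  have hdist (q : ℕ × ℕ) : lpNorm (fun x => a q.1 x - b q.2 x) p μ =
      dist ((ha q.1).toLp (a q.1)) ((hb q.2).toLp (b q.2)) := by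
    rw [dist_eq_norm, ← MemLp.toLp_sub, ← lpNorm_eq_norm_toLp]
    rfl
  obtain ⟨F, hFa, hFb⟩ := exists_tendsto_of_tendsto_dist (u := fun N => (ha N).toLp (a N))
    (v := fun N => (hb N).toLp (b N)) (h.congr hdist)
  rw [← Lp.toLp_coeFn F (Lp.memLp F)] at hFa hFb
  exact ⟨F, (Lp.stronglyMeasurable F).measurable,
    (Lp.tendsto_Lp_iff_tendsto_eLpNorm'' a ha F (Lp.memLp F)).1 hFa,
    (Lp.tendsto_Lp_iff_tendsto_eLpNorm'' b hb F (Lp.memLp F)).1 hFb⟩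

lemma bddMeasurable_extend {l : ℕ} {f : Fin l → X → ℝ} (hf : ∀ i, BddMeasurable (f i)) (i : ℕ) :
    BddMeasurable (Function.extend Fin.val f 0 i) := by
  by_cases hi : ∃ j : Fin l, j.val = i
  · obtain ⟨j, rfl⟩ := hi
    rw [Fin.val_injective.extend_apply]
    exact hf j
  · rw [Function.extend_apply' _ _ _ hi]
    exact .const 0

end Limit

end HostKra

theorem limits_of_averages_eq_of_commuting_general {X : Type*} [MeasurableSpace X]
    (μ : Measure X) [IsProbabilityMeasure μ] (T S : X → X) (hcomm : T ∘ S = S ∘ T)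
    (hergT : Ergodic T μ) (hergS : Ergodic S μ)
    (l : ℕ) (f : Fin l → X → ℝ) (hf : ∀ i, Measurable (f i)) (hbd : ∀ i, ∃ C, ∀ x, |f i x| ≤ C) :
    ∃ F : X → ℝ, Measurable F ∧
      Filter.Tendsto
        (fun N : ℕ => eLpNorm
          (fun x => ((N : ℝ)⁻¹ * ∑ n ∈ Finset.range N,
            ∏ i : Fin l, f i (T^[(i.1 + 1) * n] x)) - F x) 2 μ)
        Filter.atTop (nhds 0) ∧
      Filter.Tendsto
        (fun N : ℕ => eLpNorm
          (fun x => ((N : ℝ)⁻¹ * ∑ n ∈ Finset.range N,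
            ∏ i : Fin l, f i (S^[(i.1 + 1) * n] x)) - F x) 2 μ)
        Filter.atTop (nhds 0) := by
  have hext := HostKra.bddMeasurable_extend fun i => HostKra.BddMeasurable.mk (hf i) (hbd i)
  have hmemLp {R : X → X} (hR : Measurable R) (N : ℕ) :
      MemLp (HostKra.multAvg R N id l (Function.extend Fin.val f 0)) 2 μ :=
    (HostKra.BddMeasurable.multAvg hext hR measurable_id N l).memLp 2
  simp only [← HostKra.multAvg_extend]
  exact HostKra.exists_tendsto_eLpNorm_sub (hmemLp hergT.measurable) (hmemLp hergS.measurable)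
    (HostKra.tendsto_lpNorm_multAvg_sub hergT hergS (congrFun hcomm) hext l)

/-- For commuting invertible ergodic `T` and `S` on a probability space, the linear multiple
ergodic averages `(1/N) ∑_{n<N} f₁(Tⁿx)⋯f_l(T^{ln}x)` and the corresponding averages for `S`
have the same `L²(μ)` limit. -/
theorem limits_of_averages_eq_of_commuting {X : Type*} [MeasurableSpace X]
    (μ : Measure X) [IsProbabilityMeasure μ]
    (T S T' S' : X → X) (hT' : Measurable T') (hS' : Measurable S')
    (hTinv : Function.LeftInverse T' T ∧ Function.RightInverse T' T)
    (hSinv : Function.LeftInverse S' S ∧ Function.RightInverse S' S)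
    (hcomm : T ∘ S = S ∘ T)
    (hergT : Ergodic T μ) (hergS : Ergodic S μ)
    (l : ℕ) (hl : 1 ≤ l)
    (f : Fin l → X → ℝ) (hf : ∀ i, Measurable (f i)) (hbd : ∀ i, ∃ C, ∀ x, |f i x| ≤ C) :
    ∃ F : X → ℝ, Measurable F ∧
      Filter.Tendsto
        (fun N : ℕ => eLpNorm
          (fun x => ((N : ℝ)⁻¹ * ∑ n ∈ Finset.range N,
            ∏ i : Fin l, f i (T^[(i.1 + 1) * n] x)) - F x) 2 μ)
        Filter.atTop (nhds 0) ∧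
      Filter.Tendsto
        (fun N : ℕ => eLpNorm
          (fun x => ((N : ℝ)⁻¹ * ∑ n ∈ Finset.range N,
            ∏ i : Fin l, f i (S^[(i.1 + 1) * n] x)) - F x) 2 μ)
        Filter.atTop (nhds 0) :=
  limits_of_averages_eq_of_commuting_general μ T S hcomm hergT hergS l f hf hbd
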